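/- arXiv:math/0506514 — 2 statements merged into one kernel-verified Lean document; each statement's English description precedes it below -/
import Mathlib

section
/- For every prime p, the set of real numbers u for which liminf_{q→∞} q·|q|_p·⟨qu⟩ > 0 (the liminf taken over positive integers q) has Hausdorff dimension zero. -/
/-- `nearestIntDist z` is the distance from `z` to the nearest integer, denoted ⟨z⟩. -/
noncomputable def nearestIntDist (z : ℝ) : ℝ := ⨅ k : ℤ, |z - (k : ℝ)|

open Finset in
open scoped Classical in
/-- Discrete Hardy–Littlewood maximal inequality for backward windows. -/
theorem card_window_dense_le (f : ℕ → Prop) (K h : ℕ) :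
    #{i ∈ range h | ∃ τ, τ ≤ i + 1 ∧ τ < K * #{j ∈ Ico (i + 1 - τ) (i + 1) | f j}} ≤
      K * #{j ∈ range h | f j} := by
  induction h using Nat.strong_induction_on with
  | _ h ih =>
    rcases h with _ | h
    · simp
    by_cases hb : ∃ τ, τ ≤ h + 1 ∧ τ < K * #{j ∈ Ico (h + 1 - τ) (h + 1) | f j}
    · obtain ⟨τ, hτ, hlt⟩ := hb
      have hτ0 : 0 < τ := by
        rcases Nat.eq_zero_or_pos τ with rfl | h0
        · simp at hlt
        · exact h0
      have hrange : range (h + 1) = range (h + 1 - τ) ∪ Ico (h + 1 - τ) (h + 1) := by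
        ext x; simp only [mem_union, mem_range, mem_Ico]; omega
      have hdisj : Disjoint (range (h + 1 - τ)) (Ico (h + 1 - τ) (h + 1)) := by
        rw [Finset.disjoint_left]; intro x; simp only [mem_range, mem_Ico]; omega
      have h1 := ih (h + 1 - τ) (by omega)
      rw [hrange, filter_union, filter_union,
        card_union_of_disjoint (disjoint_filter_filter hdisj),
        card_union_of_disjoint (disjoint_filter_filter hdisj), mul_add]
      refine Nat.add_le_add h1 ((card_filter_le _ _).trans ?_)
      rw [Nat.card_Ico]; omega
    · rw [range_add_one, filter_insert, if_neg hb]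
      refine (ih h (by omega)).trans (Nat.mul_le_mul_left _ (card_le_card ?_))
      exact filter_subset_filter _ (subset_insert _ _)

open Finset in
open scoped Classical in
/-- Doob maximal inequality for the counting measure and a nested family of partitions. -/
theorem card_cell_dense_le {α : Type*} (S E : Finset α) (π : ℕ → α → ℤ) (K : ℕ)
    (hπ : ∀ k l x y, k ≤ l → π l x = π l y → π k x = π k y) :
    #{s ∈ S | ∃ k, #{u ∈ S | π k u = π k s} < K * #{u ∈ E | π k u = π k s}} ≤ K * #E := by
  set bad : α → ℕ → Prop := fun s k => #{u ∈ S | π k u = π k s} < K * #{u ∈ E | π k u = π k s}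
    with hbad
  have hbad_congr : ∀ s t k, π k s = π k t → (bad s k ↔ bad t k) := by
    intro s t k h; simp only [hbad, h]
  let lev : α → ℕ := fun s => if h : ∃ k, bad s k then Nat.find h else 0
  have hlev : ∀ s, (∃ k, bad s k) → bad s (lev s) := by
    intro s hs; simp only [lev, hs, dif_pos]; exact Nat.find_spec hs
  have hlev_le : ∀ s k, bad s k → lev s ≤ k := by
    intro s k hk
    have hs : ∃ k, bad s k := ⟨k, hk⟩
    simp only [lev, hs, dif_pos]; exact Nat.find_le hk
  have hkey : ∀ s t, (∃ k, bad s k) → π (lev s) t = π (lev s) s →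
      (∃ k, bad t k) ∧ lev t = lev s := by
    intro s t hs hst
    have ht : bad t (lev s) := (hbad_congr t s _ hst).2 (hlev s hs)
    refine ⟨⟨_, ht⟩, ?_⟩
    have h1 := hlev_le t _ ht
    have h2 : bad s (lev t) :=
      (hbad_congr t s _ (hπ _ _ _ _ h1 hst)).1 (hlev t ⟨_, ht⟩)
    exact le_antisymm h1 (hlev_le s _ h2)
  set B := {s ∈ S | ∃ k, bad s k} with hB
  set E' := {s ∈ E | ∃ k, bad s k} with hE'
  let φ : α → ℕ × ℤ := fun s => (lev s, π (lev s) s)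
  have h1 : #B = ∑ c ∈ B.image φ, #{s ∈ B | φ s = c} :=
    card_eq_sum_card_image φ B
  have h2 : ∑ c ∈ B.image φ, #{s ∈ E' | φ s = c} ≤ #E' := by
    rw [← card_biUnion]
    · apply card_le_card
      intro x hx
      simp only [mem_biUnion, mem_filter] at hx
      obtain ⟨_, _, h, _⟩ := hx
      exact h
    · intro a _ b _ hab
      exact disjoint_filter_filter_not _ _ _ |>.mono_right (by
        intro x hx
        simp only [mem_filter] at hx ⊢
        exact ⟨hx.1, fun h => hab (h.symm.trans hx.2)⟩)
  calc #B = ∑ c ∈ B.image φ, #{s ∈ B | φ s = c} := h1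
    _ ≤ ∑ c ∈ B.image φ, K * #{s ∈ E' | φ s = c} := by
        apply sum_le_sum
        intro c hc
        obtain ⟨s, hs, rfl⟩ := mem_image.1 hc
        have hs' := (mem_filter.1 hs).2
        have e1 : #{t ∈ B | φ t = φ s} ≤ #{u ∈ S | π (lev s) u = π (lev s) s} := by
          apply card_le_card
          intro t ht
          simp only [mem_filter, φ, Prod.mk.injEq, hB] at ht ⊢
          obtain ⟨⟨ht, _⟩, h1, h2⟩ := ht
          rw [h1] at h2
          exact ⟨ht, h2⟩
        have e2 : #{u ∈ E | π (lev s) u = π (lev s) s} ≤ #{t ∈ E' | φ t = φ s} := by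
          apply card_le_card
          intro t ht
          simp only [mem_filter, φ, Prod.mk.injEq, hE'] at ht ⊢
          obtain ⟨h1, h2⟩ := hkey s t hs' ht.2
          refine ⟨⟨ht.1, h1⟩, h2, ?_⟩
          rw [h2]; exact ht.2
        have e3 : #{u ∈ S | π (lev s) u = π (lev s) s} <
          K * #{u ∈ E | π (lev s) u = π (lev s) s} := hlev s hs'
        exact e1.trans (e3.le.trans (Nat.mul_le_mul_left _ e2))
    _ = K * ∑ c ∈ B.image φ, #{s ∈ E' | φ s = c} := by rw [mul_sum]
    _ ≤ K * #E := Nat.mul_le_mul_left _ (h2.trans (card_filter_le _ _))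

/-- Among five distinct integers there are three that are pairwise at distance at least two. -/
theorem Finset.exists_three_separated (I : Finset ℤ) (hI : 5 ≤ I.card) :
    ∃ a ∈ I, ∃ b ∈ I, ∃ c ∈ I, a + 2 ≤ b ∧ b + 2 ≤ c := by
  have hne : I.Nonempty := by rw [← Finset.card_pos]; omega
  set a := I.min' hne
  set c := I.max' hne
  have : (I \ {a, a + 1, c - 1, c}).Nonempty := by
    rw [← Finset.card_pos]
    have h1 := Finset.le_card_sdiff ({a, a + 1, c - 1, c} : Finset ℤ) I
    have h2 : ({a, a + 1, c - 1, c} : Finset ℤ).card ≤ 4 := Finset.card_le_four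
    omega
  obtain ⟨b, hb⟩ := this
  simp only [Finset.mem_sdiff, Finset.mem_insert, Finset.mem_singleton, not_or] at hb
  obtain ⟨hbI, h1, h2, h3, h4⟩ := hb
  have hab := I.min'_le b hbI
  have hbc := I.le_max' b hbI
  refine ⟨a, I.min'_mem hne, b, hbI, c, I.max'_mem hne, ?_, ?_⟩ <;> omega

/-- A quadratic polynomial with non-negligible nonconstant part is not small at three
separated points. -/
theorem exists_abs_quadratic_ge {β A B m δ ρ x₁ x₂ x₃ : ℝ} (hm : m ≤ |A| + |B|)
    (h1 : |x₁| ≤ 1) (h2 : |x₂| ≤ 1) (h12 : x₁ + δ ≤ x₂) (h23 : x₂ + δ ≤ x₃)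
    (hδ : 0 < δ) (hδ1 : δ ≤ 1) (hρ : 8 * ρ < m * δ ^ 2)
    (hq1 : |β + A * x₁ + B * x₁ ^ 2| < ρ) (hq2 : |β + A * x₂ + B * x₂ ^ 2| < ρ) :
    ρ ≤ |β + A * x₃ + B * x₃ ^ 2| := by
  by_contra! hq3
  rw [abs_lt] at hq1 hq2 hq3
  rw [abs_le] at h1 h2
  have e1 : δ * |A + B * (x₁ + x₂)| ≤ 2 * ρ := by
    have : (x₂ - x₁) * |A + B * (x₁ + x₂)| ≤ 2 * ρ := by
      rw [← abs_of_nonneg (show 0 ≤ x₂ - x₁ by linarith), ← abs_mul, abs_le]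
      constructor <;> nlinarith
    nlinarith [abs_nonneg (A + B * (x₁ + x₂))]
  have e2 : δ * |A + B * (x₂ + x₃)| ≤ 2 * ρ := by
    have : (x₃ - x₂) * |A + B * (x₂ + x₃)| ≤ 2 * ρ := by
      rw [← abs_of_nonneg (show 0 ≤ x₃ - x₂ by linarith), ← abs_mul, abs_le]
      constructor <;> nlinarith
    nlinarith [abs_nonneg (A + B * (x₂ + x₃))]
  have e3 : δ ^ 2 * |B| ≤ 2 * ρ := by
    have h : (x₃ - x₁) * |B| ≤ |A + B * (x₂ + x₃)| + |A + B * (x₁ + x₂)| := by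
      rw [← abs_of_nonneg (show 0 ≤ x₃ - x₁ by linarith), ← abs_mul]
      rw [show (x₃ - x₁) * B = (A + B * (x₂ + x₃)) - (A + B * (x₁ + x₂)) by ring]
      exact abs_sub _ _
    have h' : 2 * δ * |B| ≤ (x₃ - x₁) * |B| := by
      apply mul_le_mul_of_nonneg_right _ (abs_nonneg _); linarith
    nlinarith
  have e4 : |A| ≤ |A + B * (x₁ + x₂)| + 2 * |B| := by
    have h : |A| ≤ |A + B * (x₁ + x₂)| + |B * (x₁ + x₂)| := by
      have := abs_sub (A + B * (x₁ + x₂)) (B * (x₁ + x₂))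
      rwa [add_sub_cancel_right] at this
    rw [abs_mul] at h
    have h' : |x₁ + x₂| ≤ 2 := by rw [abs_le]; constructor <;> linarith
    nlinarith [abs_nonneg B]
  have e5 : δ ^ 2 * |A + B * (x₁ + x₂)| ≤ 2 * ρ := by
    have : δ * (δ * |A + B * (x₁ + x₂)|) ≤ δ * (2 * ρ) := mul_le_mul_of_nonneg_left e1 hδ.le
    nlinarith
  nlinarith [sq_nonneg δ]

/-- The index of the quaternary interval of length `4⁻ᵏ` containing `u`. -/
noncomputable def quadCell (k : ℕ) (u : ℝ) : ℤ := ⌊(4 : ℝ) ^ k * u⌋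

theorem quadCell_add_ediv (k l : ℕ) (u : ℝ) : quadCell (k + l) u / 4 ^ l = quadCell k u := by
  unfold quadCell
  have := Int.natCast_mul_floor_div_cancel (n := 4 ^ l) (by positivity) ((4 : ℝ) ^ k * u)
  rw [← this, pow_add]
  push_cast
  congr 2
  ring

theorem quadCell_eq_of_le {k l : ℕ} (h : k ≤ l) {u v : ℝ} (huv : quadCell l u = quadCell l v) :
    quadCell k u = quadCell k v := by
  obtain ⟨d, rfl⟩ := Nat.exists_eq_add_of_le h
  rw [← quadCell_add_ediv k d u, ← quadCell_add_ediv k d v, huv]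

theorem abs_sub_le_of_quadCell_eq {k : ℕ} {u v : ℝ} (h : quadCell k u = quadCell k v) :
    |u - v| ≤ ((4 : ℝ) ^ k)⁻¹ := by
  have h4 : (0 : ℝ) < 4 ^ k := by positivity
  have := Int.abs_sub_lt_one_of_floor_eq_floor h
  rw [← mul_sub, abs_mul, abs_of_pos h4] at this
  rw [← one_div, le_div_iff₀ h4]
  linarith

theorem inv_le_sub_of_quadCell_add_two_le {k : ℕ} {u v : ℝ}
    (h : quadCell k u + 2 ≤ quadCell k v) : u + ((4 : ℝ) ^ k)⁻¹ ≤ v := by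
  have h4 : (0 : ℝ) < 4 ^ k := by positivity
  have h1 := Int.lt_floor_add_one ((4 : ℝ) ^ k * u)
  have h2 := Int.floor_le ((4 : ℝ) ^ k * v)
  have h3 : ((quadCell k u : ℤ) : ℝ) + 2 ≤ quadCell k v := by exact_mod_cast h
  unfold quadCell at h3
  have : 4 ^ k * (u + ((4 : ℝ) ^ k)⁻¹) ≤ 4 ^ k * v := by
    rw [mul_add, mul_inv_cancel₀ h4.ne']; linarith
  exact le_of_mul_le_mul_left this h4

open Finset in
/-- All sufficiently fine quaternary intervals contain points of `K` in at most `4 ^ (θ l)` of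
their descendants `l` generations later. -/
def CellGrowthLE (K : Set ℝ) (θ : ℝ) (l : ℕ) : Prop :=
  ∃ J, ∀ k ≥ J, ∀ F : Finset ℝ, (F : Set ℝ) ⊆ K →
    (∀ u ∈ F, ∀ v ∈ F, quadCell k u = quadCell k v) →
      (#(F.image (quadCell (k + l))) : ℝ) ≤ (4 : ℝ) ^ (θ * l)

open Finset in
theorem CellGrowthLE.mul_aux {K : Set ℝ} {θ : ℝ} {l J : ℕ}
    (h : ∀ k ≥ J, ∀ F : Finset ℝ, (F : Set ℝ) ⊆ K →
      (∀ u ∈ F, ∀ v ∈ F, quadCell k u = quadCell k v) →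
      (#(F.image (quadCell (k + l))) : ℝ) ≤ (4 : ℝ) ^ (θ * l)) (q : ℕ) :
    ∀ k ≥ J, ∀ F : Finset ℝ, (F : Set ℝ) ⊆ K →
      (∀ u ∈ F, ∀ v ∈ F, quadCell k u = quadCell k v) →
      (#(F.image (quadCell (k + l * q))) : ℝ) ≤ (4 : ℝ) ^ (θ * (l * q : ℕ)) := by
  induction q with
  | zero =>
    intro k hk F _ hF
    simp only [mul_zero, add_zero, Nat.cast_zero, Real.rpow_zero]
    have : #(F.image (quadCell k)) ≤ 1 := by
      rw [card_le_one]
      intro a ha b hb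
      obtain ⟨u, hu, rfl⟩ := mem_image.1 ha
      obtain ⟨v, hv, rfl⟩ := mem_image.1 hb
      exact hF u hu v hv
    exact_mod_cast this
  | succ q ih =>
    intro k hk F hFK hF
    have h1 := ih k hk F hFK hF
    have h2 : F.image (quadCell (k + l * (q + 1))) ⊆
        (F.image (quadCell (k + l * q))).biUnion fun c =>
          (F.filter fun u => quadCell (k + l * q) u = c).image (quadCell (k + l * q + l)) := by
      intro x hx
      obtain ⟨u, hu, rfl⟩ := mem_image.1 hx
      simp only [mem_biUnion, mem_image, mem_filter]
      refine ⟨_, ⟨u, hu, rfl⟩, u, ⟨hu, rfl⟩, ?_⟩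
      rw [mul_add, mul_one, add_assoc]
    have h3 := (card_le_card h2).trans card_biUnion_le
    calc (#(F.image (quadCell (k + l * (q + 1)))) : ℝ)
        ≤ ∑ c ∈ F.image (quadCell (k + l * q)),
          (#((F.filter fun u => quadCell (k + l * q) u = c).image
            (quadCell (k + l * q + l))) : ℝ) := by exact_mod_cast h3
      _ ≤ ∑ c ∈ F.image (quadCell (k + l * q)), (4 : ℝ) ^ (θ * l) := by
        apply sum_le_sum
        intro c _
        apply h _ (by omega)
        · intro x hx
          exact hFK (by simpa using (mem_filter.1 hx).1)
        · intro u hu v hv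
          rw [(mem_filter.1 hu).2, (mem_filter.1 hv).2]
      _ ≤ (4 : ℝ) ^ (θ * (l * q : ℕ)) * (4 : ℝ) ^ (θ * l) := by
        rw [sum_const, nsmul_eq_mul]
        gcongr
      _ = _ := by
        rw [← Real.rpow_add (by norm_num)]
        congr 1
        push_cast
        ring

theorem CellGrowthLE.mul {K : Set ℝ} {θ : ℝ} {l : ℕ} (h : CellGrowthLE K θ l) (q : ℕ) :
    CellGrowthLE K θ (l * q) := by
  obtain ⟨J, hJ⟩ := h
  exact ⟨J, CellGrowthLE.mul_aux hJ q⟩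

open Finset in
theorem exists_finset_quadCell_cover {K : Set ℝ} {m : ℕ} {B : ℝ}
    (h : ∀ F : Finset ℝ, (F : Set ℝ) ⊆ K → (#(F.image (quadCell m)) : ℝ) ≤ B) :
    ∃ G : Finset ℤ, (#G : ℝ) ≤ B ∧ ∀ u ∈ K, quadCell m u ∈ G := by
  have hfin : (quadCell m '' K).Finite := by
    by_contra hinf
    obtain ⟨t, ht, hcard⟩ := Set.Infinite.exists_subset_card_eq hinf (⌊B⌋₊ + 1)
    obtain ⟨F, hF, rfl⟩ := Finset.subset_set_image_iff.1 ht
    have h1 := h F hF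
    rw [hcard] at h1
    have := Nat.lt_floor_add_one B
    push_cast at h1
    linarith
  refine ⟨hfin.toFinset, ?_, fun u hu => by simpa using ⟨u, hu, rfl⟩⟩
  obtain ⟨F, hF, hFe⟩ := Finset.subset_set_image_iff.1
    (show (hfin.toFinset : Set ℤ) ⊆ quadCell m '' K by simp)
  rw [← hFe]
  exact h F hF

open Filter Topology MeasureTheory in
theorem CellGrowthLE.dimH_le {K : Set ℝ} {θ : ℝ} {l : ℕ} (h : CellGrowthLE K θ l)
    (hθ : 0 < θ) (hl : 1 ≤ l) : dimH K ≤ ENNReal.ofReal θ := by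
  obtain ⟨J, hJ⟩ := h
  have hmul := fun q => CellGrowthLE.mul_aux hJ q
  have hKu : K = ⋃ a : ℤ, K ∩ {u | quadCell J u = a} := by
    ext u; simp
  rw [hKu, dimH_iUnion]
  refine iSup_le fun a => ?_
  set A := K ∩ {u | quadCell J u = a} with hA
  have hcov : ∀ i : ℕ, ∃ G : Finset ℤ, (G.card : ℝ) ≤ (4 : ℝ) ^ (θ * (l * i : ℕ)) ∧
      ∀ u ∈ A, quadCell (J + l * i) u ∈ G := by
    intro i
    apply exists_finset_quadCell_cover
    intro F hF
    apply hmul i J le_rfl F (hF.trans Set.inter_subset_left)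
    intro u hu v hv
    have h1 : quadCell J u = a := (hF hu).2
    have h2 : quadCell J v = a := (hF hv).2
    rw [h1, h2]
  choose G hGcard hGcov using hcov
  have key : μH[θ] A ≤ 1 := by
    let t : ∀ i : ℕ, G i → Set ℝ := fun i c => {u | quadCell (J + l * i) u = c}
    have hdiam : ∀ i c, Metric.ediam (t i c) ≤ ENNReal.ofReal (((4 : ℝ) ^ (J + l * i))⁻¹) := by
      intro i c
      apply Metric.ediam_le_of_forall_dist_le
      intro x hx y hy
      rw [Real.dist_eq]
      exact abs_sub_le_of_quadCell_eq ((show quadCell _ x = c from hx).trans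
        (show quadCell _ y = c from hy).symm)
    refine (Measure.hausdorffMeasure_le_liminf_sum (l := atTop) θ A
      (fun i : ℕ => ENNReal.ofReal (((4 : ℝ) ^ (J + l * i))⁻¹)) ?_ t
      (Eventually.of_forall hdiam) (Eventually.of_forall ?_)).trans ?_
    · rw [← ENNReal.ofReal_zero]
      apply ENNReal.tendsto_ofReal
      apply Tendsto.inv_tendsto_atTop
      apply (tendsto_pow_atTop_atTop_of_one_lt (by norm_num : (1 : ℝ) < 4)).comp
      apply tendsto_atTop_mono _ tendsto_id
      intro i
      simp only [id]
      nlinarith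
    · intro i u hu
      simp only [Set.mem_iUnion]
      exact ⟨⟨_, hGcov _ u hu⟩, rfl⟩
    · refine liminf_le_of_le (by isBoundedDefault) fun b hb => ?_
      obtain ⟨i, hi⟩ := hb.exists
      refine hi.trans ?_
      have h4 : (0 : ℝ) < 4 ^ (J + l * i) := by positivity
      calc ∑ c : G i, Metric.ediam (t i c) ^ θ
          ≤ ∑ c : G i, ENNReal.ofReal ((((4 : ℝ) ^ (J + l * i))⁻¹) ^ θ) := by
            apply Finset.sum_le_sum
            intro c _
            rw [← ENNReal.ofReal_rpow_of_pos (by positivity)]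
            exact ENNReal.rpow_le_rpow (hdiam i c) hθ.le
        _ = ENNReal.ofReal ((G i).card * (((4 : ℝ) ^ (J + l * i))⁻¹) ^ θ) := by
            rw [Finset.sum_const, nsmul_eq_mul, ENNReal.ofReal_mul (Nat.cast_nonneg _),
              ENNReal.ofReal_natCast, Finset.card_univ, Fintype.card_coe]
        _ ≤ 1 := by
            rw [ENNReal.ofReal_le_one, Real.inv_rpow h4.le, ← div_eq_mul_inv,
              div_le_one (by positivity)]
            refine (hGcard i).trans ?_
            rw [← Real.rpow_natCast, ← Real.rpow_mul (by norm_num), mul_comm]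
            apply Real.rpow_le_rpow_of_exponent_le (by norm_num)
            gcongr
            omega
  have : dimH A ≤ (θ.toNNReal : ENNReal) := by
    apply dimH_le_of_hausdorffMeasure_ne_top
    rw [Real.coe_toNNReal θ hθ.le]
    exact ne_top_of_le_ne_top ENNReal.one_ne_top key
  exact this

open Finset in
/-- The Gibbs inequality for the partition of `D` into the fibres of `χ`. -/
theorem sum_log_card_div_card_fiber_le {α : Type*} (D : Finset α) (χ : α → ℤ) (y : ℤ → ℝ)
    (hy : ∀ c, 0 < y c) :
    ∑ s ∈ D, Real.log ((#D : ℝ) / #{u ∈ D | χ u = χ s}) ≤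
      ∑ s ∈ D, (Real.log (y (χ s)) - 1) + #D * ∑ c ∈ D.image χ, (y c)⁻¹ := by
  have h1 : ∑ s ∈ D, ((#D : ℝ) * (y (χ s))⁻¹) * (#{u ∈ D | χ u = χ s} : ℝ)⁻¹ =
      #D * ∑ c ∈ D.image χ, (y c)⁻¹ := by
    rw [mul_sum, ← sum_fiberwise_of_maps_to (g := χ) (t := D.image χ)
      (fun s hs => mem_image_of_mem χ hs)]
    apply sum_congr rfl
    intro c hc
    obtain ⟨s, hs, rfl⟩ := mem_image.1 hc
    rw [sum_congr rfl (g := fun _ => ((#D : ℝ) * (y (χ s))⁻¹) * (#{u ∈ D | χ u = χ s} : ℝ)⁻¹)]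
    · rw [sum_const, nsmul_eq_mul]
      have : (#{u ∈ D | χ u = χ s} : ℝ) ≠ 0 := by
        have : s ∈ {u ∈ D | χ u = χ s} := by simp [hs]
        exact_mod_cast (card_pos.2 ⟨s, this⟩).ne'
      field_simp
    · intro t ht
      rw [(mem_filter.1 ht).2]
  rw [← h1, ← sum_add_distrib]
  apply sum_le_sum
  intro s hs
  have hD : (0 : ℝ) < #D := by exact_mod_cast card_pos.2 ⟨s, hs⟩
  have hn : (0 : ℝ) < #{u ∈ D | χ u = χ s} := by
    have : s ∈ {u ∈ D | χ u = χ s} := by simp [hs]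
    exact_mod_cast card_pos.2 ⟨s, this⟩
  have hys := hy (χ s)
  have h2 := Real.log_le_sub_one_of_pos
    (show 0 < (#D : ℝ) / #{u ∈ D | χ u = χ s} / y (χ s) by positivity)
  rw [Real.log_div (by positivity) hys.ne'] at h2
  have h3 : (#D : ℝ) / #{u ∈ D | χ u = χ s} / y (χ s) =
      ((#D : ℝ) * (y (χ s))⁻¹) * (#{u ∈ D | χ u = χ s} : ℝ)⁻¹ := by field_simp
  linarith

open Finset in
theorem sum_log_card_div_card_fiber_le_log {α : Type*} (D : Finset α) (χ : α → ℤ) {Λ : ℝ}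
    (hΛ : (#(D.image χ) : ℝ) ≤ Real.exp Λ) :
    ∑ s ∈ D, Real.log ((#D : ℝ) / #{u ∈ D | χ u = χ s}) ≤ #D * Λ := by
  have h := sum_log_card_div_card_fiber_le D χ (fun _ => Real.exp Λ) (fun _ => Real.exp_pos _)
  simp only [sum_const, nsmul_eq_mul, Real.log_exp] at h
  have h1 : (#(D.image χ) : ℝ) * (Real.exp Λ)⁻¹ ≤ 1 := by
    rw [← div_eq_mul_inv, div_le_one (Real.exp_pos _)]; exact hΛ
  have h2 : (#D : ℝ) * (#(D.image χ) * (Real.exp Λ)⁻¹) ≤ #D * 1 := by gcongr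
  linarith

open Finset in
theorem sum_log_card_div_card_fiber_le_half_log {α : Type*} (D : Finset α) (χ : α → ℤ) {Λ : ℝ}
    (hΛ : (#(D.image χ) : ℝ) ≤ Real.exp Λ) (hΛ6 : 6 ≤ Λ) (T : Finset ℤ) (hT : #T ≤ 4)
    (hDT : 7 * #D ≤ 8 * #{u ∈ D | χ u ∈ T}) :
    ∑ s ∈ D, Real.log ((#D : ℝ) / #{u ∈ D | χ u = χ s}) ≤ #D * (Λ / 2) := by
  have hexp := Real.exp_pos Λ
  have h := sum_log_card_div_card_fiber_le D χ (fun c => if c ∈ T then 8 else 2 * Real.exp Λ)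
    (fun c => by split_ifs <;> positivity)
  have hlog2 := Real.log_two_lt_d9
  have hlog8 : Real.log 8 = 3 * Real.log 2 := by
    rw [show (8 : ℝ) = 2 ^ (3 : ℕ) by norm_num, Real.log_pow]; norm_num
  have hlogN : Real.log (2 * Real.exp Λ) = Real.log 2 + Λ := by
    rw [Real.log_mul (by norm_num) hexp.ne', Real.log_exp]
  have h1 : ∑ c ∈ D.image χ, (if c ∈ T then (8 : ℝ) else 2 * Real.exp Λ)⁻¹ ≤ 1 := by
    have e1 : ∀ c ∈ D.image χ, (if c ∈ T then (8 : ℝ) else 2 * Real.exp Λ)⁻¹ ≤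
        (if c ∈ T then (8 : ℝ)⁻¹ else 0) + (2 * Real.exp Λ)⁻¹ := by
      intro c _
      split_ifs
      · have : 0 < (2 * Real.exp Λ)⁻¹ := by positivity
        linarith
      · linarith
    refine (sum_le_sum e1).trans ?_
    rw [sum_add_distrib, ← sum_filter, sum_const, sum_const, nsmul_eq_mul, nsmul_eq_mul]
    have e2 : (#{c ∈ D.image χ | c ∈ T} : ℝ) ≤ 4 := by
      have : #{c ∈ D.image χ | c ∈ T} ≤ #T :=
        card_le_card (fun c hc => (mem_filter.1 hc).2)
      exact_mod_cast this.trans hT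
    have e3 : (#(D.image χ) : ℝ) * (2 * Real.exp Λ)⁻¹ ≤ 1 / 2 := by
      rw [← div_eq_mul_inv, div_le_iff₀ (by positivity)]; linarith
    linarith
  have h2 : ∑ s ∈ D, (Real.log (if χ s ∈ T then (8 : ℝ) else 2 * Real.exp Λ) - 1) =
      #{u ∈ D | χ u ∈ T} * Real.log 8 + (#D - #{u ∈ D | χ u ∈ T}) * (Real.log 2 + Λ) - #D := by
    have e1 : ∀ s ∈ D, Real.log (if χ s ∈ T then (8 : ℝ) else 2 * Real.exp Λ) - 1 =
        (if χ s ∈ T then Real.log 8 - (Real.log 2 + Λ) else 0) + (Real.log 2 + Λ - 1) := by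
      intro s _
      split_ifs
      · ring
      · rw [hlogN]; ring
    rw [sum_congr rfl e1, sum_add_distrib, ← sum_filter, sum_const, sum_const, nsmul_eq_mul,
      nsmul_eq_mul]
    ring
  rw [h2] at h
  have hDT' : (7 : ℝ) * #D ≤ 8 * #{u ∈ D | χ u ∈ T} := by exact_mod_cast hDT
  have hDle : (#{u ∈ D | χ u ∈ T} : ℝ) ≤ #D := by exact_mod_cast card_filter_le _ _
  have h3 : (#D : ℝ) * ∑ c ∈ D.image χ, (if c ∈ T then (8 : ℝ) else 2 * Real.exp Λ)⁻¹ ≤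
      #D * 1 := by gcongr
  have hlog2' := Real.log_two_gt_d9
  have hD0 : (0 : ℝ) ≤ #D := Nat.cast_nonneg _
  nlinarith [mul_nonneg hD0 (sub_nonneg.2 hΛ6)]

open Finset in
/-- The points of `S` in the level-`k` interval of `s` concentrate, up to a proportion of one
eighth, on at most four intervals of level `k + L`. -/
def CellConcentrated (S : Finset ℝ) (k L : ℕ) (s : ℝ) : Prop :=
  ∃ T : Finset ℤ, #T ≤ 4 ∧
    7 * #{u ∈ S | quadCell k u = quadCell k s} ≤
      8 * #{u ∈ S | quadCell k u = quadCell k s ∧ quadCell (k + L) u ∈ T}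

open Finset in
open scoped Classical in
theorem sum_log_cell_ratio_le (S : Finset ℝ) (k L : ℕ) {Λ : ℝ} (hΛ6 : 6 ≤ Λ)
    (hΛ : ∀ s ∈ S, (#({u ∈ S | quadCell k u = quadCell k s}.image (quadCell (k + L))) : ℝ) ≤
      Real.exp Λ) :
    ∑ s ∈ S, Real.log ((#{u ∈ S | quadCell k u = quadCell k s} : ℝ) /
      #{u ∈ S | quadCell (k + L) u = quadCell (k + L) s}) ≤
      #S * Λ - #{s ∈ S | CellConcentrated S k L s} * (Λ / 2) := by
  have h1 : (#S * Λ - #{s ∈ S | CellConcentrated S k L s} * (Λ / 2) : ℝ) =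
      ∑ s ∈ S, if CellConcentrated S k L s then Λ / 2 else Λ := by
    have e1 : ∀ s ∈ S, (if CellConcentrated S k L s then Λ / 2 else Λ) =
        Λ - (if CellConcentrated S k L s then Λ / 2 else 0) := by
      intro s _; split_ifs <;> ring
    rw [sum_congr rfl e1, sum_sub_distrib, ← sum_filter, sum_const, sum_const, nsmul_eq_mul,
      nsmul_eq_mul]
  rw [h1, ← sum_fiberwise_of_maps_to (g := quadCell k) (t := S.image (quadCell k))
      (fun s hs => mem_image_of_mem _ hs),
    ← sum_fiberwise_of_maps_to (s := S) (g := quadCell k) (t := S.image (quadCell k))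
      (fun s hs => mem_image_of_mem _ hs)]
  apply sum_le_sum
  intro c hc
  obtain ⟨s, hs, rfl⟩ := mem_image.1 hc
  set D := {u ∈ S | quadCell k u = quadCell k s} with hD
  have e1 : ∀ t ∈ D, Real.log ((#{u ∈ S | quadCell k u = quadCell k t} : ℝ) /
      #{u ∈ S | quadCell (k + L) u = quadCell (k + L) t}) =
      Real.log ((#D : ℝ) / #{u ∈ D | quadCell (k + L) u = quadCell (k + L) t}) := by
    intro t ht
    have ht' := (mem_filter.1 ht).2
    rw [ht']
    congr 4
    ext u
    simp only [mem_filter, hD]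
    constructor
    · rintro ⟨h1, h2⟩
      exact ⟨⟨h1, (quadCell_eq_of_le (Nat.le_add_right k L) h2).trans ht'⟩, h2⟩
    · rintro ⟨⟨h1, _⟩, h2⟩
      exact ⟨h1, h2⟩
  have e2 : ∀ t ∈ D, (if CellConcentrated S k L t then Λ / 2 else Λ) =
      if CellConcentrated S k L s then Λ / 2 else Λ := by
    intro t ht
    have ht' := (mem_filter.1 ht).2
    unfold CellConcentrated
    rw [ht']
  rw [sum_congr rfl e1, sum_congr rfl e2, sum_const, nsmul_eq_mul]
  split_ifs with hconc
  · obtain ⟨T, hT, hST⟩ := hconc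
    apply sum_log_card_div_card_fiber_le_half_log D _ (hΛ s hs) hΛ6 T hT
    rw [hD, filter_filter]
    exact hST
  · exact sum_log_card_div_card_fiber_le_log D _ (hΛ s hs)

open Finset in
open scoped Classical in
theorem card_cellConcentrated_le (S : Finset ℝ) (k₀ L H : ℕ) {Λ : ℝ} (hΛ6 : 6 ≤ Λ)
    (hroot : ∀ u ∈ S, ∀ v ∈ S, quadCell k₀ u = quadCell k₀ v)
    (hinj : Set.InjOn (quadCell (k₀ + L * H)) S)
    (hΛ : ∀ k ≥ k₀, ∀ s ∈ S,
      (#({u ∈ S | quadCell k u = quadCell k s}.image (quadCell (k + L))) : ℝ) ≤ Real.exp Λ) :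
    #S * Real.log #S ≤ #S * H * Λ -
      #{x ∈ S ×ˢ range H | CellConcentrated S (k₀ + L * x.2) L x.1} * (Λ / 2) := by
  have htel : ∀ s ∈ S, Real.log #S = ∑ j ∈ range H,
      Real.log ((#{u ∈ S | quadCell (k₀ + L * j) u = quadCell (k₀ + L * j) s} : ℝ) /
        #{u ∈ S | quadCell (k₀ + L * j + L) u = quadCell (k₀ + L * j + L) s}) := by
    intro s hs
    have hpos : ∀ k, (0 : ℝ) < #{u ∈ S | quadCell k u = quadCell k s} := by
      intro k
      have : s ∈ {u ∈ S | quadCell k u = quadCell k s} := by simp [hs]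
      exact_mod_cast card_pos.2 ⟨s, this⟩
    let f : ℕ → ℝ := fun j =>
      Real.log (#{u ∈ S | quadCell (k₀ + L * j) u = quadCell (k₀ + L * j) s})
    have e1 : ∀ j ∈ range H,
      Real.log ((#{u ∈ S | quadCell (k₀ + L * j) u = quadCell (k₀ + L * j) s} : ℝ) /
        #{u ∈ S | quadCell (k₀ + L * j + L) u = quadCell (k₀ + L * j + L) s}) =
        f j - f (j + 1) := by
      intro j _
      rw [Real.log_div (hpos _).ne' (hpos _).ne']
      simp only [f, mul_add, mul_one, add_assoc]
    rw [sum_congr rfl e1, sum_range_sub']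
    have f0 : f 0 = Real.log #S := by
      simp only [f, mul_zero, add_zero]
      rw [filter_true_of_mem (fun u hu => hroot u hu s hs)]
    have fH : f H = 0 := by
      simp only [f]
      have : {u ∈ S | quadCell (k₀ + L * H) u = quadCell (k₀ + L * H) s} = {s} := by
        ext u
        simp only [mem_filter, mem_singleton]
        constructor
        · rintro ⟨h1, h2⟩
          exact hinj h1 hs h2
        · rintro rfl
          exact ⟨hs, rfl⟩
      rw [this]; simp
    rw [f0, fH, sub_zero]
  have hcard : (#{x ∈ S ×ˢ range H | CellConcentrated S (k₀ + L * x.2) L x.1} : ℝ) =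
      ∑ j ∈ range H, (#{s ∈ S | CellConcentrated S (k₀ + L * j) L s} : ℝ) := by
    simp only [card_filter]
    push_cast
    rw [sum_product_right]
  calc #S * Real.log #S = ∑ s ∈ S, Real.log #S := by rw [sum_const, nsmul_eq_mul]
    _ = ∑ j ∈ range H, ∑ s ∈ S,
      Real.log ((#{u ∈ S | quadCell (k₀ + L * j) u = quadCell (k₀ + L * j) s} : ℝ) /
        #{u ∈ S | quadCell (k₀ + L * j + L) u = quadCell (k₀ + L * j + L) s}) := by
        rw [sum_congr rfl htel, sum_comm]
    _ ≤ ∑ j ∈ range H,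
        (#S * Λ - #{s ∈ S | CellConcentrated S (k₀ + L * j) L s} * (Λ / 2)) := by
        apply sum_le_sum
        intro j _
        exact sum_log_cell_ratio_le S _ L hΛ6 (hΛ _ (by omega))
    _ = _ := by
        rw [sum_sub_distrib, hcard, sum_mul, sum_const, card_range, nsmul_eq_mul]
        ring

open Finset in
open scoped Classical in
/-- A set of positive Hausdorff dimension contains finite samples, at arbitrarily fine scales and
of arbitrary depth, that branch at almost all scales. -/
theorem exists_branching_sample {K : Set ℝ} (hK : dimH K ≠ 0) :
    ∃ L, 1 ≤ L ∧ ∀ J H : ℕ, 1 ≤ H → ∃ k₀ ≥ J, ∃ S : Finset ℝ, S.Nonempty ∧ (S : Set ℝ) ⊆ K ∧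
      400 * #{x ∈ S ×ˢ range H | CellConcentrated S (k₀ + L * x.2) L x.1} ≤ #S * H := by
  set Θ : Set ℝ := {θ | 0 < θ ∧ ∃ l, 1 ≤ l ∧ CellGrowthLE K θ l} with hΘ
  have hbdd : BddBelow Θ := ⟨0, fun θ hθ => hθ.1.le⟩
  have hne : Θ.Nonempty := by
    refine ⟨1, one_pos, 1, le_rfl, 0, ?_⟩
    intro k _ F _ hF
    have hsub : ∀ u ∈ F, F.image (quadCell (k + 1)) ⊆
        Ico (quadCell k u * 4) (quadCell k u * 4 + 4) := by
      intro u hu x hx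
      obtain ⟨v, hv, rfl⟩ := mem_image.1 hx
      have h1 := quadCell_add_ediv k 1 v
      rw [hF v hv u hu] at h1
      rw [mem_Ico]
      omega
    rcases F.eq_empty_or_nonempty with rfl | ⟨u, hu⟩
    · simp
    · have := card_le_card (hsub u hu)
      rw [Int.card_Ico] at this
      have h4 : #(F.image (quadCell (k + 1))) ≤ 4 := by omega
      norm_num
      exact_mod_cast h4
  have hstar : 0 < sInf Θ := by
    obtain ⟨ε, hε, hεd⟩ : ∃ ε : ℝ, 0 < ε ∧ ENNReal.ofReal ε < dimH K := by
      obtain ⟨r, hr0, hr⟩ := ENNReal.lt_iff_exists_nnreal_btwn.1 (pos_iff_ne_zero.2 hK)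
      refine ⟨r, by exact_mod_cast hr0, ?_⟩
      rwa [ENNReal.ofReal_coe_nnreal]
    refine lt_of_lt_of_le hε (le_csInf hne ?_)
    rintro θ ⟨hθ, l, hl, hP⟩
    by_contra! hlt
    have h1 := hP.dimH_le hθ hl
    exact absurd (hεd.trans_le h1) (not_lt.2 (ENNReal.ofReal_le_ofReal hlt.le))
  obtain ⟨θ₁, ⟨hθ₁, l, hl, hP⟩, hlt⟩ := exists_lt_of_csInf_lt hne
    (show sInf Θ < sInf Θ * (1 + 1 / 1000) by nlinarith)
  set θ' := (1 - 1 / 800) * θ₁ with hθ'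
  have hθ'lt : θ' < sInf Θ := by rw [hθ']; nlinarith
  have hθ'0 : 0 < θ' := by rw [hθ']; nlinarith
  have hnot : ∀ l, 1 ≤ l → ¬ CellGrowthLE K θ' l := fun l hl hc =>
    notMem_of_lt_csInf hθ'lt hbdd ⟨hθ'0, l, hl, hc⟩
  obtain ⟨q, hq⟩ := exists_nat_gt (6 / θ₁)
  rw [div_lt_iff₀ hθ₁] at hq
  have hq1 : 1 ≤ q := by
    rcases Nat.eq_zero_or_pos q with rfl | h
    · norm_num at hq
    · exact h
  set L := l * q with hL
  have hL1 : 1 ≤ L := Nat.mul_pos hl hq1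
  have hPL := hP.mul q
  rw [← hL] at hPL
  obtain ⟨J₁, hJ₁⟩ := hPL
  refine ⟨L, hL1, fun J H hH => ?_⟩
  have hn := hnot (L * H) (Nat.mul_pos hL1 hH)
  unfold CellGrowthLE at hn
  push Not at hn
  obtain ⟨k₀, hk₀, F, hFK, hF, hcard⟩ := hn (max J J₁)
  obtain ⟨S, hSF, hSinj, hSimg⟩ := Finset.exists_subset_injOn_image_eq_of_surjOn
    (f := quadCell (k₀ + L * H)) (F : Set ℝ) (F.image (quadCell (k₀ + L * H)))
    (by rw [coe_image]; exact Set.surjOn_image _ _)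
  have hSF' : ∀ u ∈ S, u ∈ F := fun u hu => hSF hu
  have hScard : #S = #(F.image (quadCell (k₀ + L * H))) := by
    rw [← hSimg, card_image_of_injOn hSinj]
  rw [← hScard] at hcard
  have hpos : (0 : ℝ) < (4 : ℝ) ^ (θ' * (L * H : ℕ)) := by positivity
  have hS0 : (0 : ℝ) < #S := hpos.trans hcard
  have hSne : S.Nonempty := card_pos.1 (by exact_mod_cast hS0)
  have hlog4 : 1 < Real.log 4 := by
    rw [show (4 : ℝ) = 2 ^ (2 : ℕ) by norm_num, Real.log_pow]
    have := Real.log_two_gt_d9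
    push_cast
    linarith
  set Λ := θ₁ * L * Real.log 4 with hΛ
  have hqL : (q : ℝ) ≤ L := by
    exact_mod_cast Nat.le_mul_of_pos_left q hl
  have hΛ6 : 6 ≤ Λ := by
    have : 6 ≤ θ₁ * L := by nlinarith
    rw [hΛ]; nlinarith
  refine ⟨k₀, (le_max_left _ _).trans hk₀, S, hSne, fun u hu => hFK (hSF hu), ?_⟩
  have hmain := card_cellConcentrated_le S k₀ L H hΛ6
    (fun u hu v hv => hF u (hSF' u hu) v (hSF' v hv)) hSinj (by
      intro k hk s hs
      have h1 := hJ₁ k (by omega) {u ∈ S | quadCell k u = quadCell k s}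
        (fun u hu => hFK (hSF (by simpa using (mem_filter.1 hu).1))) (by
          intro u hu v hv
          rw [(mem_filter.1 hu).2, (mem_filter.1 hv).2])
      refine h1.trans (le_of_eq ?_)
      rw [Real.rpow_def_of_pos (by norm_num), hΛ]
      congr 1
      ring)
  have hlogS : (1 - 1 / 800) * (H * Λ) ≤ Real.log #S := by
    have h1 := Real.log_le_log hpos hcard.le
    rw [Real.log_rpow (by norm_num)] at h1
    refine le_trans (le_of_eq ?_) h1
    rw [hθ', hΛ]
    push_cast
    ring
  have h1 : (#S : ℝ) * ((1 - 1 / 800) * (H * Λ)) ≤ #S * Real.log #S := by gcongr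
  have h2 : (400 * #{x ∈ S ×ˢ range H | CellConcentrated S (k₀ + L * x.2) L x.1} : ℝ) * Λ ≤
      (#S * H) * Λ := by nlinarith
  have h3 := le_of_mul_le_mul_right h2 (by linarith)
  exact_mod_cast h3

open Finset in
open scoped Classical in
theorem exists_not_and_card_not_gt {α : Type*} (S : Finset α) (hS : S.Nonempty)
    (H N J : ℕ) (hH : 1 ≤ H) (hN : 1 ≤ N) (hJ : 4 * J ≤ H)
    (V : α → ℕ → Prop) (W : α → ℕ → ℕ → Prop)
    (hV : 4 * ∑ s ∈ S, #{j ∈ range H | V s j} ≤ #S * H)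
    (hW : 8 * ∑ s ∈ S, ∑ n ∈ range N, #{i ∈ range H | W s i n} ≤ #S * H * N) :
    ∃ s ∈ S, ∃ i, J ≤ i ∧ i < H ∧ ¬ V s i ∧ N < 2 * #{n ∈ range N | ¬ W s i n} := by
  set X := S ×ˢ range H with hX
  have hXcard : #X = #S * H := by rw [hX, card_product, card_range]
  have b1 : 4 * #{x ∈ X | x.2 < J} ≤ #X := by
    have : {x ∈ X | x.2 < J} ⊆ S ×ˢ range J := by
      intro x hx
      simp only [hX, mem_filter, mem_product, mem_range] at hx ⊢
      exact ⟨hx.1.1, hx.2⟩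
    have := card_le_card this
    rw [card_product, card_range] at this
    rw [hXcard]
    nlinarith
  have b2 : 4 * #{x ∈ X | V x.1 x.2} ≤ #X := by
    have : #{x ∈ X | V x.1 x.2} = ∑ s ∈ S, #{i ∈ range H | V s i} := by
      simp only [card_filter, hX]
      rw [sum_product]
    rw [this, hXcard]
    exact hV
  have b3 : 4 * #{x ∈ X | N ≤ 2 * #{n ∈ range N | W x.1 x.2 n}} ≤ #X := by
    have h1 : #{x ∈ X | N ≤ 2 * #{n ∈ range N | W x.1 x.2 n}} * N ≤
        ∑ x ∈ X, 2 * #{n ∈ range N | W x.1 x.2 n} := by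
      rw [← smul_eq_mul]
      refine (card_nsmul_le_sum _ (fun x => 2 * #{n ∈ range N | W x.1 x.2 n}) N ?_).trans
        (sum_le_sum_of_subset (filter_subset _ _))
      intro x hx
      exact (mem_filter.1 hx).2
    have h2 : ∑ x ∈ X, #{n ∈ range N | W x.1 x.2 n} =
        ∑ s ∈ S, ∑ n ∈ range N, #{i ∈ range H | W s i n} := by
      simp only [card_filter, hX]
      rw [sum_product]
      exact sum_congr rfl fun s _ => sum_comm
    rw [← mul_sum, h2] at h1
    rw [hXcard]
    refine Nat.le_of_mul_le_mul_right ?_ (show 0 < N by omega)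
    rw [mul_assoc]
    omega
  have hlt : #({x ∈ X | x.2 < J} ∪ {x ∈ X | V x.1 x.2} ∪
      {x ∈ X | N ≤ 2 * #{n ∈ range N | W x.1 x.2 n}}) < #X := by
    have hpos : 0 < #X := by
      rw [hXcard]; exact Nat.mul_pos (card_pos.2 hS) hH
    have h1 := card_union_le ({x ∈ X | x.2 < J} ∪ {x ∈ X | V x.1 x.2})
      {x ∈ X | N ≤ 2 * #{n ∈ range N | W x.1 x.2 n}}
    have h2 := card_union_le {x ∈ X | x.2 < J} {x ∈ X | V x.1 x.2}
    omega
  obtain ⟨⟨s, i⟩, hx, hnot⟩ := exists_mem_notMem_of_card_lt_card hlt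
  simp only [mem_union, mem_filter, hx, true_and, not_or, not_lt, not_le] at hnot
  obtain ⟨⟨h1, h2⟩, h3⟩ := hnot
  simp only [hX, mem_product, mem_range] at hx
  refine ⟨s, hx.1, i, h1, hx.2, h2, ?_⟩
  have h5 := card_filter_add_card_filter_not (s := range N) (fun n => W s i n)
  rw [card_range] at h5
  omega

open Finset in
open scoped Classical in
/-- Joint selection of a point and a scale at which both a sparse family of scales and a sparse
family of unstable triples stay sparse in all backward windows. -/
theorem exists_uniformly_sparse {α : Type*} (S : Finset α) (hS : S.Nonempty) (π : ℕ → α → ℤ)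
    (hπ : ∀ k l x y, k ≤ l → π l x = π l y → π k x = π k y) (H N J : ℕ) (hH : 1 ≤ H)
    (hN : 1 ≤ N) (hJ : 4 * J ≤ H) (P : α → ℕ → Prop) (Q : α → ℕ → ℕ → Prop)
    (hP : 400 * ∑ s ∈ S, #{j ∈ range H | P s j} ≤ #S * H)
    (hQ : 6400 * ∑ j ∈ range H, ∑ n ∈ range N, #{s ∈ S | Q s j n} ≤ #S * H * N) :
    ∃ s ∈ S, ∃ i, J ≤ i ∧ i < H ∧
      (∀ τ ≤ i + 1, 100 * #{j ∈ Ico (i + 1 - τ) (i + 1) | P s j} ≤ τ) ∧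
      N < 2 * #{n ∈ range N | ∀ τ ≤ i + 1, 100 * #{j ∈ Ico (i + 1 - τ) (i + 1) |
        ∃ k, #{u ∈ S | π k u = π k s} < 8 * #{u ∈ {u ∈ S | Q u j n} | π k u = π k s}} ≤ τ} := by
  obtain ⟨D, hDdef⟩ : ∃ D : α → ℕ → ℕ → Prop, ∀ s j n, D s j n ↔
      ∃ k, #{u ∈ S | π k u = π k s} < 8 * #{u ∈ {u ∈ S | Q u j n} | π k u = π k s} :=
    ⟨_, fun _ _ _ => Iff.rfl⟩
  simp only [← hDdef]
  have hD : ∀ j n, #{s ∈ S | D s j n} ≤ 8 * #{s ∈ S | Q s j n} := by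
    intro j n
    simp only [hDdef]
    exact card_cell_dense_le S {u ∈ S | Q u j n} π 8 hπ
  have h4 : ∑ s ∈ S, ∑ n ∈ range N, #{j ∈ range H | D s j n} =
      ∑ j ∈ range H, ∑ n ∈ range N, #{s ∈ S | D s j n} := by
    simp only [card_filter]
    rw [sum_comm, sum_congr rfl fun n _ => sum_comm (s := S) (t := range H), sum_comm]
  have h5 : ∑ j ∈ range H, ∑ n ∈ range N, #{s ∈ S | D s j n} ≤
      8 * ∑ j ∈ range H, ∑ n ∈ range N, #{s ∈ S | Q s j n} := by
    simp only [mul_sum]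
    exact sum_le_sum fun s _ => sum_le_sum fun n _ => hD s n
  have h3 : ∑ s ∈ S, ∑ n ∈ range N, #{i ∈ range H | ∃ τ, τ ≤ i + 1 ∧
      τ < 100 * #{j ∈ Ico (i + 1 - τ) (i + 1) | D s j n}} ≤
      100 * ∑ s ∈ S, ∑ n ∈ range N, #{j ∈ range H | D s j n} := by
    rw [mul_sum]
    refine sum_le_sum fun s _ => ?_
    rw [mul_sum]
    exact sum_le_sum fun n _ => card_window_dense_le (fun j => D s j n) 100 H
  have h6 : ∑ s ∈ S, #{i ∈ range H | ∃ τ, τ ≤ i + 1 ∧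
      τ < 100 * #{j ∈ Ico (i + 1 - τ) (i + 1) | P s j}} ≤
      100 * ∑ s ∈ S, #{j ∈ range H | P s j} := by
    rw [mul_sum]
    exact sum_le_sum fun s _ => card_window_dense_le (P s) 100 H
  obtain ⟨s, hs, i, hJi, hiH, h1, h2⟩ := exists_not_and_card_not_gt S hS H N J hH hN hJ
    (fun s i => ∃ τ, τ ≤ i + 1 ∧ τ < 100 * #{j ∈ Ico (i + 1 - τ) (i + 1) | P s j})
    (fun s i n => ∃ τ, τ ≤ i + 1 ∧ τ < 100 * #{j ∈ Ico (i + 1 - τ) (i + 1) | D s j n})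
    (by
      have := (Nat.mul_le_mul_left 4 h6).trans (le_of_eq_of_le (by ring) hP)
      refine le_trans (le_of_eq ?_) this
      congr!)
    (by
      have := (Nat.mul_le_mul_left 8 (h3.trans (Nat.mul_le_mul_left 100 (h4.trans_le h5)))).trans
        (le_of_eq_of_le (by ring) hQ)
      refine le_trans (le_of_eq ?_) this
      congr!)
  simp only [not_exists, not_and, not_lt] at h1 h2
  exact ⟨s, hs, i, hJi, hiH, h1, h2⟩

open Finset in
/-- More than half of the integers below `2 * C * B`, coloured with `C` colours, contain two
nearby integers of the same colour. -/
theorem exists_near_same_color {γ : Type*} [DecidableEq γ] (C B : ℕ) (G : Finset ℕ)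
    (hG : G ⊆ range (2 * C * B)) (hcard : 2 * C * B < 2 * #G) (T : Finset γ) (hT : #T ≤ C)
    (f : ℕ → γ) (hf : ∀ n ∈ G, f n ∈ T) :
    ∃ n ∈ G, ∃ m ∈ G, n < m ∧ m ≤ n + 2 * C ∧ f n = f m := by
  have hC : 0 < 2 * C := by
    rcases Nat.eq_zero_or_pos C with rfl | h
    · exfalso
      simp only [mul_zero, zero_mul, range_zero, subset_empty] at hG
      rw [hG] at hcard
      simp at hcard
    · omega
  have hlt : #(range B ×ˢ T) < #G := by
    rw [card_product, card_range]
    nlinarith [Nat.mul_le_mul_left B hT]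
  obtain ⟨n, hn, m, hm, hne, heq⟩ := exists_ne_map_eq_of_card_lt_of_maps_to hlt
    (f := fun n => (n / (2 * C), f n)) (by
      intro n hn
      have hn' : n ∈ G := hn
      have h1 := mem_range.1 (hG hn')
      simp only [coe_product, Set.mem_prod, mem_coe, mem_range]
      exact ⟨Nat.div_lt_of_lt_mul h1, hf n hn'⟩)
  simp only [Prod.mk.injEq] at heq
  have e1 := Nat.div_add_mod n (2 * C)
  have e2 := Nat.div_add_mod m (2 * C)
  have e3 := Nat.mod_lt n hC
  have e4 := Nat.mod_lt m hC
  rw [heq.1] at e1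
  rcases lt_or_gt_of_ne hne with h | h
  · exact ⟨n, hn, m, hm, h, by omega, heq.2⟩
  · exact ⟨m, hm, n, hn, h, by omega, heq.2.symm⟩

/-- The real numbers all of whose multiples `p ^ (2 n) * u` are badly approximable with constant
`c`. -/
def uniformlyBadlyApproximable (p : ℕ) (c : ℝ) : Set ℝ :=
  {u | ∀ (n : ℕ) (q m : ℤ), q ≠ 0 → c ≤ |(q : ℝ)| * |(p : ℝ) ^ (2 * n) * q * u - m|}

/-- First coordinate of a vector of the renormalised lattice. -/
noncomputable def latX (p : ℕ) (e : ℝ) (n : ℕ) (q : ℤ) : ℝ := (p : ℝ) ^ n * q / e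

/-- Second coordinate of a vector of the renormalised lattice. -/
noncomputable def latY (p : ℕ) (v e : ℝ) (n : ℕ) (q m : ℤ) : ℝ :=
  e * ((p : ℝ) ^ n * q * v - m / (p : ℝ) ^ n)

/-- The lattices attached to `v` at scale `e` and times `n, …, n + R` have no nonzero vector in
the box of size `R` with product of coordinates less than `c`. -/
def LatGood (p R : ℕ) (c e : ℝ) (n : ℕ) (v : ℝ) : Prop :=
  ∀ k ≤ R, ∀ q m : ℤ, (q ≠ 0 ∨ m ≠ 0) → |latX p e (n + k) q| ≤ R →
    |latY p v e (n + k) q m| ≤ R → c ≤ |latX p e (n + k) q * latY p v e (n + k) q m|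

theorem LatGood.mono {p R R' : ℕ} {c c' e v : ℝ} {n : ℕ} (hR : R ≤ R') (hc : c ≤ c')
    (h : LatGood p R' c' e n v) : LatGood p R c e n v := by
  intro k hk q m hqm hx hy
  have hRR : (R : ℝ) ≤ R' := by exact_mod_cast hR
  exact hc.trans (h k (hk.trans hR) q m hqm (hx.trans hRR) (hy.trans hRR))

theorem latX_mul_latY {p : ℕ} (hp : 2 ≤ p) {e : ℝ} (he : 0 < e) (v : ℝ) (n : ℕ) (q m : ℤ) :
    latX p e n q * latY p v e n q m = q * ((p : ℝ) ^ (2 * n) * q * v - m) := by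
  have hp0 : (0 : ℝ) < p := by positivity
  unfold latX latY
  field_simp
  ring

theorem le_abs_latX_mul_latY {p : ℕ} (hp : 2 ≤ p) {c e u : ℝ} (he : 0 < e)
    (hu : u ∈ uniformlyBadlyApproximable p c) (n : ℕ) {q : ℤ} (hq : q ≠ 0) (m : ℤ) :
    c ≤ |latX p e n q * latY p u e n q m| := by
  rw [latX_mul_latY hp he, abs_mul]
  exact hu n q m hq

theorem latGood_of_mem {p : ℕ} (hp : 2 ≤ p) {R : ℕ} {c c' e u : ℝ} {n : ℕ}
    (he : R * (p : ℝ) ^ (n + R) < e) (hc : c' ≤ c) (hu : u ∈ uniformlyBadlyApproximable p c) :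
    LatGood p R c' e n u := by
  intro k hk q m hqm _ hy
  have hp1 : (1 : ℝ) ≤ p := by exact_mod_cast (by omega : 1 ≤ p)
  have he0 : 0 < e := lt_of_le_of_lt (by positivity) he
  by_cases hq : q = 0
  · exfalso
    have hm : m ≠ 0 := by tauto
    have hm1 : (1 : ℝ) ≤ |(m : ℝ)| := by exact_mod_cast Int.one_le_abs hm
    have hpk : (0 : ℝ) < (p : ℝ) ^ (n + k) := by positivity
    have h1 : |latY p u e (n + k) q m| = e * |(m : ℝ)| / (p : ℝ) ^ (n + k) := by
      unfold latY
      rw [hq, Int.cast_zero, mul_zero, zero_mul, zero_sub, abs_mul, abs_neg, abs_div,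
        abs_of_pos he0, abs_of_pos hpk]
      ring
    rw [h1, div_le_iff₀ hpk] at hy
    have h2 : (R : ℝ) * (p : ℝ) ^ (n + k) ≤ R * (p : ℝ) ^ (n + R) := by
      gcongr
    nlinarith
  · exact hc.trans (le_abs_latX_mul_latY hp he0 hu _ hq m)

theorem latY_add_div {p : ℕ} {e : ℝ} (he : 0 < e) (v t : ℝ) (n : ℕ) (q m : ℤ) :
    latY p (v + t / e ^ 2) e n q m = latY p v e n q m + t * latX p e n q := by
  unfold latX latY
  field_simp
  ring

/-- The Dirichlet approximation theorem for the renormalised lattice. -/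
theorem exists_latX_le_latY_le {p : ℕ} (hp : 2 ≤ p) {e X : ℝ} (hX : 1 ≤ X) {n : ℕ}
    (he : (p : ℝ) ^ n ≤ e) (v : ℝ) :
    ∃ q m : ℤ, 0 < q ∧ latX p e n q ≤ X ∧ |latY p v e n q m| ≤ 1 / X := by
  have hpn : (0 : ℝ) < (p : ℝ) ^ n := by positivity
  have he0 : 0 < e := hpn.trans_le he
  have h1 : 1 ≤ X * e / (p : ℝ) ^ n := by
    rw [le_div_iff₀ hpn]; nlinarith
  have hQ : 0 < ⌊X * e / (p : ℝ) ^ n⌋₊ := Nat.floor_pos.2 h1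
  obtain ⟨m, q, hq0, hqQ, habs⟩ :=
    Real.exists_int_int_abs_mul_sub_le ((p : ℝ) ^ (2 * n) * v) hQ
  refine ⟨q, m, hq0, ?_, ?_⟩
  · have h2 : (q : ℝ) ≤ X * e / (p : ℝ) ^ n := by
      refine le_trans ?_ (Nat.floor_le (by positivity))
      exact_mod_cast hqQ
    unfold latX
    rw [div_le_iff₀ he0]
    rw [le_div_iff₀ hpn] at h2
    linarith
  · have h3 : latY p v e n q m = e / (p : ℝ) ^ n * (q * ((p : ℝ) ^ (2 * n) * v) - m) := by
      unfold latY
      field_simp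
      ring
    rw [h3, abs_mul, abs_of_pos (by positivity)]
    have h4 := Nat.lt_floor_add_one (X * e / (p : ℝ) ^ n)
    calc e / (p : ℝ) ^ n * |q * ((p : ℝ) ^ (2 * n) * v) - m|
        ≤ e / (p : ℝ) ^ n * (1 / (⌊X * e / (p : ℝ) ^ n⌋₊ + 1)) := by gcongr
      _ ≤ e / (p : ℝ) ^ n * (1 / (X * e / (p : ℝ) ^ n)) := by
        have : (0 : ℝ) < X * e / (p : ℝ) ^ n := by linarith
        gcongr
      _ = 1 / X := by field_simp

/-- Near a point `u` of the badly approximable set there is an interval of definite relative size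
free of good points. -/
theorem exists_gap {p : ℕ} (hp : 2 ≤ p) {w c' e u t₀ : ℝ} {n R : ℕ} (hw : 0 < w) (hw1 : w ≤ 1)
    (hu : u ∈ uniformlyBadlyApproximable p (w ^ 2)) (he : (p : ℝ) ^ n ≤ e) (ht₀ : |t₀| = 1 / 2)
    (hR : 4 / w ≤ R) (hc' : w ^ 2 / 4 < c') :
    ∃ t₁, |t₁ - t₀| ≤ 1 / 4 ∧
      ∀ t, |t - t₁| < w ^ 4 / 64 → ¬ LatGood p R c' e n (u + t / e ^ 2) := by
  have hpn : (0 : ℝ) < (p : ℝ) ^ n := by positivity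
  have he0 : 0 < e := hpn.trans_le he
  have hX : 1 ≤ 4 / w := by rw [le_div_iff₀ hw]; linarith
  obtain ⟨q, m, hq, hx, hy⟩ := exists_latX_le_latY_le hp hX he (u + t₀ / e ^ 2)
  set x := latX p e n q with hxdef
  have hyt : ∀ t, latY p (u + t / e ^ 2) e n q m =
      latY p (u + t₀ / e ^ 2) e n q m + (t - t₀) * x := by
    intro t
    rw [latY_add_div he0, latY_add_div he0]; ring
  set y := latY p (u + t₀ / e ^ 2) e n q m with hydef
  have hx0 : 0 < x := by
    rw [hxdef]; unfold latX
    have : (0 : ℝ) < q := by exact_mod_cast hq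
    positivity
  have hK := le_abs_latX_mul_latY hp he0 hu n hq.ne' m
  have hy0 : latY p u e n q m = y - t₀ * x := by
    have := hyt 0
    rw [zero_div, add_zero] at this
    rw [this]; ring
  rw [← hxdef, hy0, abs_mul, abs_of_pos hx0] at hK
  have hy' : |y| ≤ w / 4 := by
    refine hy.trans (le_of_eq ?_); field_simp
  have hxw : w ≤ x := by
    by_contra! hlt
    have h1 : |y - t₀ * x| ≤ |y| + |t₀ * x| := abs_sub _ _
    rw [abs_mul, ht₀, abs_of_pos hx0] at h1
    nlinarith
  refine ⟨t₀ - y / x, ?_, ?_⟩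
  · rw [sub_sub_cancel_left, abs_neg, abs_div, abs_of_pos hx0, div_le_iff₀ hx0]
    linarith
  · intro t ht hgood
    have hyt' : latY p (u + t / e ^ 2) e n q m = (t - (t₀ - y / x)) * x := by
      rw [hyt]; field_simp; ring
    have hx4 : x * w ≤ 4 := by rwa [le_div_iff₀ hw] at hx
    have hx2 : x ^ 2 * w ^ 2 ≤ 16 := by nlinarith [mul_pos hx0 hw]
    have hxy : |x * latY p (u + t / e ^ 2) e n q m| ≤ w ^ 2 / 4 := by
      rw [hyt', abs_mul, abs_mul, abs_of_pos hx0]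
      calc x * (|t - (t₀ - y / x)| * x) = x ^ 2 * |t - (t₀ - y / x)| := by ring
        _ ≤ x ^ 2 * (w ^ 4 / 64) := by gcongr
        _ = (x ^ 2 * w ^ 2) * (w ^ 2 / 64) := by ring
        _ ≤ 16 * (w ^ 2 / 64) := by gcongr
        _ = w ^ 2 / 4 := by ring
    have hR4 : (4 : ℝ) ≤ R := by
      refine le_trans ?_ hR; rw [le_div_iff₀ hw]; linarith
    have hyR : |latY p (u + t / e ^ 2) e n q m| ≤ R := by
      rw [abs_mul, abs_of_pos hx0] at hxy
      have : w * |latY p (u + t / e ^ 2) e n q m| ≤ w * 1 := by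
        calc w * |latY p (u + t / e ^ 2) e n q m| ≤ x * |latY p (u + t / e ^ 2) e n q m| := by
              gcongr
          _ ≤ w ^ 2 / 4 := hxy
          _ ≤ w * 1 := by nlinarith
      have := le_of_mul_le_mul_left this hw
      linarith
    have := hgood 0 (Nat.zero_le _) q m (Or.inl hq.ne') (by
      rw [add_zero, ← hxdef, abs_of_pos hx0]; exact hx.trans hR) (by rw [add_zero]; exact hyR)
    rw [add_zero, ← hxdef] at this
    linarith

/-- A reduced basis of the renormalised lattice of a badly approximable point. -/
theorem exists_reduced_basis {p : ℕ} (hp : 2 ≤ p) {c e u : ℝ} {n : ℕ} (hc : 0 < c)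
    (hu : u ∈ uniformlyBadlyApproximable p c) (he : (p : ℝ) ^ n ≤ e) :
    ∃ q₁ m₁ q₂ m₂ : ℤ, q₂ * m₁ - q₁ * m₂ = 1 ∧ |latX p e n q₁| ≤ 1 ∧ |latY p u e n q₁ m₁| ≤ 1 ∧
      |latX p e n q₂| ≤ 1 ∧ |latY p u e n q₂ m₂| ≤ 2 / c := by
  have hpn : (0 : ℝ) < (p : ℝ) ^ n := by positivity
  have he0 : 0 < e := hpn.trans_le he
  obtain ⟨q, m, hq, hx, hy⟩ := exists_latX_le_latY_le hp le_rfl he u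
  obtain ⟨q₁, m₁, hq₁0, hco, hx₁, hy₁⟩ : ∃ q₁ m₁ : ℤ, 0 < q₁ ∧ IsCoprime q₁ m₁ ∧
      latX p e n q₁ ≤ 1 ∧ |latY p u e n q₁ m₁| ≤ 1 := by
    set g : ℤ := ((Int.gcd q m : ℕ) : ℤ) with hg
    have hgpos : 0 < g := by
      rw [hg]; exact_mod_cast Int.gcd_pos_of_ne_zero_left m hq.ne'
    have hg1 : (1 : ℝ) ≤ g := by exact_mod_cast hgpos
    obtain ⟨a, ha⟩ : g ∣ q := Int.gcd_dvd_left ..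
    obtain ⟨b, hb⟩ : g ∣ m := Int.gcd_dvd_right ..
    have haq : 0 < a := by
      by_contra! h
      have : q ≤ 0 := by rw [ha]; nlinarith
      omega
    have ha' : (q : ℝ) = g * a := by exact_mod_cast ha
    have hb' : (m : ℝ) = g * b := by exact_mod_cast hb
    refine ⟨a, b, haq, ?_, ?_, ?_⟩
    · rw [Int.isCoprime_iff_gcd_eq_one]
      have h1 : Int.gcd (g * a) (g * b) = g.natAbs * Int.gcd a b := Int.gcd_mul_left ..
      rw [← ha, ← hb] at h1
      have h2 : g.natAbs = Int.gcd q m := by rw [hg]; simp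
      rw [h2] at h1
      have h3 : 0 < Int.gcd q m := Int.gcd_pos_of_ne_zero_left m hq.ne'
      exact Nat.eq_of_mul_eq_mul_left h3 (by rw [mul_one]; exact h1.symm)
    · have : latX p e n q = g * latX p e n a := by unfold latX; rw [ha']; ring
      have h0 : 0 ≤ latX p e n a := by
        unfold latX
        have : (0 : ℝ) < a := by exact_mod_cast haq
        positivity
      nlinarith
    · have : latY p u e n q m = g * latY p u e n a b := by unfold latY; rw [ha', hb']; ring
      rw [this, abs_mul, abs_of_pos (by linarith)] at hy
      nlinarith [abs_nonneg (latY p u e n a b)]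
  obtain ⟨a, b, hab⟩ := hco
  set q₂ := b % q₁ with hq₂
  set m₂ := -a - m₁ * (b / q₁) with hm₂
  have hdet : q₂ * m₁ - q₁ * m₂ = 1 := by
    have := Int.emod_add_mul_ediv b q₁
    rw [hq₂, hm₂]
    linear_combination hab + m₁ * this
  have hq₂0 : 0 ≤ q₂ := Int.emod_nonneg _ hq₁0.ne'
  have hq₂1 : q₂ < q₁ := Int.emod_lt_of_pos _ hq₁0
  have hx₁0 : 0 < latX p e n q₁ := by
    unfold latX
    have : (0 : ℝ) < q₁ := by exact_mod_cast hq₁0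
    positivity
  have hx₂0 : 0 ≤ latX p e n q₂ := by
    unfold latX
    have : (0 : ℝ) ≤ q₂ := by exact_mod_cast hq₂0
    positivity
  have hx₂1 : latX p e n q₂ ≤ latX p e n q₁ := by
    unfold latX
    have : (q₂ : ℝ) ≤ q₁ := by exact_mod_cast hq₂1.le
    gcongr
  have hdetR : latX p e n q₁ * latY p u e n q₂ m₂ - latX p e n q₂ * latY p u e n q₁ m₁ = 1 := by
    have h : ((q₂ : ℝ) * m₁ - q₁ * m₂) = 1 := by exact_mod_cast hdet
    rw [← h]
    unfold latX latY
    field_simp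
    ring
  have hK := le_abs_latX_mul_latY hp he0 hu n hq₁0.ne' m₁
  rw [abs_mul, abs_of_pos hx₁0] at hK
  have hcx : c ≤ latX p e n q₁ := by nlinarith
  refine ⟨q₁, m₁, q₂, m₂, hdet, by rwa [abs_of_pos hx₁0], hy₁,
    by rw [abs_of_nonneg hx₂0]; linarith, ?_⟩
  rw [le_div_iff₀ hc]
  have h1 : latX p e n q₁ * latY p u e n q₂ m₂ =
      1 + latX p e n q₂ * latY p u e n q₁ m₁ := by linarith
  have h2 : latX p e n q₁ * |latY p u e n q₂ m₂| ≤ 2 := by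
    rw [← abs_of_pos hx₁0, ← abs_mul, h1]
    refine (abs_add_le _ _).trans ?_
    rw [abs_one, abs_mul, abs_of_nonneg hx₂0]
    nlinarith [abs_nonneg (latY p u e n q₁ m₁)]
  nlinarith [abs_nonneg (latY p u e n q₂ m₂)]

/-- The real matrix `!![w₁, w₂; w₃, w₄]` is the renormalisation of an integral matrix of
determinant one that is upper triangular modulo `p ^ (2 R)`, comparing the lattices at times `n`
and `n + d`. -/
def IsLatReturn (p R n d : ℕ) (w₁ w₂ w₃ w₄ : ℝ) : Prop :=
  ∃ d₁ d₂ d₃ d₄ : ℤ, d₁ * d₄ - d₂ * d₃ = 1 ∧ (p : ℤ) ^ (2 * R) ∣ d₃ ∧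
    w₁ = d₁ * (p : ℝ) ^ d ∧ w₂ = d₂ / (p : ℝ) ^ (2 * n + d) ∧
    w₃ = d₃ * (p : ℝ) ^ (2 * n + d) ∧ w₄ = d₄ / (p : ℝ) ^ d

theorem abs_sub_lt_of_floor_div_eq {x y ε : ℝ} (hε : 0 < ε) (h : ⌊x / ε⌋ = ⌊y / ε⌋) :
    |x - y| < ε := by
  have := Int.abs_sub_lt_one_of_floor_eq_floor h
  rwa [← sub_div, abs_div, abs_of_pos hε, div_lt_one hε] at this

theorem floor_div_mem_Icc {x ε A : ℝ} (hε : 0 < ε) (h : |x| ≤ A) :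
    ⌊x / ε⌋ ∈ Finset.Icc (-⌈A / ε⌉) ⌈A / ε⌉ := by
  rw [abs_le] at h
  have h1 : x / ε ≤ A / ε := by gcongr; exact h.2
  have h2 : -(A / ε) ≤ x / ε := by rw [← neg_div]; gcongr; exact h.1
  have h3 := Int.le_ceil (A / ε)
  rw [Finset.mem_Icc, Int.le_floor]
  constructor
  · push_cast; linarith
  · exact_mod_cast (Int.floor_le (x / ε)).trans (h1.trans h3)

theorem abs_mul_sub_mul_le {a b x y ε A : ℝ} (hx : |x| ≤ ε) (hy : |y| ≤ ε) (ha : |a| ≤ A)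
    (hb : |b| ≤ 1) : |a * x - b * y| ≤ (A + 1) * ε := by
  refine (abs_sub _ _).trans ?_
  rw [abs_mul, abs_mul]
  have h0 := abs_nonneg x
  have h1 := abs_nonneg a
  have h2 := abs_nonneg y
  have h3 := abs_nonneg b
  nlinarith [mul_le_mul ha hx h0 (h1.trans ha), mul_le_mul hb hy h2 zero_le_one]

theorem return_of_bases {p : ℕ} (hp : 2 ≤ p) {c e u ε : ℝ} {R n d : ℕ} (he : 0 < e)
    {q₁ m₁ q₂ m₂ q₁' m₁' q₂' m₂' : ℤ}
    (hc : 0 < c) (hc1 : c ≤ 1)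
    (hdet : q₂ * m₁ - q₁ * m₂ = 1) (hdet' : q₂' * m₁' - q₁' * m₂' = 1)
    (hx₁ : |latX p e n q₁| ≤ 1) (hy₁ : |latY p u e n q₁ m₁| ≤ 1)
    (hx₂ : |latX p e n q₂| ≤ 1) (hy₂ : |latY p u e n q₂ m₂| ≤ 2 / c)
    (hx₁' : |latX p e (n + d) q₁' - latX p e n q₁| ≤ ε)
    (hy₁' : |latY p u e (n + d) q₁' m₁' - latY p u e n q₁ m₁| ≤ ε)
    (hx₂' : |latX p e (n + d) q₂' - latX p e n q₂| ≤ ε)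
    (hy₂' : |latY p u e (n + d) q₂' m₂' - latY p u e n q₂ m₂| ≤ ε)
    (hq₁ : (p : ℤ) ^ (2 * R) ∣ q₁' - q₁) (hq₂ : (p : ℤ) ^ (2 * R) ∣ q₂' - q₂) :
    ∃ w₁ w₂ w₃ w₄, IsLatReturn p R n d w₁ w₂ w₃ w₄ ∧ |w₁ + u * w₃ - 1| ≤ (2 / c + 1) * ε ∧
      |e ^ 2 * (w₃ * u ^ 2 + (w₁ - w₄) * u - w₂)| ≤ (2 / c + 1) * ε ∧
      |w₃ / e ^ 2| ≤ (2 / c + 1) * ε ∧ |w₄ - u * w₃ - 1| ≤ (2 / c + 1) * ε := by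
  have hp0 : (0 : ℝ) < p := by positivity
  have hpn : (0 : ℝ) < (p : ℝ) ^ n := by positivity
  have hpd : (0 : ℝ) < (p : ℝ) ^ d := by positivity
  have hdetR : ((q₂ : ℝ) * m₁ - q₁ * m₂) = 1 := by exact_mod_cast hdet
  have h1c : 1 ≤ 2 / c := by rw [le_div_iff₀ hc]; linarith
  refine ⟨_, _, _, _, ⟨-m₂ * q₁' + m₁ * q₂', -m₂ * m₁' + m₁ * m₂', q₂ * q₁' - q₁ * q₂',
    q₂ * m₁' - q₁ * m₂', ?_, ?_, rfl, rfl, rfl, rfl⟩, ?_, ?_, ?_, ?_⟩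
  · linear_combination (q₂' * m₁' - q₁' * m₂') * hdet + hdet'
  · have : q₂ * q₁' - q₁ * q₂' = q₂ * (q₁' - q₁) - q₁ * (q₂' - q₂) := by ring
    rw [this]
    exact dvd_sub (hq₁.mul_left _) (hq₂.mul_left _)
  · have h := abs_mul_sub_mul_le hx₁' hx₂' hy₂ hy₁
    refine le_trans (le_of_eq ?_) h
    congr 1
    unfold latX latY
    push_cast
    rw [← hdetR]
    field_simp
    ring
  · have h := abs_mul_sub_mul_le hy₁' hy₂' hy₂ hy₁
    refine le_trans (le_of_eq ?_) h
    congr 1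
    unfold latY
    push_cast
    field_simp
    ring
  · have h := abs_mul_sub_mul_le hx₁' hx₂' (hx₂.trans h1c) hx₁
    refine le_trans (le_of_eq ?_) h
    congr 1
    unfold latX
    push_cast
    field_simp
    ring
  · have h := abs_mul_sub_mul_le hy₁' hy₂' (hx₂.trans h1c) hx₁
    rw [abs_sub_comm] at h
    refine le_trans (le_of_eq ?_) h
    congr 1
    unfold latX latY
    push_cast
    rw [← hdetR]
    field_simp
    ring

open Finset in
/-- Quantitative recurrence: among sufficiently many times, two nearby ones have almost the same
renormalised lattice, together with the same residues. -/
theorem exists_isLatReturn {p : ℕ} (hp : 2 ≤ p) {c ε : ℝ} (hc : 0 < c) (hc1 : c ≤ 1) (R : ℕ)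
    (hε : 0 < ε) :
    ∃ C, 1 ≤ C ∧ ∀ u ∈ uniformlyBadlyApproximable p c, ∀ (e : ℝ) (B : ℕ) (G : Finset ℕ),
      G ⊆ range (2 * C * B) → 2 * C * B < 2 * #G → (∀ n ∈ G, (p : ℝ) ^ n ≤ e) →
      ∃ n ∈ G, ∃ d, 1 ≤ d ∧ d ≤ 2 * C ∧ ∃ w₁ w₂ w₃ w₄, IsLatReturn p R n d w₁ w₂ w₃ w₄ ∧
        |w₁ + u * w₃ - 1| ≤ ε ∧ |e ^ 2 * (w₃ * u ^ 2 + (w₁ - w₄) * u - w₂)| ≤ ε ∧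
        |w₃ / e ^ 2| ≤ ε ∧ |w₄ - u * w₃ - 1| ≤ ε := by
  set δ := ε / (2 / c + 1) with hδ
  have hδ0 : 0 < δ := by positivity
  have hδε : (2 / c + 1) * δ = ε := by rw [hδ]; field_simp
  have h1c : 1 ≤ 2 / c := by rw [le_div_iff₀ hc]; linarith
  set P : ℤ := (p : ℤ) ^ (2 * R) with hP
  have hP0 : 0 < P := by positivity
  set I : Finset ℤ := Icc (-⌈2 / c / δ⌉) ⌈2 / c / δ⌉ with hI
  set T : Finset (ℤ × ℤ × ℤ × ℤ × ℤ × ℤ) :=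
    Ico 0 P ×ˢ Ico 0 P ×ˢ I ×ˢ I ×ˢ I ×ˢ I with hT
  refine ⟨#T + 1, by omega, ?_⟩
  intro u hu e B G hG hcard hGe
  have hbasis : ∀ n, ∃ q₁ m₁ q₂ m₂ : ℤ, n ∈ G → (q₂ * m₁ - q₁ * m₂ = 1 ∧
      |latX p e n q₁| ≤ 1 ∧ |latY p u e n q₁ m₁| ≤ 1 ∧
      |latX p e n q₂| ≤ 1 ∧ |latY p u e n q₂ m₂| ≤ 2 / c) := by
    intro n
    by_cases hn : n ∈ G
    · obtain ⟨q₁, m₁, q₂, m₂, h⟩ := exists_reduced_basis hp hc hu (hGe n hn)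
      exact ⟨q₁, m₁, q₂, m₂, fun _ => h⟩
    · exact ⟨0, 0, 0, 0, fun h => absurd h hn⟩
  choose q₁ m₁ q₂ m₂ hb using hbasis
  obtain ⟨n, hn, m, hm, hnm, hmn, heq⟩ := exists_near_same_color (#T + 1) B G hG hcard T
    (by omega)
    (fun n => (q₁ n % P, q₂ n % P, ⌊latX p e n (q₁ n) / δ⌋, ⌊latY p u e n (q₁ n) (m₁ n) / δ⌋,
      ⌊latX p e n (q₂ n) / δ⌋, ⌊latY p u e n (q₂ n) (m₂ n) / δ⌋)) (by
      intro n hn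
      obtain ⟨_, h1, h2, h3, h4⟩ := hb n hn
      simp only [hT, mem_product, mem_Ico]
      exact ⟨⟨Int.emod_nonneg _ hP0.ne', Int.emod_lt_of_pos _ hP0⟩,
        ⟨Int.emod_nonneg _ hP0.ne', Int.emod_lt_of_pos _ hP0⟩,
        floor_div_mem_Icc hδ0 (h1.trans h1c), floor_div_mem_Icc hδ0 (h2.trans h1c),
        floor_div_mem_Icc hδ0 (h3.trans h1c), floor_div_mem_Icc hδ0 h4⟩)
  obtain ⟨d, rfl⟩ := Nat.exists_eq_add_of_le hnm.le
  simp only [Prod.mk.injEq] at heq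
  obtain ⟨e1, e2, e3, e4, e5, e6⟩ := heq
  obtain ⟨a0, a1, a2, a3, a4⟩ := hb n hn
  obtain ⟨b0, -, -, -, -⟩ := hb _ hm
  have he0 : 0 < e := lt_of_lt_of_le (by positivity) (hGe n hn)
  have hret := return_of_bases (R := R) hp he0 hc hc1 a0 b0 a1 a2 a3 a4
    (abs_sub_lt_of_floor_div_eq hδ0 e3.symm).le (abs_sub_lt_of_floor_div_eq hδ0 e4.symm).le
    (abs_sub_lt_of_floor_div_eq hδ0 e5.symm).le (abs_sub_lt_of_floor_div_eq hδ0 e6.symm).le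
    (Int.ModEq.dvd e1) (Int.ModEq.dvd e2)
  rw [hδε] at hret
  exact ⟨n, hn, d, by omega, by omega, hret⟩

theorem latX_return {p : ℕ} (hp : 2 ≤ p) {e : ℝ} (he : 0 < e) (v : ℝ) (n d k : ℕ)
    (q μ d₁ f : ℤ) :
    latX p e (n + (d + k)) (q * d₁ + μ * f) =
      latX p e (n + k) q * (d₁ * (p : ℝ) ^ d +
        v * ((p : ℝ) ^ (2 * k) * f * (p : ℝ) ^ (2 * n + d))) -
      latY p v e (n + k) q μ * ((p : ℝ) ^ (2 * k) * f * (p : ℝ) ^ (2 * n + d) / e ^ 2) := by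
  have hp0 : (0 : ℝ) < p := by positivity
  unfold latX latY
  push_cast
  simp only [pow_add, two_mul]
  field_simp
  ring

theorem latY_return {p : ℕ} (hp : 2 ≤ p) {e : ℝ} (he : 0 < e) (v : ℝ) (n d k : ℕ)
    (q μ d₁ d₂ d₄ f : ℤ) :
    latY p v e (n + (d + k)) (q * d₁ + μ * f) (q * d₂ * (p : ℤ) ^ (2 * k) + μ * d₄) =
      latX p e (n + k) q * (e ^ 2 * ((p : ℝ) ^ (2 * k) * f * (p : ℝ) ^ (2 * n + d) * v ^ 2 +
        (d₁ * (p : ℝ) ^ d - d₄ / (p : ℝ) ^ d) * v - d₂ / (p : ℝ) ^ (2 * n + d))) +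
      latY p v e (n + k) q μ *
        (d₄ / (p : ℝ) ^ d - v * ((p : ℝ) ^ (2 * k) * f * (p : ℝ) ^ (2 * n + d))) := by
  have hp0 : (0 : ℝ) < p := by positivity
  unfold latX latY
  push_cast
  simp only [pow_add, two_mul]
  field_simp
  ring

theorem abs_mul_le_of_near {x y x' y' R η : ℝ} (hR : 1 ≤ R) (hη : 0 ≤ η) (hy : |y| ≤ R)
    (hx' : |x'| ≤ R + 1) (hdx : |x' - x| ≤ 3 * η * R) (hdy : |y' - y| ≤ 2 * R * η) :
    |x' * y'| ≤ |x * y| + 7 * η * R ^ 2 := by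
  have h1 : x' * y' = x * y + (x' * (y' - y) + (x' - x) * y) := by ring
  rw [h1]
  refine (abs_add_le _ _).trans (add_le_add le_rfl ?_)
  refine (abs_add_le _ _).trans ?_
  rw [abs_mul, abs_mul]
  have a1 := mul_le_mul hx' hdy (abs_nonneg _) (by linarith)
  have a2 := mul_le_mul hdx hy (abs_nonneg _) (by positivity)
  have a4 : 0 ≤ R * η := by positivity
  have a5 := mul_nonneg a4 (sub_nonneg.2 hR)
  nlinarith

/-- A return transports good points to good points. -/
theorem LatGood.of_return {p : ℕ} (hp : 2 ≤ p) {R R' n d : ℕ} {w₁ w₂ w₃ w₄ c c' e v η r : ℝ}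
    (hret : IsLatReturn p R n d w₁ w₂ w₃ w₄) (he : 0 < e) (hR : 1 ≤ R) (hRR' : R + d + 1 ≤ R')
    (h₁ : |w₁ + v * w₃ - 1| ≤ η) (h₃ : |w₃ / e ^ 2| ≤ η) (h₄ : |w₄ - v * w₃ - 1| ≤ η)
    (hr : r = e ^ 2 * (w₃ * v ^ 2 + (w₁ - w₄) * v - w₂)) (hr1 : |r| ≤ 1)
    (hηR : 3 * η * R ≤ 1) (hcc' : c + 7 * η * R ^ 2 ≤ c') (hgood : LatGood p R' c' e n v) :
    LatGood p R c e n (v + r / e ^ 2) := by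
  obtain ⟨d₁, d₂, d₃, d₄, hdet, hdvd, e₁, e₂, e₃, e₄⟩ := hret
  intro k hk q μ hqμ hx hy
  have hp0 : (0 : ℝ) < p := by positivity
  have hpn : (0 : ℝ) < (p : ℝ) ^ n := by positivity
  have hpd : (0 : ℝ) < (p : ℝ) ^ d := by positivity
  have hpk : (0 : ℝ) < (p : ℝ) ^ k := by positivity
  obtain ⟨f, hf⟩ : (p : ℤ) ^ (2 * k) ∣ d₃ := (pow_dvd_pow _ (by omega)).trans hdvd
  have hfR : (d₃ : ℝ) = (p : ℝ) ^ (2 * k) * f := by exact_mod_cast hf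
  set q' : ℤ := q * d₁ + μ * f with hq'
  set μ' : ℤ := q * d₂ * (p : ℤ) ^ (2 * k) + μ * d₄ with hμ'
  have hne : q' ≠ 0 ∨ μ' ≠ 0 := by
    by_contra! h
    obtain ⟨h1, h2⟩ := h
    have hq0 : q = 0 := by
      rw [hf] at hdet
      rw [hq'] at h1
      rw [hμ'] at h2
      linear_combination -q * hdet + d₄ * h1 - f * h2
    have hμ0 : μ = 0 := by
      rw [hf] at hdet
      rw [hq'] at h1
      rw [hμ'] at h2
      linear_combination -μ * hdet - d₂ * (p : ℤ) ^ (2 * k) * h1 + d₁ * h2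
    rcases hqμ with h | h
    · exact h hq0
    · exact h hμ0
  set x := latX p e (n + k) q with hxdef
  rw [latY_add_div he, ← hxdef] at hy ⊢
  set y := latY p v e (n + k) q μ with hydef
  have hX : latX p e (n + (d + k)) q' = x * (w₁ + v * w₃) - y * (w₃ / e ^ 2) := by
    rw [e₁, e₃, hfR]
    exact latX_return hp he v n d k q μ d₁ f
  have hY : latY p v e (n + (d + k)) q' μ' = x * r + y * (w₄ - v * w₃) := by
    rw [hr, e₁, e₂, e₃, e₄, hfR]
    exact latY_return hp he v n d k q μ d₁ d₂ d₄ f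
  have hR1 : (1 : ℝ) ≤ R := by exact_mod_cast hR
  have hη0 : 0 ≤ η := (abs_nonneg _).trans h₁
  have hyR : |y| ≤ 2 * R := by
    have h1 : |y + r * x - r * x| ≤ |y + r * x| + |r * x| := abs_sub _ _
    rw [add_sub_cancel_right, abs_mul r x] at h1
    nlinarith [abs_nonneg x, abs_nonneg r]
  have hdx : |latX p e (n + (d + k)) q' - x| ≤ 3 * η * R := by
    have h1 : latX p e (n + (d + k)) q' - x =
        x * (w₁ + v * w₃ - 1) - y * (w₃ / e ^ 2) := by rw [hX]; ring
    rw [h1]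
    refine (abs_sub _ _).trans ?_
    rw [abs_mul, abs_mul]
    have a1 := mul_le_mul hx h₁ (abs_nonneg _) (by linarith)
    have a2 := mul_le_mul hyR h₃ (abs_nonneg _) (by linarith)
    linarith
  have hdy : |latY p v e (n + (d + k)) q' μ' - (y + r * x)| ≤ 2 * R * η := by
    have h1 : latY p v e (n + (d + k)) q' μ' - (y + r * x) = y * (w₄ - v * w₃ - 1) := by
      rw [hY]; ring
    rw [h1, abs_mul]
    exact mul_le_mul hyR h₄ (abs_nonneg _) (by linarith)
  have hRR : (R : ℝ) + 1 ≤ R' := by exact_mod_cast (by omega : R + 1 ≤ R')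
  have hXR : |latX p e (n + (d + k)) q'| ≤ R + 1 := by
    have := abs_sub_abs_le_abs_sub (latX p e (n + (d + k)) q') x
    linarith
  have hYR : |latY p v e (n + (d + k)) q' μ'| ≤ R + 1 := by
    have := abs_sub_abs_le_abs_sub (latY p v e (n + (d + k)) q' μ') (y + r * x)
    nlinarith
  have hmain := hgood (d + k) (by omega) q' μ' hne (hXR.trans hRR) (hYR.trans hRR)
  have hfin := abs_mul_le_of_near hR1 hη0 hy hXR hdx hdy
  linarith

/-- The quadratic polynomial of a return cannot be too degenerate. -/
theorem IsLatReturn.lower_bound {p : ℕ} (hp : 2 ≤ p) {R n d : ℕ} {w₁ w₂ w₃ w₄ e u ε : ℝ}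
    (hret : IsLatReturn p R n d w₁ w₂ w₃ w₄) (he : 0 < e) (hR : 1 ≤ R) (hd : 1 ≤ d)
    (hε : ε ≤ 1 / 4)
    (h₁ : |w₁ + u * w₃ - 1| ≤ ε) (h₂ : |e ^ 2 * (w₃ * u ^ 2 + (w₁ - w₄) * u - w₂)| ≤ ε)
    (h₄ : |w₄ - u * w₃ - 1| ≤ ε) :
    ((p : ℝ) ^ (2 * d))⁻¹ ≤ |w₁ - w₄ + 2 * u * w₃| + |w₃ / e ^ 2| := by
  obtain ⟨d₁, d₂, d₃, d₄, hdet, hdvd, e₁, e₂, e₃, e₄⟩ := hret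
  have hp0 : (0 : ℝ) < p := by positivity
  have hpd : (0 : ℝ) < (p : ℝ) ^ d := by positivity
  have hpn : (0 : ℝ) < (p : ℝ) ^ n := by positivity
  have hdetw : w₁ * w₄ - w₂ * w₃ = 1 := by
    have h : (d₁ : ℝ) * d₄ - d₂ * d₃ = 1 := by exact_mod_cast hdet
    rw [← h, e₁, e₂, e₃, e₄]
    field_simp
  have hT : (d₁ * (p : ℤ) ^ (2 * d) + d₄) ^ 2 - 4 * (p : ℤ) ^ (2 * d) ≠ 0 := by
    intro h
    have hpdvd3 : (p : ℤ) ∣ d₃ := (dvd_pow_self _ (by omega)).trans hdvd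
    have hpd1 : (p : ℤ) ∣ (p : ℤ) ^ (2 * d) := dvd_pow_self _ (by omega)
    have h1 : (p : ℤ) ∣ d₄ ^ 2 := by
      have h2 : d₄ ^ 2 = (p : ℤ) ^ (2 * d) *
          (4 - d₁ ^ 2 * (p : ℤ) ^ (2 * d) - 2 * d₁ * d₄) := by linear_combination h
      rw [h2]
      exact hpd1.mul_right _
    have h3 : IsCoprime d₄ (p : ℤ) := by
      obtain ⟨f, hf⟩ := hpdvd3
      exact ⟨d₁, -d₂ * f, by rw [hf] at hdet; linear_combination hdet⟩
    have h4 : IsUnit (p : ℤ) := (h3.pow_left (m := 2)).symm.isUnit_of_dvd' dvd_rfl h1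
    rw [Int.isUnit_iff] at h4
    omega
  have hT1 : (1 : ℝ) ≤ |((d₁ : ℝ) * (p : ℝ) ^ (2 * d) + d₄) ^ 2 - 4 * (p : ℝ) ^ (2 * d)| := by
    exact_mod_cast Int.one_le_abs hT
  have hdisc : (w₁ - w₄ + 2 * u * w₃) ^ 2 -
      4 * (e ^ 2 * (w₃ * u ^ 2 + (w₁ - w₄) * u - w₂)) * (w₃ / e ^ 2) =
      (((d₁ : ℝ) * (p : ℝ) ^ (2 * d) + d₄) ^ 2 - 4 * (p : ℝ) ^ (2 * d)) *
        ((p : ℝ) ^ (2 * d))⁻¹ := by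
    have h1 : (w₁ - w₄ + 2 * u * w₃) ^ 2 -
      4 * (e ^ 2 * (w₃ * u ^ 2 + (w₁ - w₄) * u - w₂)) * (w₃ / e ^ 2) = (w₁ + w₄) ^ 2 - 4 := by
      field_simp
      linear_combination -4 * hdetw
    rw [h1, e₁, e₄]
    field_simp
    ring
  set κ := w₁ - w₄ + 2 * u * w₃ with hκ
  set β := e ^ 2 * (w₃ * u ^ 2 + (w₁ - w₄) * u - w₂) with hβ
  set γ := w₃ / e ^ 2 with hγ
  have hκ1 : |κ| ≤ 1 := by
    have : κ = (w₁ + u * w₃ - 1) - (w₄ - u * w₃ - 1) := by rw [hκ]; ring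
    rw [this]
    refine (abs_sub _ _).trans ?_
    linarith
  have h5 : ((p : ℝ) ^ (2 * d))⁻¹ ≤ |κ ^ 2 - 4 * β * γ| := by
    rw [hdisc, abs_mul, abs_of_pos (a := ((p : ℝ) ^ (2 * d))⁻¹) (by positivity)]
    exact le_mul_of_one_le_left (by positivity) hT1
  refine h5.trans ((abs_sub _ _).trans ?_)
  rw [abs_pow, abs_mul, abs_mul, abs_of_pos (show (0 : ℝ) < 4 by norm_num)]
  nlinarith [abs_nonneg κ, abs_nonneg β, abs_nonneg γ]

open Finset in
/-- A decreasing chain of finite sets is stationary at most places. -/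
theorem sum_ne_succ_le_card {β : Type*} [DecidableEq β] (f : ℕ → Finset β)
    (hf : ∀ i, f (i + 1) ⊆ f i) (I : ℕ) :
    #{i ∈ range I | f i ≠ f (i + 1)} + #(f I) ≤ #(f 0) := by
  induction I with
  | zero => simp
  | succ I ih =>
    rw [range_add_one, filter_insert]
    split_ifs with h
    · rw [card_insert_of_notMem (by simp)]
      have := card_lt_card ((hf I).ssubset_of_ne h.symm)
      omega
    · have := card_le_card (hf I)
      omega

open Finset in
theorem exists_stable_index {α β : Type*} [DecidableEq β] (X : Finset α) (Φ : ℕ → α → Finset β)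
    (hΦ : ∀ i x, Φ (i + 1) x ⊆ Φ i x) {M : ℕ} (hM : ∀ x, #(Φ 0 x) ≤ M) {I : ℕ} (hI : 1 ≤ I) :
    ∃ i < I, I * #{x ∈ X | Φ i x ≠ Φ (i + 1) x} ≤ M * #X := by
  by_contra! h
  have h1 : ∑ i ∈ range I, #{x ∈ X | Φ i x ≠ Φ (i + 1) x} ≤ M * #X := by
    simp_rw [card_filter]
    rw [sum_comm, mul_comm]
    refine sum_le_card_nsmul _ _ _ fun x _ => ?_
    rw [← card_filter]
    have := sum_ne_succ_le_card (fun i => Φ i x) (fun i => hΦ i x) I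
    have := hM x
    omega
  have h2 : ∑ i ∈ range I, M * #X < ∑ i ∈ range I, I * #{x ∈ X | Φ i x ≠ Φ (i + 1) x} :=
    sum_lt_sum_of_nonempty ⟨0, mem_range.2 hI⟩ fun i hi => h i (mem_range.1 hi)
  rw [sum_const, card_range, smul_eq_mul, ← mul_sum] at h2
  exact absurd h1 (not_le.2 (lt_of_mul_lt_mul_left h2 (Nat.zero_le _)))

/-- Small positive steps cannot cross a gap. -/
theorem not_steps_across_gap {G : ℝ → Prop} {r h t₁ : ℝ} (h0 : G 0) (hr : 0 < r) (hrh : r ≤ h)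
    (ht₁ : 0 ≤ t₁ - h) (hgap : ∀ t, |t - t₁| < h → ¬ G t)
    (hstep : ∀ t, 0 ≤ t → t ≤ t₁ - h → G t → ∃ t', G t' ∧ |t' - t - r| ≤ r / 2) : False := by
  have key : ∀ n : ℕ, ∃ t, G t ∧ n * (r / 2) ≤ t ∧ t ≤ t₁ - h := by
    intro n
    induction n with
    | zero => exact ⟨0, h0, by simp, ht₁⟩
    | succ n ih =>
      obtain ⟨t, hG, h1, h2⟩ := ih
      have hn : 0 ≤ n * (r / 2) := by positivity
      obtain ⟨t', hG', h3⟩ := hstep t (hn.trans h1) h2 hG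
      rw [abs_le] at h3
      refine ⟨t', hG', ?_, ?_⟩
      · push_cast; linarith
      · by_contra! h4
        refine hgap t' ?_ hG'
        rw [abs_lt]
        constructor <;> linarith
  obtain ⟨n, hn⟩ := exists_nat_gt ((t₁ - h) / (r / 2))
  obtain ⟨t, -, h1, h2⟩ := key n
  rw [div_lt_iff₀ (by positivity)] at hn
  linarith

theorem not_steps_across_gaps {G : ℝ → Prop} {r h : ℝ} (h0 : G 0) (hr : r ≠ 0) (hrh : |r| ≤ h)
    (hh : h ≤ 1 / 4)
    (hgap : ∀ t₀ : ℝ, |t₀| = 1 / 2 → ∃ t₁, |t₁ - t₀| ≤ 1 / 4 ∧ ∀ t, |t - t₁| < h → ¬ G t)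
    (hstep : ∀ t, |t| ≤ 3 / 4 → G t → ∃ t', G t' ∧ |t' - t - r| ≤ |r| / 2) : False := by
  rcases hr.lt_or_gt with hr | hr
  · obtain ⟨t₁, h1, h2⟩ := hgap (-(1 / 2)) (by rw [abs_neg]; norm_num)
    rw [abs_le] at h1
    rw [abs_of_neg hr] at hrh hstep
    refine not_steps_across_gap (G := fun t => G (-t)) (r := -r) (h := h) (t₁ := -t₁)
      (by simpa using h0) (by linarith) hrh (by linarith) ?_ ?_
    · intro t ht
      exact h2 _ (by rw [← abs_neg]; convert ht using 2; ring)
    · intro t h3 h4 hG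
      obtain ⟨t', hG', h5⟩ := hstep (-t) (by rw [abs_le]; constructor <;> linarith) hG
      refine ⟨-t', by simpa using hG', ?_⟩
      rw [← abs_neg]
      convert h5 using 2
      ring
  · obtain ⟨t₁, h1, h2⟩ := hgap (1 / 2) (by norm_num)
    rw [abs_le] at h1
    rw [abs_of_pos hr] at hrh hstep
    exact not_steps_across_gap h0 hr hrh (by linarith) h2 fun t h3 h4 hG =>
      hstep t (by rw [abs_le]; constructor <;> linarith) hG

open Finset in
/-- Selection of a pair of scales avoiding two sparse sets, at which a quadratic expression has
prescribed size. -/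
theorem exists_good_scale {b r k g : ℝ} {W V : ℕ} (hb : 1 < b) (hr : 0 < r) (hk : 0 ≤ k)
    (hg : 0 ≤ g) (hW : 2 ≤ W) (hlo : k * b ^ (2 * W) + g * b ^ (2 * (2 * W)) < r)
    (hhi : r ≤ k * b ^ V + g * b ^ (2 * V)) (BC BD : ℕ → Prop)
    [DecidablePred BC] [DecidablePred BD]
    (hBC : ∀ τ ≤ 2 * V + 3, 100 * #{σ ∈ range τ | BC σ} ≤ τ)
    (hBD : ∀ τ ≤ 2 * V + 3, 100 * #{σ ∈ range τ | BD σ} ≤ τ) :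
    ∃ σ ι, 1 ≤ ι ∧ ι ≤ σ ∧ σ ≤ 2 * V ∧ ¬ BC σ ∧ ¬ BD ι ∧
      k * b ^ σ + g * b ^ (2 * σ) < r * b ^ ι ∧ r * b ^ ι ≤ b * (k * b ^ σ + g * b ^ (2 * σ)) ∧
      g * b ^ σ * b ^ W ≤ r * b ^ 2 := by
  classical
  have hb0 : 0 < b := by linarith
  set F : ℕ → ℝ := fun σ => k * b ^ σ + g * b ^ (2 * σ) with hF
  have hFmono : Monotone F := by
    intro x y hxy
    simp only [hF]
    gcongr <;> exact hb.le
  have hFsucc : ∀ σ, b * F σ ≤ F (σ + 1) := by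
    intro σ
    have h1 : b ^ (2 * (σ + 1)) = b ^ (2 * σ) * b ^ 2 := by rw [← pow_add]; ring_nf
    have h2 : g * b ^ (2 * σ) * b ≤ g * b ^ (2 * σ) * b ^ 2 := by
      gcongr
      nlinarith
    simp only [hF]
    rw [h1, pow_succ b σ]
    nlinarith
  have hFadd : ∀ σ n, F (σ + n) ≤ F σ * b ^ (2 * n) := by
    intro σ n
    have h1 : b ^ (2 * (σ + n)) = b ^ (2 * σ) * b ^ (2 * n) := by rw [← pow_add]; ring_nf
    have h2 : b ^ n ≤ b ^ (2 * n) := pow_le_pow_right₀ hb.le (by omega)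
    have h3 : k * b ^ σ * b ^ n ≤ k * b ^ σ * b ^ (2 * n) := by gcongr
    simp only [hF]
    rw [h1, pow_add b σ]
    nlinarith
  have hex : ∃ σ, r ≤ F σ := ⟨V, hhi⟩
  set σ₀ := Nat.find hex with hσ₀
  have hσ₀r : r ≤ F σ₀ := Nat.find_spec hex
  have hσ₀W : 2 * W < σ₀ := by
    by_contra! h
    exact absurd (hσ₀r.trans (hFmono h)) (not_le.2 hlo)
  have hσ₀V : σ₀ ≤ V := Nat.find_min' hex hhi
  have hpred : F (σ₀ - 1) < r := not_le.1 (Nat.find_min hex (by omega))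
  have hιex : ∀ σ, ∃ ι, F σ < r * b ^ ι := by
    intro σ
    obtain ⟨n, hn⟩ := pow_unbounded_of_one_lt (F σ / r) hb
    exact ⟨n, by rwa [div_lt_iff₀' hr] at hn⟩
  set ι : ℕ → ℕ := fun σ => Nat.find (hιex σ) with hι
  have hι1 : ∀ σ, F σ < r * b ^ (ι σ) := fun σ => Nat.find_spec (hιex σ)
  have hιpos : ∀ σ, σ₀ ≤ σ → 1 ≤ ι σ := by
    intro σ h
    by_contra! h0
    have h1 := hι1 σ
    rw [Nat.lt_one_iff.1 h0, pow_zero, mul_one] at h1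
    exact absurd (hσ₀r.trans (hFmono h)) (not_le.2 h1)
  have hιle : ∀ σ, σ₀ ≤ σ → r * b ^ (ι σ) ≤ b * F σ := by
    intro σ h
    have h1 := hιpos σ h
    have h2 : ¬ F σ < r * b ^ (ι σ - 1) := Nat.find_min (hιex σ) (by simp only [hι] at h1 ⊢; omega)
    have h3 : b ^ (ι σ) = b ^ (ι σ - 1) * b := by rw [← pow_succ]; congr 1; omega
    rw [h3]
    nlinarith
  have hιlt : ∀ σ, σ₀ ≤ σ → ι σ < ι (σ + 1) := by
    intro σ h
    have h1 : r * b ^ (ι σ) < r * b ^ (ι (σ + 1)) :=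
      ((hιle σ h).trans (hFsucc σ)).trans_lt (hι1 _)
    exact (pow_lt_pow_iff_right₀ hb).1 (lt_of_mul_lt_mul_left h1 hr.le)
  have hιub : ∀ σ, σ₀ ≤ σ → ι σ ≤ 2 * (σ - σ₀) + 2 := by
    intro σ h
    refine Nat.find_min' (hιex σ) ?_
    have h1 := hFadd (σ₀ - 1) (σ - σ₀ + 1)
    rw [show σ₀ - 1 + (σ - σ₀ + 1) = σ by omega,
      show 2 * (σ - σ₀ + 1) = 2 * (σ - σ₀) + 2 by ring] at h1
    refine h1.trans_lt ?_
    gcongr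
  set w := σ₀ / 2 with hw
  have hinj : Set.InjOn ι (Set.Ici σ₀) := by
    have : StrictMonoOn ι (Set.Ici σ₀) := by
      refine strictMonoOn_of_lt_succ Set.ordConnected_Ici ?_
      intro a _ ha _
      exact hιlt a ha
    exact this.injOn
  obtain ⟨σ, hσ, hbad⟩ : ∃ σ ∈ Icc σ₀ (σ₀ + w), ¬ (BC σ ∨ BD (ι σ)) := by
    by_contra! h
    have h1 : Icc σ₀ (σ₀ + w) ⊆ {σ ∈ range (σ₀ + w + 1) | BC σ} ∪
        {σ ∈ Icc σ₀ (σ₀ + w) | BD (ι σ)} := by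
      intro σ hσ
      have := h σ hσ
      simp only [mem_union, mem_filter, mem_range, mem_Icc] at hσ ⊢
      rcases this with h | h
      · exact Or.inl ⟨by omega, h⟩
      · exact Or.inr ⟨hσ, h⟩
    have h2 : #{σ ∈ Icc σ₀ (σ₀ + w) | BD (ι σ)} ≤ #{σ ∈ range (2 * w + 3) | BD σ} := by
      refine card_le_card_of_injOn ι ?_ ?_
      · intro σ hσ
        simp only [coe_filter, mem_Icc, Set.mem_ofPred_eq, mem_range] at hσ ⊢
        have := hιub σ hσ.1.1
        exact ⟨by omega, hσ.2⟩
      · refine hinj.mono ?_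
        intro σ hσ
        simp only [coe_filter, mem_Icc, Set.mem_ofPred_eq] at hσ
        exact hσ.1.1
    have h3 := (card_le_card h1).trans (card_union_le _ _)
    rw [Nat.card_Icc] at h3
    have h4 := hBC (σ₀ + w + 1) (by omega)
    have h5 := hBD (2 * w + 3) (by omega)
    omega
  rw [mem_Icc] at hσ
  rw [not_or] at hbad
  have hub := hιub σ hσ.1
  refine ⟨σ, ι σ, hιpos σ hσ.1, by omega, by omega, hbad.1, hbad.2, hι1 σ, hιle σ hσ.1, ?_⟩
  have h1 : g * b ^ (2 * (σ₀ - 1)) ≤ r := by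
    have h2 : 0 ≤ k * b ^ (σ₀ - 1) := by positivity
    simp only [hF] at hpred
    linarith
  calc g * b ^ σ * b ^ W = g * b ^ (σ + W) := by rw [pow_add]; ring
    _ ≤ g * b ^ (2 * (σ₀ - 1) + 2) :=
        mul_le_mul_of_nonneg_left (pow_le_pow_right₀ hb.le (by omega)) hg
    _ = g * b ^ (2 * (σ₀ - 1)) * b ^ 2 := by rw [pow_add]; ring
    _ ≤ r * b ^ 2 := by gcongr

open Finset in
/-- Reversal of a window ending at `i`. -/
theorem card_range_filter_sub_le {i τ : ℕ} (P : ℕ → Prop) [DecidablePred P] (hτ : τ ≤ i + 1) :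
    #{σ ∈ range τ | P (i - σ)} ≤ #{j ∈ Ico (i + 1 - τ) (i + 1) | P j} := by
  refine card_le_card_of_injOn (fun σ => i - σ) ?_ ?_
  · intro σ hσ
    simp only [coe_filter, mem_range, Set.mem_ofPred_eq, mem_Ico] at hσ ⊢
    exact ⟨by omega, hσ.2⟩
  · intro x hx y hy hxy
    simp only [coe_filter, mem_range, Set.mem_ofPred_eq] at hx hy hxy
    omega

open Finset in
open scoped Classical in
/-- If `S` is not concentrated near `s` and `Q` is rare near `s`, then there are three separated
points of `S` near `s` outside `Q`. -/
theorem exists_three_separated_of_not_cellConcentrated {S : Finset ℝ} {k L : ℕ} {s : ℝ}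
    (hs : ¬ CellConcentrated S k L s) (Q : ℝ → Prop)
    (hQ : 8 * #{u ∈ {u ∈ S | Q u} | quadCell k u = quadCell k s} ≤
      #{u ∈ S | quadCell k u = quadCell k s}) :
    ∃ x₁ x₂ x₃, (∀ x ∈ ({x₁, x₂, x₃} : Set ℝ), x ∈ S ∧ ¬ Q x ∧ quadCell k x = quadCell k s) ∧
      x₁ + ((4 : ℝ) ^ (k + L))⁻¹ ≤ x₂ ∧ x₂ + ((4 : ℝ) ^ (k + L))⁻¹ ≤ x₃ := by
  set X := {u ∈ S | ¬ Q u ∧ quadCell k u = quadCell k s} with hX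
  have hcard : 5 ≤ #(X.image (quadCell (k + L))) := by
    by_contra! h
    refine hs ⟨X.image (quadCell (k + L)), by omega, ?_⟩
    have h1 : {u ∈ S | quadCell k u = quadCell k s} ⊆
        {u ∈ {u ∈ S | Q u} | quadCell k u = quadCell k s} ∪
        {u ∈ S | quadCell k u = quadCell k s ∧
          quadCell (k + L) u ∈ X.image (quadCell (k + L))} := by
      intro u hu
      rw [mem_filter] at hu
      by_cases hq : Q u
      · exact mem_union_left _ (by simp [hu, hq])
      · refine mem_union_right _ (mem_filter.2 ⟨hu.1, hu.2, mem_image_of_mem _ ?_⟩)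
        exact mem_filter.2 ⟨hu.1, hq, hu.2⟩
    have h2 := (card_le_card h1).trans (card_union_le _ _)
    refine le_trans (le_of_eq ?_) (by omega : 7 * #{u ∈ S | quadCell k u = quadCell k s} ≤ _)
    congr!
  obtain ⟨a, ha, b, hb, c, hc, hab, hbc⟩ := exists_three_separated _ hcard
  obtain ⟨x₁, hx₁, rfl⟩ := mem_image.1 ha
  obtain ⟨x₂, hx₂, rfl⟩ := mem_image.1 hb
  obtain ⟨x₃, hx₃, rfl⟩ := mem_image.1 hc
  refine ⟨x₁, x₂, x₃, ?_, inv_le_sub_of_quadCell_add_two_le hab,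
    inv_le_sub_of_quadCell_add_two_le hbc⟩
  rintro x (rfl | rfl | rfl)
  · exact mem_filter.1 hx₁
  · exact mem_filter.1 hx₂
  · exact mem_filter.1 hx₃

/-- A nontrivial approximate return is incompatible with stability of the set of good points. -/
theorem false_of_return_of_stable {p : ℕ} (hp : 2 ≤ p) {R R' n d : ℕ}
    {w w₁ w₂ w₃ w₄ c c' e u η ρ α : ℝ} (hw : 0 < w) (hw1 : w ≤ 1)
    (hu : u ∈ uniformlyBadlyApproximable p (w ^ 2))
    (hret : IsLatReturn p R n d w₁ w₂ w₃ w₄) (he : R' * (p : ℝ) ^ (n + R') < e) (hR : 1 ≤ R)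
    (hRR' : R + d + 1 ≤ R') (hwR : 4 / w ≤ R') (hc'w : c' ≤ w ^ 2) (hwc' : w ^ 2 / 4 < c')
    (hηR : 3 * η * R ≤ 1) (hcc' : c + 7 * η * R ^ 2 ≤ c') (hρ : 0 < ρ) (hα : α ≤ ρ / 4)
    (h₁ : ∀ t : ℝ, |t| ≤ 1 → |w₁ + (u + t / e ^ 2) * w₃ - 1| ≤ η)
    (h₄ : ∀ t : ℝ, |t| ≤ 1 → |w₄ - (u + t / e ^ 2) * w₃ - 1| ≤ η) (h₃ : |w₃ / e ^ 2| ≤ η)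
    {r : ℝ → ℝ} (hr : ∀ t, r t = e ^ 2 * (w₃ * (u + t / e ^ 2) ^ 2 +
      (w₁ - w₄) * (u + t / e ^ 2) - w₂))
    (hr0 : ρ ≤ |r 0|) (hr1 : |r 0| ≤ w ^ 4 / 64) (hrt : ∀ t, |t| ≤ 1 → |r t - r 0| ≤ ρ / 4)
    (hstable : ∀ t : ℝ, |t| < 1 → LatGood p R c e n (u + t / e ^ 2) →
      ∃ t', |t' - t| ≤ α ∧ LatGood p R' c' e n (u + t' / e ^ 2)) : False := by
  have hp1 : (1 : ℝ) ≤ p := by exact_mod_cast (by omega : 1 ≤ p)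
  have hR'1 : (1 : ℝ) ≤ R' := by exact_mod_cast (by omega : 1 ≤ R')
  have hpe : (p : ℝ) ^ n ≤ e := by
    have h1 : (p : ℝ) ^ n ≤ (p : ℝ) ^ (n + R') := pow_le_pow_right₀ hp1 (by omega)
    have h2 : (0 : ℝ) < (p : ℝ) ^ n := by positivity
    nlinarith
  have he0 : 0 < e := lt_of_lt_of_le (by positivity) hpe
  have hw4 : w ^ 4 ≤ 1 := pow_le_one₀ hw.le hw1
  refine not_steps_across_gaps (G := fun t => LatGood p R' c' e n (u + t / e ^ 2)) (r := r 0)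
    (h := w ^ 4 / 64) ?_ ?_ hr1 (by linarith) ?_ ?_
  · have : LatGood p R' c' e n u := latGood_of_mem hp he hc'w hu
    simpa using this
  · exact abs_pos.1 (hρ.trans_le hr0)
  · intro t₀ ht₀
    exact exists_gap hp hw hw1 hu hpe ht₀ hwR hwc'
  · intro t ht hG
    have ht1 : |t| ≤ 1 := by linarith
    have h5 := hrt t ht1
    have h6 : |r t| ≤ 1 / 8 := by
      have := abs_sub_abs_le_abs_sub (r t) (r 0)
      linarith
    have hgood := LatGood.of_return hp hret he0 hR hRR' (h₁ t ht1) h₃ (h₄ t ht1) (hr t)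
      (by linarith) hηR hcc' hG
    rw [add_assoc, ← add_div] at hgood
    obtain ⟨t', h7, h8⟩ := hstable (t + r t) (by
      have := abs_add_le t (r t)
      linarith) hgood
    refine ⟨t', h8, ?_⟩
    have h9 : t' - t - r 0 = (t' - (t + r t)) + (r t - r 0) := by ring
    rw [h9]
    have := abs_add_le (t' - (t + r t)) (r t - r 0)
    linarith

theorem abs_mul_le_of_abs_le_one {a x A : ℝ} (ha : |a| ≤ A) (hx : |x| ≤ 1) : |a * x| ≤ A := by
  rw [abs_mul]
  exact (mul_le_of_le_one_right (abs_nonneg _) hx).trans ha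

/-- Size of the data of a return at a nearby point and a larger scale. -/
theorem return_bounds {w₁ w₂ w₃ w₄ E e f u v x X Y ε θ t : ℝ} (hE : 0 < E) (he : 0 < e)
    (hfX : E ^ 2 = f ^ 2 * X) (heY : E ^ 2 = e ^ 2 * Y) (hY : 0 < Y) (hYX : Y ≤ X)
    (hx : x = (v - u) * f ^ 2) (hx1 : |x| ≤ 1) (ht : |t| ≤ 1)
    (h₁ : |w₁ + u * w₃ - 1| ≤ ε) (h₄ : |w₄ - u * w₃ - 1| ≤ ε) (hθ : |w₃ / E ^ 2| * X ≤ θ) :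
    |w₁ + (v + t / e ^ 2) * w₃ - 1| ≤ ε + 2 * θ ∧ |w₄ - (v + t / e ^ 2) * w₃ - 1| ≤ ε + 2 * θ ∧
      |w₃ / e ^ 2| ≤ θ ∧
      |e ^ 2 * (w₃ * (v + t / e ^ 2) ^ 2 + (w₁ - w₄) * (v + t / e ^ 2) - w₂) -
        e ^ 2 * (w₃ * v ^ 2 + (w₁ - w₄) * v - w₂)| ≤ 2 * ε + 3 * θ := by
  set γ := w₃ / E ^ 2 with hγ
  have hw₃ : w₃ = γ * E ^ 2 := by rw [hγ]; field_simp
  have hX : 0 < X := hY.trans_le hYX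
  have hw₃e : w₃ / e ^ 2 = γ * Y := by rw [hw₃, heY]; field_simp
  have hw₃f : w₃ * (v - u) = γ * X * x := by rw [hw₃, hx, hfX]; ring
  have hγY : |γ * Y| ≤ θ := by
    rw [abs_mul, abs_of_pos hY]
    exact (mul_le_mul_of_nonneg_left hYX (abs_nonneg _)).trans hθ
  have hγX : |γ * X| ≤ θ := by rwa [abs_mul, abs_of_pos hX]
  have hθ0 : 0 ≤ θ := (abs_nonneg _).trans hγX
  have a1 : |γ * X * x| ≤ θ := abs_mul_le_of_abs_le_one hγX hx1
  have a2 : |γ * Y * t| ≤ θ := abs_mul_le_of_abs_le_one hγY ht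
  have a3 : |γ * Y * t * t| ≤ θ := abs_mul_le_of_abs_le_one a2 ht
  have a4 : |γ * X * x * t| ≤ θ := abs_mul_le_of_abs_le_one a1 ht
  have hvu : (v + t / e ^ 2) * w₃ = u * w₃ + γ * X * x + γ * Y * t := by
    linear_combination hw₃f + t * hw₃e
  refine ⟨?_, ?_, ?_, ?_⟩
  · rw [hvu]
    rw [abs_le] at *
    constructor <;> linarith
  · rw [hvu]
    rw [abs_le] at *
    constructor <;> linarith
  · rwa [hw₃e]
  · have hdiff : e ^ 2 * (w₃ * (v + t / e ^ 2) ^ 2 + (w₁ - w₄) * (v + t / e ^ 2) - w₂) -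
        e ^ 2 * (w₃ * v ^ 2 + (w₁ - w₄) * v - w₂) =
        ((w₁ + u * w₃ - 1) * t - (w₄ - u * w₃ - 1) * t) + 2 * (γ * X * x * t) +
          γ * Y * t * t := by
      rw [← hw₃f, ← hw₃e]
      field_simp
      ring
    have b1 : |(w₁ + u * w₃ - 1) * t| ≤ ε := abs_mul_le_of_abs_le_one h₁ ht
    have b4 : |(w₄ - u * w₃ - 1) * t| ≤ ε := abs_mul_le_of_abs_le_one h₄ ht
    rw [hdiff]
    rw [abs_le] at *
    constructor <;> linarith

theorem return_value {w₁ w₂ w₃ w₄ E e f u v x X Y : ℝ} (hE : 0 < E) (he : 0 < e)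
    (hf : 0 < f) (hfX : E ^ 2 = f ^ 2 * X) (heY : E ^ 2 = e ^ 2 * Y) (hY : 0 < Y)
    (hx : x = (v - u) * f ^ 2) :
    e ^ 2 * (w₃ * v ^ 2 + (w₁ - w₄) * v - w₂) =
      E ^ 2 * (w₃ * u ^ 2 + (w₁ - w₄) * u - w₂) / Y + (w₁ - w₄ + 2 * u * w₃) * X / Y * x +
        w₃ / E ^ 2 * X ^ 2 / Y * x ^ 2 := by
  have hX : X = E ^ 2 / f ^ 2 := by rw [hfX]; field_simp
  have hY' : Y = E ^ 2 / e ^ 2 := by rw [heY]; field_simp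
  rw [hx, hX, hY']
  field_simp
  ring

theorem two_pow_sq_eq (k L : ℕ) {i σ : ℕ} (h : σ ≤ i) :
    ((2 : ℝ) ^ (k + L * i)) ^ 2 = ((2 : ℝ) ^ (k + L * (i - σ))) ^ 2 * ((4 : ℝ) ^ L) ^ σ := by
  obtain ⟨j, rfl⟩ := Nat.exists_eq_add_of_le h
  rw [Nat.add_sub_cancel_left, show (4 : ℝ) = 2 ^ 2 by norm_num]
  simp only [← pow_mul, ← pow_add]
  congr 1
  ring

theorem two_pow_sq (k : ℕ) : ((2 : ℝ) ^ k) ^ 2 = 4 ^ k := by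
  rw [← pow_mul, mul_comm, pow_mul]
  norm_num

/-- Among three separated points, a quadratic polynomial is large at one of them. -/
theorem exists_mem_abs_quadratic_ge {β A B m δ ρ x₁ x₂ x₃ : ℝ} (hm : m ≤ |A| + |B|)
    (h₁ : |x₁| ≤ 1) (h₂ : |x₂| ≤ 1) (h₁₂ : x₁ + δ ≤ x₂) (h₂₃ : x₂ + δ ≤ x₃) (hδ : 0 < δ)
    (hδ1 : δ ≤ 1) (hρ : 8 * ρ < m * δ ^ 2) :
    ρ ≤ |β + A * x₁ + B * x₁ ^ 2| ∨ ρ ≤ |β + A * x₂ + B * x₂ ^ 2| ∨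
      ρ ≤ |β + A * x₃ + B * x₃ ^ 2| := by
  by_contra! h
  exact absurd (exists_abs_quadratic_ge hm h₁ h₂ h₁₂ h₂₃ hδ hδ1 hρ h.1 h.2.1) (not_le.2 h.2.2)

/-- Choice of the small parameters. -/
theorem exists_small_parameters {b r ρ Δ : ℝ} (R : ℕ) (hb : 2 ≤ b) (hr : 0 < r) (hρ : 0 < ρ)
    (hΔ : 0 < Δ) :
    ∃ (η ε : ℝ) (W : ℕ), 0 < η ∧ 5 * η ≤ ρ ∧ 3 * η * R ≤ 1 ∧ 7 * η * R ^ 2 ≤ Δ ∧ 0 < ε ∧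
      ε ≤ η / 4 ∧ ε ≤ 1 / 4 ∧ 2 ≤ W ∧ r * b ^ 2 ≤ η / 4 * b ^ W ∧ 3 * ε * b ^ (2 * (2 * W)) < r := by
  have hb0 : 0 < b := by linarith
  set η := min (ρ / 5) (min (1 / (3 * (R + 1))) (Δ / (7 * (R + 1) ^ 2))) with hη
  have hη0 : 0 < η := by positivity
  have h1 : η ≤ ρ / 5 := min_le_left _ _
  have h2 : η ≤ 1 / (3 * (R + 1)) := (min_le_right _ _).trans (min_le_left _ _)
  have h3 : η ≤ Δ / (7 * (R + 1) ^ 2) := (min_le_right _ _).trans (min_le_right _ _)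
  rw [le_div_iff₀ (by positivity)] at h2 h3
  obtain ⟨W₀, hW₀⟩ := pow_unbounded_of_one_lt (r * b ^ 2 / (η / 4)) (by linarith : 1 < b)
  set W := W₀ + 2 with hW
  have hbW : r * b ^ 2 ≤ η / 4 * b ^ W := by
    rw [div_lt_iff₀' (by positivity)] at hW₀
    refine hW₀.le.trans ?_
    have : b ^ W₀ ≤ b ^ W := pow_le_pow_right₀ (by linarith) (by omega)
    gcongr
  set ε := min (min (η / 4) (1 / 4)) (r / (4 * b ^ (2 * (2 * W)))) with hε
  have hε0 : 0 < ε := by positivity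
  have h4 : ε ≤ r / (4 * b ^ (2 * (2 * W))) := min_le_right _ _
  rw [le_div_iff₀ (by positivity)] at h4
  refine ⟨η, ε, W, hη0, by linarith, ?_, ?_, hε0, (min_le_left _ _).trans (min_le_left _ _),
    (min_le_left _ _).trans (min_le_right _ _), by omega, hbW, ?_⟩
  · nlinarith [(Nat.cast_nonneg R : (0 : ℝ) ≤ R)]
  · have hR : (0 : ℝ) ≤ R := Nat.cast_nonneg R
    have : 0 ≤ η * R := by positivity
    nlinarith
  · have : 0 < ε * b ^ (2 * (2 * W)) := by positivity
    nlinarith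

/-- A return whose quadratic polynomial has the right size at three separated points is
incompatible with stability of the sets of good points attached to them. -/
theorem false_of_return_of_separated {p : ℕ} (hp : 2 ≤ p) {R R' n d : ℕ}
    {w w₁ w₂ w₃ w₄ c c' E e f b X Y s x₁ x₂ x₃ r ρ η ε α : ℝ} (hw : 0 < w) (hw1 : w ≤ 1)
    (hret : IsLatReturn p R n d w₁ w₂ w₃ w₄) (he : R' * (p : ℝ) ^ (n + R') < e) (hR : 1 ≤ R)
    (hRR' : R + d + 1 ≤ R') (hwR : 4 / w ≤ R') (hc'w : c' ≤ w ^ 2) (hwc' : w ^ 2 / 4 < c')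
    (hηR : 3 * η * R ≤ 1) (hcc' : c + 7 * η * R ^ 2 ≤ c') (hr : w ^ 4 / 64 = 2 * r)
    (hb : 1 ≤ b) (hρ : 16 * ρ * b ^ 3 = r) (hρ0 : 0 < ρ) (hα : α ≤ ρ / 4)
    (hηρ : 5 * η ≤ ρ) (hη0 : 0 < η) (hεη : ε ≤ η / 4) (hE0 : 0 < E) (he0 : 0 < e)
    (hf0 : 0 < f) (hfX : E ^ 2 = f ^ 2 * X) (heY : E ^ 2 = e ^ 2 * Y) (hY1 : 1 ≤ Y)
    (hYX : Y ≤ X) (h₁ : |w₁ + s * w₃ - 1| ≤ ε)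
    (hβ : |E ^ 2 * (w₃ * s ^ 2 + (w₁ - w₄) * s - w₂)| ≤ ε) (h₄ : |w₄ - s * w₃ - 1| ≤ ε)
    (hup : |w₁ - w₄ + 2 * s * w₃| * X + |w₃ / E ^ 2| * X ^ 2 < r * Y)
    (hdown : r * Y ≤ b * (|w₁ - w₄ + 2 * s * w₃| * X + |w₃ / E ^ 2| * X ^ 2))
    (hθ : |w₃ / E ^ 2| * X ≤ η / 4)
    (hx₁₂ : x₁ + (f ^ 2 * b)⁻¹ ≤ x₂) (hx₂₃ : x₂ + (f ^ 2 * b)⁻¹ ≤ x₃)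
    (hx : ∀ x ∈ ({x₁, x₂, x₃} : Set ℝ), x ∈ uniformlyBadlyApproximable p (w ^ 2) ∧
      |(x - s) * f ^ 2| ≤ 1 ∧ ∀ t : ℝ, |t| < 1 → LatGood p R c e n (x + t / e ^ 2) →
        ∃ t', |t' - t| ≤ α ∧ LatGood p R' c' e n (x + t' / e ^ 2)) : False := by
  obtain ⟨β, hβdef⟩ : ∃ β, β = E ^ 2 * (w₃ * s ^ 2 + (w₁ - w₄) * s - w₂) := ⟨_, rfl⟩
  obtain ⟨κ, hκdef⟩ : ∃ κ, κ = w₁ - w₄ + 2 * s * w₃ := ⟨_, rfl⟩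
  obtain ⟨γ, hγdef⟩ : ∃ γ, γ = w₃ / E ^ 2 := ⟨_, rfl⟩
  have hb0 : 0 < b := by linarith
  have hY0 : 0 < Y := by linarith
  have hX0 : 0 < X := by linarith
  have hsep : ∀ x y : ℝ, x + (f ^ 2 * b)⁻¹ ≤ y →
      (x - s) * f ^ 2 + 1 / b ≤ (y - s) * f ^ 2 := by
    intro x y hxy
    have h1 : 1 / b = (f ^ 2 * b)⁻¹ * f ^ 2 := by field_simp
    rw [h1]
    nlinarith [pow_pos hf0 2]
  have hquad := exists_mem_abs_quadratic_ge (β := β / Y) (A := κ * X / Y) (B := γ * X ^ 2 / Y)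
    (m := r / b) (δ := 1 / b) (ρ := ρ) (by
      rw [abs_div, abs_div, abs_mul, abs_mul, abs_of_pos hX0, abs_of_pos hY0,
        abs_of_pos (by positivity : 0 < X ^ 2), ← add_div, div_le_div_iff₀ hb0 hY0, hκdef, hγdef]
      linarith) (hx x₁ (by simp)).2.1 (hx x₂ (by simp)).2.1 (hsep _ _ hx₁₂) (hsep _ _ hx₂₃)
    (by positivity) (by rw [div_le_one hb0]; linarith) (by
      have h1 : r / b * (1 / b) ^ 2 = 16 * ρ := by rw [← hρ]; field_simp
      rw [h1]
      linarith)
  obtain ⟨x, hxm, hxρ⟩ : ∃ x ∈ ({x₁, x₂, x₃} : Set ℝ),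
      ρ ≤ |β / Y + κ * X / Y * ((x - s) * f ^ 2) + γ * X ^ 2 / Y * ((x - s) * f ^ 2) ^ 2| := by
    rcases hquad with h | h | h
    · exact ⟨x₁, by simp, h⟩
    · exact ⟨x₂, by simp, h⟩
    · exact ⟨x₃, by simp, h⟩
  obtain ⟨hxK, hx1, hxstable⟩ := hx x hxm
  have hval := return_value (w₁ := w₁) (w₂ := w₂) (w₃ := w₃) (w₄ := w₄) hE0 he0 hf0 hfX heY hY0
    (rfl : (x - s) * f ^ 2 = (x - s) * f ^ 2)
  rw [← hβdef, ← hκdef, ← hγdef] at hval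
  have hbd := fun t ht => return_bounds (w₂ := w₂) (t := t) hE0 he0 hfX heY hY0 hYX rfl hx1 ht
    h₁ h₄ hθ
  rw [← hβdef] at hβ
  rw [← hκdef, ← hγdef] at hup
  have hupper : |β / Y + κ * X / Y * ((x - s) * f ^ 2) +
      γ * X ^ 2 / Y * ((x - s) * f ^ 2) ^ 2| ≤ w ^ 4 / 64 := by
    have h1 : |β / Y| ≤ ε := by
      rw [abs_div, abs_of_pos hY0]
      exact (div_le_self (abs_nonneg _) hY1).trans hβ
    have h2 : |κ * X / Y * ((x - s) * f ^ 2)| ≤ |κ| * X / Y :=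
      abs_mul_le_of_abs_le_one (by
        rw [abs_div, abs_mul, abs_of_pos hX0, abs_of_pos hY0]) hx1
    have h3 : |γ * X ^ 2 / Y * ((x - s) * f ^ 2) ^ 2| ≤ |γ| * X ^ 2 / Y :=
      abs_mul_le_of_abs_le_one (by
        rw [abs_div, abs_mul, abs_of_pos (by positivity : 0 < X ^ 2), abs_of_pos hY0])
        (by rw [abs_pow]; exact pow_le_one₀ (abs_nonneg _) hx1)
    have h4 : |κ| * X / Y + |γ| * X ^ 2 / Y ≤ r := by
      rw [← add_div, div_le_iff₀ hY0]
      exact hup.le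
    have h7 := abs_add_three (β / Y) (κ * X / Y * ((x - s) * f ^ 2))
      (γ * X ^ 2 / Y * ((x - s) * f ^ 2) ^ 2)
    linarith
  refine false_of_return_of_stable hp hw hw1 hxK hret he hR hRR' hwR hc'w hwc' hηR hcc' hρ0 hα
    (fun t ht => (hbd t ht).1.trans (by linarith)) (fun t ht => (hbd t ht).2.1.trans (by linarith))
    ((hbd 0 (by simp)).2.2.1.trans (by linarith)) (fun t => rfl) ?_ ?_ ?_ hxstable
  · rw [zero_div, add_zero, hval]
    exact hxρ
  · rw [zero_div, add_zero, hval]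
    exact hupper
  · intro t ht
    rw [zero_div, add_zero]
    exact (hbd t ht).2.2.2.trans (by linarith)

set_option maxHeartbeats 1000000 in
open Finset in
open scoped Classical in
/-- The central contradiction: a point at which the sample branches regularly and along which the
sets of good points are mostly stable cannot exist. -/
theorem exists_return_bound {p : ℕ} (hp : 2 ≤ p) {w α Δ : ℝ} (hw : 0 < w) (hw1 : w ≤ 1)
    {L : ℕ} (hL : 1 ≤ L) (hα : α ≤ w ^ 4 / 128 / (16 * ((4 : ℝ) ^ L) ^ 3) / 4) (hΔ : 0 < Δ)
    {R : ℕ} (hR : 1 ≤ R) :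
    ∃ C, 1 ≤ C ∧ ∀ (S : Finset ℝ) (k₀ i B V R' : ℕ) (c c' : ℝ) (G : Finset ℕ)
      (Q : ℝ → ℕ → ℕ → Prop), (S : Set ℝ) ⊆ uniformlyBadlyApproximable p (w ^ 2) →
      G ⊆ range (2 * C * B) → 2 * C * B < 2 * #G →
      (∀ n ∈ G, R' * (p : ℝ) ^ (n + R') < 2 ^ k₀) → R + 2 * C + 1 ≤ R' → 4 / w ≤ R' →
      c + Δ ≤ c' → w ^ 2 / 4 < c' → c' ≤ w ^ 2 → 4 * p * C ≤ V → 2 * V + 2 ≤ i →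
      (∀ u ∈ S, ∀ j n, ¬ Q u j n → ∀ t : ℝ, |t| < 1 →
        LatGood p R c (2 ^ (k₀ + L * j)) n (u + t / (2 ^ (k₀ + L * j)) ^ 2) →
        ∃ t', |t' - t| ≤ α ∧
          LatGood p R' c' (2 ^ (k₀ + L * j)) n (u + t' / (2 ^ (k₀ + L * j)) ^ 2)) →
      ∀ s ∈ S, (∀ τ ≤ i + 1, 100 * #{j ∈ Ico (i + 1 - τ) (i + 1) |
        CellConcentrated S (k₀ + L * j) L s} ≤ τ) →
      (∀ n ∈ G, ∀ τ ≤ i + 1, 100 * #{j ∈ Ico (i + 1 - τ) (i + 1) | ∃ k,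
        #{u ∈ S | quadCell k u = quadCell k s} <
          8 * #{u ∈ {u ∈ S | Q u j n} | quadCell k u = quadCell k s}} ≤ τ) → False := by
  set b : ℝ := (4 : ℝ) ^ L with hbdef
  have hb4 : 4 ≤ b := by
    rw [hbdef]
    calc (4 : ℝ) = 4 ^ 1 := by norm_num
      _ ≤ 4 ^ L := pow_le_pow_right₀ (by norm_num) hL
  have hb0 : 0 < b := by linarith
  set r₀ := w ^ 4 / 128 with hr₀
  have hr₀0 : 0 < r₀ := by positivity
  have hw4 : w ^ 4 ≤ 1 := pow_le_one₀ hw.le hw1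
  set ρ := r₀ / (16 * b ^ 3) with hρ
  have hρ0 : 0 < ρ := by positivity
  obtain ⟨η, ε, W, hη0, hηρ, hηR, hηΔ, hε0, hεη, hε4, hW2, hWη, hεW⟩ :=
    exists_small_parameters R (by linarith : 2 ≤ b) hr₀0 hρ0 hΔ
  obtain ⟨C, hC1, hC⟩ := exists_isLatReturn hp (c := w ^ 2) (by positivity)
    (pow_le_one₀ hw.le hw1) R hε0
  refine ⟨C, hC1, ?_⟩
  intro S k₀ i B V R' c c' G Q hSK hG hGcard hGe hRR' hwR hcc' hwc' hc'w hCV hVi hstable s hs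
    hconc hrare
  have hp1 : (1 : ℝ) ≤ p := by exact_mod_cast (by omega : 1 ≤ p)
  have hR'1 : (1 : ℝ) ≤ R' := by exact_mod_cast (by omega : 1 ≤ R')
  have hGE : ∀ n ∈ G, (p : ℝ) ^ n ≤ 2 ^ (k₀ + L * i) := by
    intro n hn
    have h1 := hGe n hn
    have h2 : (p : ℝ) ^ n ≤ (p : ℝ) ^ (n + R') := pow_le_pow_right₀ hp1 (by omega)
    have h3 : (2 : ℝ) ^ k₀ ≤ 2 ^ (k₀ + L * i) := pow_le_pow_right₀ (by norm_num) (by omega)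
    have h4 : (0 : ℝ) < (p : ℝ) ^ n := by positivity
    nlinarith
  obtain ⟨n, hn, d, hd1, hdC, w₁, w₂, w₃, w₄, hret, h₁, hβ, hγ, h₄⟩ :=
    hC s (hSK hs) (2 ^ (k₀ + L * i)) B G hG hGcard hGE
  have hE0 : (0 : ℝ) < 2 ^ (k₀ + L * i) := by positivity
  have hlower := hret.lower_bound hp hE0 hR hd1 hε4 h₁ hβ h₄
  set E : ℝ := 2 ^ (k₀ + L * i) with hE
  set κ := w₁ - w₄ + 2 * s * w₃ with hκdef
  set γ := w₃ / E ^ 2 with hγdef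
  set β := E ^ 2 * (w₃ * s ^ 2 + (w₁ - w₄) * s - w₂) with hβdef
  have hκ : |κ| ≤ 2 * ε := by
    have h1 : κ = (w₁ + s * w₃ - 1) - (w₄ - s * w₃ - 1) := by rw [hκdef]; ring
    rw [h1]
    exact (abs_sub _ _).trans (by linarith)
  have hlo : |κ| * b ^ (2 * W) + |γ| * b ^ (2 * (2 * W)) < r₀ := by
    have h1 : b ^ (2 * W) ≤ b ^ (2 * (2 * W)) := pow_le_pow_right₀ (by linarith) (by omega)
    have h2 : (0 : ℝ) < b ^ (2 * W) := by positivity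
    have h3 : |κ| * b ^ (2 * W) ≤ 2 * ε * b ^ (2 * (2 * W)) :=
      mul_le_mul hκ h1 h2.le (by positivity)
    have h4 : |γ| * b ^ (2 * (2 * W)) ≤ ε * b ^ (2 * (2 * W)) := by gcongr
    linarith
  have hhi : r₀ ≤ |κ| * b ^ V + |γ| * b ^ (2 * V) := by
    have h1 : (p : ℝ) ^ (2 * d) ≤ b ^ V := by
      have h2 : (p : ℝ) ≤ b ^ p := by
        have h3 : (p : ℝ) < 2 ^ p := by exact_mod_cast p.lt_two_pow_self
        exact h3.le.trans (pow_le_pow_left₀ (by norm_num) (by linarith) _)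
      calc (p : ℝ) ^ (2 * d) ≤ (b ^ p) ^ (2 * d) := pow_le_pow_left₀ (by positivity) h2 _
        _ = b ^ (p * (2 * d)) := by rw [← pow_mul]
        _ ≤ b ^ V := pow_le_pow_right₀ (by linarith) (by nlinarith)
    have h2 : b ^ V ≤ b ^ (2 * V) := pow_le_pow_right₀ (by linarith) (by omega)
    have h3 : |γ| * b ^ V ≤ |γ| * b ^ (2 * V) := by gcongr
    have h4 : (1 : ℝ) ≤ (|κ| + |γ|) * b ^ V := by
      calc (1 : ℝ) = ((p : ℝ) ^ (2 * d))⁻¹ * (p : ℝ) ^ (2 * d) := by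
            rw [inv_mul_cancel₀]; positivity
        _ ≤ (|κ| + |γ|) * b ^ V := mul_le_mul hlower h1 (by positivity) (by positivity)
    linarith
  obtain ⟨σ, ι, hι1, hισ, hσV, hBC, hBD, hup, hdown, hγW⟩ := exists_good_scale
    (by linarith : 1 < b) hr₀0 (abs_nonneg κ) (abs_nonneg γ) hW2 hlo hhi
    (fun σ => CellConcentrated S (k₀ + L * (i - σ)) L s)
    (fun σ => ∃ k, #{u ∈ S | quadCell k u = quadCell k s} <
          8 * #{u ∈ {u ∈ S | Q u (i - σ) n} | quadCell k u = quadCell k s})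
    (fun τ hτ => (Nat.mul_le_mul_left _ (card_range_filter_sub_le
      (fun j => CellConcentrated S (k₀ + L * j) L s) (by omega))).trans (hconc τ (by omega)))
    (fun τ hτ => (Nat.mul_le_mul_left _ (card_range_filter_sub_le
      (fun j => ∃ k, #{u ∈ S | quadCell k u = quadCell k s} <
          8 * #{u ∈ {u ∈ S | Q u j n} | quadCell k u = quadCell k s}) (by omega))).trans
      (hrare n hn τ (by omega)))
  push Not at hBD
  obtain ⟨x₁, x₂, x₃, hx, hx₁₂, hx₂₃⟩ := exists_three_separated_of_not_cellConcentrated hBC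
    (fun u => Q u (i - ι) n) (hBD _)
  have hfX := two_pow_sq_eq k₀ L (by omega : σ ≤ i)
  have heY := two_pow_sq_eq k₀ L (by omega : ι ≤ i)
  have hf4 := two_pow_sq (k₀ + L * (i - σ))
  have hf0 : (0 : ℝ) < 2 ^ (k₀ + L * (i - σ)) := by positivity
  have he0 : (0 : ℝ) < 2 ^ (k₀ + L * (i - ι)) := by positivity
  rw [pow_add 4 _ L, ← hf4, ← hbdef] at hx₁₂ hx₂₃
  rw [← hbdef] at hfX heY
  set f : ℝ := 2 ^ (k₀ + L * (i - σ)) with hf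
  have hX2 : b ^ (2 * σ) = (b ^ σ) ^ 2 := by rw [mul_comm, pow_mul]
  rw [hX2] at hup hdown
  have hθ : |γ| * b ^ σ ≤ η / 4 :=
    le_of_mul_le_mul_right (hγW.trans hWη) (by positivity : 0 < b ^ W)
  have hek : (2 : ℝ) ^ k₀ ≤ 2 ^ (k₀ + L * (i - ι)) :=
    pow_le_pow_right₀ (by norm_num) (by omega)
  refine false_of_return_of_separated hp hw hw1 hret ((hGe n hn).trans_le hek) hR
    (by omega : R + d + 1 ≤ R') hwR hc'w hwc' hηR (by linarith : c + 7 * η * R ^ 2 ≤ c')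
    (by rw [hr₀]; ring) (by linarith : 1 ≤ b) (by rw [hρ]; field_simp) hρ0 hα hηρ hη0 hεη
    hE0 he0 hf0 hfX heY (one_le_pow₀ (by linarith)) (pow_le_pow_right₀ (by linarith) hισ) h₁ hβ h₄
    hup hdown hθ hx₁₂ hx₂₃ ?_
  intro x hxm
  obtain ⟨hxS, hxQ, hxc⟩ := hx x hxm
  refine ⟨hSK hxS, ?_, hstable x hxS (i - ι) n hxQ⟩
  have h1 := abs_sub_le_of_quadCell_eq hxc
  rw [← hf4, inv_eq_one_div, le_div_iff₀ (by positivity)] at h1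
  rwa [abs_mul, abs_of_pos (by positivity : 0 < f ^ 2)]

open Finset in
open scoped Classical in
/-- The cells of `[-1, 1)` of length `1 / A` containing a good point. -/
noncomputable def goodCells (p A R : ℕ) (c e : ℝ) (n : ℕ) (u : ℝ) : Finset ℤ :=
  {a ∈ Ico (-(A : ℤ)) A | ∃ t : ℝ, ⌊A * t⌋ = a ∧ LatGood p R c e n (u + t / e ^ 2)}

theorem goodCells_subset {p A R R' : ℕ} {c c' e : ℝ} {n : ℕ} {u : ℝ} (hR : R ≤ R')
    (hc : c ≤ c') : goodCells p A R' c' e n u ⊆ goodCells p A R c e n u := by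
  intro a ha
  simp only [goodCells, Finset.mem_filter] at ha ⊢
  obtain ⟨h1, t, h2, h3⟩ := ha
  exact ⟨h1, t, h2, h3.mono hR hc⟩

theorem card_goodCells_le (p A R : ℕ) (c e : ℝ) (n : ℕ) (u : ℝ) :
    (goodCells p A R c e n u).card ≤ 2 * A := by
  classical
  refine (Finset.card_filter_le _ _).trans ?_
  rw [Int.card_Ico]
  omega

theorem exists_latGood_of_goodCells_eq {p A R R' : ℕ} {c c' e : ℝ} {n : ℕ} {u : ℝ} (hA : 1 ≤ A)
    (h : goodCells p A R c e n u = goodCells p A R' c' e n u) {t : ℝ} (ht : |t| < 1)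
    (hgood : LatGood p R c e n (u + t / e ^ 2)) :
    ∃ t', |t' - t| ≤ 1 / A ∧ LatGood p R' c' e n (u + t' / e ^ 2) := by
  have hA0 : (0 : ℝ) < A := by exact_mod_cast hA
  rw [abs_lt] at ht
  have hmem : ⌊A * t⌋ ∈ goodCells p A R c e n u := by
    simp only [goodCells, Finset.mem_filter, Finset.mem_Ico]
    refine ⟨⟨?_, ?_⟩, t, rfl, hgood⟩
    · rw [Int.le_floor]; push_cast; nlinarith
    · rw [Int.floor_lt]; push_cast; nlinarith
  rw [h] at hmem
  simp only [goodCells, Finset.mem_filter] at hmem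
  obtain ⟨-, t', h1, h2⟩ := hmem
  refine ⟨t', ?_, h2⟩
  have h3 := (Int.abs_sub_lt_one_of_floor_eq_floor h1).le
  rwa [← mul_sub, abs_mul, abs_of_pos hA0, mul_comm, ← le_div_iff₀ hA0] at h3

open Finset in
open scoped Classical in
theorem card_filter_triple_product {α : Type*} (S : Finset α) (H N : ℕ) (Q : α → ℕ → ℕ → Prop) :
    ∑ j ∈ range H, ∑ n ∈ range N, #{s ∈ S | Q s j n} =
      #{x ∈ S ×ˢ range H ×ˢ range N | Q x.1 x.2.1 x.2.2} := by
  simp only [card_filter, sum_product]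
  rw [sum_comm (s := S)]
  exact sum_congr rfl fun j _ => sum_comm

open Finset in
open scoped Classical in
theorem dimH_uniformlyBadlyApproximable {p : ℕ} (hp : 2 ≤ p) {w : ℝ} (hw : 0 < w) (hw1 : w ≤ 1) :
    dimH (uniformlyBadlyApproximable p (w ^ 2)) = 0 := by
  by_contra hK
  obtain ⟨L, hL, hsample⟩ := exists_branching_sample hK
  have hρ : 0 < w ^ 4 / 128 / (16 * ((4 : ℝ) ^ L) ^ 3) / 4 := by positivity
  obtain ⟨A, hA⟩ := exists_nat_gt (1 / (w ^ 4 / 128 / (16 * ((4 : ℝ) ^ L) ^ 3) / 4))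
  have hA0 : (0 : ℝ) < A := (by positivity : (0 : ℝ) < _).trans hA
  have hA1 : 1 ≤ A := by exact_mod_cast hA0
  have hα : 1 / (A : ℝ) ≤ w ^ 4 / 128 / (16 * ((4 : ℝ) ^ L) ^ 3) / 4 :=
    (one_div_le hA0 hρ).2 hA.le
  obtain ⟨I, hI⟩ : ∃ I, I = 2 * A * 6400 := ⟨_, rfl⟩
  have hI1 : 1 ≤ I := by omega
  have hI0 : (0 : ℝ) < I := by exact_mod_cast hI1
  obtain ⟨Δ, hΔ⟩ : ∃ Δ : ℝ, Δ = w ^ 2 / (4 * I) := ⟨_, rfl⟩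
  have hΔ0 : 0 < Δ := by rw [hΔ]; positivity
  have hcore := fun R : ℕ => exists_return_bound hp hw hw1 hL hα hΔ0 (by omega : 1 ≤ R + 1)
  choose C hC1 hC using hcore
  obtain ⟨R₀, hR₀⟩ := exists_nat_gt (4 / w)
  obtain ⟨seq, hseq0, hseq⟩ : ∃ seq : ℕ → ℕ, seq 0 = R₀ ∧
      ∀ i, seq (i + 1) = seq i + 2 * C (seq i) + 1 :=
    ⟨fun n => Nat.rec R₀ (fun _ r => r + 2 * C r + 1) n, rfl, fun _ => rfl⟩
  have hseqmono : Monotone seq := monotone_nat_of_le_succ fun i => by rw [hseq]; omega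
  obtain ⟨N, hN⟩ : ∃ N, N = ∏ i ∈ range I, 2 * C (seq i) := ⟨_, rfl⟩
  have hN1 : 1 ≤ N := by
    rw [hN]
    exact Nat.one_le_iff_ne_zero.2 (prod_ne_zero_iff.2 fun i _ => by have := hC1 (seq i); omega)
  obtain ⟨J, hJ⟩ := pow_unbounded_of_one_lt
    (((seq I + 1 : ℕ) : ℝ) * (p : ℝ) ^ (N + (seq I + 1))) (by norm_num : (1 : ℝ) < 2)
  obtain ⟨V, hV⟩ : ∃ V, V = 4 * p * N := ⟨_, rfl⟩
  obtain ⟨k₀, hk₀, S, hSne, hSK, hS⟩ := hsample J (4 * (2 * V + 2)) (by omega)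
  obtain ⟨H, hH⟩ : ∃ H, H = 4 * (2 * V + 2) := ⟨_, rfl⟩
  rw [← hH] at hS
  obtain ⟨c, hc⟩ : ∃ c : ℕ → ℝ, ∀ i, c i = w ^ 2 / 2 + i * Δ := ⟨_, fun _ => rfl⟩
  obtain ⟨Φ, hΦ⟩ : ∃ Φ : ℕ → ℝ × ℕ × ℕ → Finset ℤ, ∀ i x, Φ i x =
      goodCells p A (seq i + 1) (c i) (2 ^ (k₀ + L * x.2.1)) x.2.2 x.1 := ⟨_, fun _ _ => rfl⟩
  obtain ⟨i, hi, hstab⟩ := exists_stable_index (S ×ˢ range H ×ˢ range N) Φ (by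
    intro i x
    rw [hΦ, hΦ]
    refine goodCells_subset (by have := hseq i; omega) ?_
    rw [hc, hc]
    push_cast
    linarith) (M := 2 * A) (fun x => by rw [hΦ]; exact card_goodCells_le _ _ _ _ _ _ _) hI1
  obtain ⟨Q, hQ⟩ : ∃ Q : ℝ → ℕ → ℕ → Prop, ∀ u j n, Q u j n ↔
      Φ i (u, j, n) ≠ Φ (i + 1) (u, j, n) := ⟨_, fun _ _ _ => Iff.rfl⟩
  have hP : 400 * ∑ s ∈ S, #{j ∈ range H | CellConcentrated S (k₀ + L * j) L s} ≤ #S * H := by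
    refine le_trans (le_of_eq ?_) hS
    simp only [card_filter, sum_product]
  have hQcard : 6400 * ∑ j ∈ range H, ∑ n ∈ range N, #{s ∈ S | Q s j n} ≤ #S * H * N := by
    rw [card_filter_triple_product]
    have h1 : #{x ∈ S ×ˢ range H ×ˢ range N | Q x.1 x.2.1 x.2.2} =
        #{x ∈ S ×ˢ range H ×ˢ range N | Φ i x ≠ Φ (i + 1) x} := by
      congr 1
      ext x
      simp only [mem_filter, hQ]
    rw [h1]
    rw [hI, card_product, card_product, card_range, card_range, mul_assoc (2 * A)] at hstab
    have h2 := Nat.le_of_mul_le_mul_left hstab (by omega)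
    refine le_trans (le_of_eq ?_) (h2.trans (le_of_eq (by ring)))
    congr!
  obtain ⟨s, hs, j, hjJ, hjH, hconc, hmany⟩ := exists_uniformly_sparse S hSne quadCell
    (fun k l x y hkl h => quadCell_eq_of_le hkl h) H N (2 * V + 2) (by omega) hN1 (by omega)
    (fun s j => CellConcentrated S (k₀ + L * j) L s) Q hP hQcard
  have hdvd : 2 * C (seq i) ∣ N := by
    rw [hN]
    exact dvd_prod_of_mem (fun i => 2 * C (seq i)) (mem_range.2 hi)
  obtain ⟨B, hB⟩ := hdvd
  have hCN : C (seq i) ≤ N := by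
    have := Nat.le_of_dvd hN1 ⟨B, hB⟩
    omega
  have hRI : seq (i + 1) + 1 ≤ seq I + 1 := by
    have := hseqmono (by omega : i + 1 ≤ I)
    omega
  have hp1 : (1 : ℝ) ≤ p := by exact_mod_cast (by omega : 1 ≤ p)
  have hiΔ : ((i + 1 : ℕ) : ℝ) * Δ ≤ w ^ 2 / 4 := by
    have h1 : ((i + 1 : ℕ) : ℝ) ≤ I := by exact_mod_cast hi
    calc ((i + 1 : ℕ) : ℝ) * Δ ≤ I * Δ := by gcongr
      _ = w ^ 2 / 4 := by rw [hΔ]; field_simp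
  have hw2 : 0 < w ^ 2 := by positivity
  refine hC (seq i) S k₀ j B V (seq (i + 1) + 1) (c i) (c (i + 1)) {n ∈ range N | ∀ τ ≤ j + 1,
      100 * #{l ∈ Ico (j + 1 - τ) (j + 1) | ∃ k, #{u ∈ S | quadCell k u = quadCell k s} <
        8 * #{u ∈ {u ∈ S | Q u l n} | quadCell k u = quadCell k s}} ≤ τ} Q hSK ?_ ?_ ?_
    (by rw [hseq]; omega) ?_ ?_ ?_ ?_ ?_ hjJ ?_ s hs hconc ?_
  · rw [← hB]
    exact filter_subset _ _
  · rw [← hB]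
    exact hmany
  · intro n hn
    have hnN : n < N := mem_range.1 (mem_filter.1 hn).1
    calc ((seq (i + 1) + 1 : ℕ) : ℝ) * (p : ℝ) ^ (n + (seq (i + 1) + 1))
        ≤ ((seq I + 1 : ℕ) : ℝ) * (p : ℝ) ^ (N + (seq I + 1)) :=
          mul_le_mul (by exact_mod_cast hRI) (pow_le_pow_right₀ hp1 (by omega)) (by positivity)
            (by positivity)
      _ < 2 ^ J := hJ
      _ ≤ 2 ^ k₀ := pow_le_pow_right₀ (by norm_num) hk₀
  · have h1 : R₀ ≤ seq (i + 1) := hseq0 ▸ hseqmono (Nat.zero_le _)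
    have h2 : (R₀ : ℝ) ≤ (seq (i + 1) + 1 : ℕ) := by exact_mod_cast h1.trans (Nat.le_succ _)
    linarith
  · rw [hc, hc]
    push_cast
    linarith
  · rw [hc]
    have : 0 ≤ ((i + 1 : ℕ) : ℝ) * Δ := by positivity
    linarith
  · rw [hc]
    linarith
  · rw [hV]
    exact Nat.mul_le_mul_left _ hCN
  · intro u _ l n hQn t ht hgood
    rw [hQ, not_not, hΦ, hΦ] at hQn
    exact exists_latGood_of_goodCells_eq hA1 hQn ht hgood
  · intro n hn
    exact (mem_filter.1 hn).2

theorem nearestIntDist_nonneg (z : ℝ) : 0 ≤ nearestIntDist z :=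
  Real.iInf_nonneg fun _ => abs_nonneg _

theorem nearestIntDist_le (z : ℝ) (k : ℤ) : nearestIntDist z ≤ |z - k| :=
  ciInf_le ⟨0, by rintro _ ⟨k, rfl⟩; exact abs_nonneg _⟩ k

theorem exists_pos_eventually_le_of_liminf_pos {f : ℕ → ℝ}
    (hf : 0 < Filter.liminf f Filter.atTop) :
    ∃ a, 0 < a ∧ ∃ N, 1 ≤ N ∧ ∀ n, N ≤ n → a ≤ f n := by
  rw [Filter.liminf_eq] at hf
  by_contra! h
  refine absurd hf (not_lt.2 (Real.sSup_nonpos fun a ha => ?_))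
  by_contra! h0
  obtain ⟨N, hN⟩ := Filter.eventually_atTop.1 ha
  obtain ⟨n, hn, hlt⟩ := h a h0 (max N 1) (le_max_right _ _)
  exact absurd (hN n ((le_max_left _ _).trans hn)) (not_le.2 hlt)

theorem padicNorm_natCast_mul_pow_le {p : ℕ} (hp : p.Prime) (a n b : ℕ) :
    padicNorm p ((a * p ^ n * b : ℕ) : ℚ) ≤ ((p : ℚ) ^ n)⁻¹ := by
  have := Fact.mk hp
  push_cast
  rw [padicNorm.mul, padicNorm.mul]
  have h1 : padicNorm p (a : ℚ) ≤ 1 := by exact_mod_cast padicNorm.of_nat a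
  have h2 : padicNorm p (b : ℚ) ≤ 1 := by exact_mod_cast padicNorm.of_nat b
  have h3 : padicNorm p ((p : ℚ) ^ n) = ((p : ℚ) ^ n)⁻¹ := by
    induction n with
    | zero => simp
    | succ k ih => rw [pow_succ, padicNorm.mul, ih, padicNorm.padicNorm_p_of_prime, mul_inv]
  rw [h3]
  have h4 : (0 : ℚ) ≤ ((p : ℚ) ^ n)⁻¹ := by positivity
  have h5 := padicNorm.nonneg (p := p) (a : ℚ)
  have h6 := padicNorm.nonneg (p := p) (b : ℚ)
  calc padicNorm p a * ((p : ℚ) ^ n)⁻¹ * padicNorm p b ≤ 1 * ((p : ℚ) ^ n)⁻¹ * 1 := by gcongr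
    _ = _ := by ring

theorem mem_uniformlyBadlyApproximable_of_le {p : ℕ} (hp : p.Prime) {u a : ℝ} {N : ℕ}
    (hN : 1 ≤ N) (h : ∀ q : ℕ, N ≤ q →
      a ≤ (q : ℝ) * (padicNorm p (q : ℚ) : ℝ) * nearestIntDist ((q : ℝ) * u)) :
    u ∈ uniformlyBadlyApproximable p (a / N ^ 2) := by
  intro n q m hq
  have hN0 : (0 : ℝ) < N := by exact_mod_cast hN
  have hp0 : (0 : ℝ) < p := by exact_mod_cast hp.pos
  have hP0 : (0 : ℝ) < (p : ℝ) ^ (2 * n) := by positivity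
  have hq1 : 1 ≤ q.natAbs := Int.natAbs_pos.2 hq
  have hge : N ≤ N * p ^ (2 * n) * q.natAbs := by
    have h1 : 1 ≤ p ^ (2 * n) := Nat.one_le_pow _ _ hp.pos
    calc N = N * 1 * 1 := by ring
      _ ≤ N * p ^ (2 * n) * q.natAbs := by gcongr
  have h1 := h _ hge
  have h2 : (padicNorm p ((N * p ^ (2 * n) * q.natAbs : ℕ) : ℚ) : ℝ) ≤
      ((p : ℝ) ^ (2 * n))⁻¹ := by
    have := (Rat.cast_le (K := ℝ)).2 (padicNorm_natCast_mul_pow_le hp N (2 * n) q.natAbs)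
    rwa [Rat.cast_inv, Rat.cast_pow, Rat.cast_natCast] at this
  have hqabs : ((q.natAbs : ℕ) : ℝ) = |(q : ℝ)| := by rw [Nat.cast_natAbs, Int.cast_abs]
  have h3 : nearestIntDist (((N * p ^ (2 * n) * q.natAbs : ℕ) : ℝ) * u) ≤
      N * |(p : ℝ) ^ (2 * n) * q * u - m| := by
    rcases le_total 0 q with h0 | h0
    · have hq' : |(q : ℝ)| = q := abs_of_nonneg (by exact_mod_cast h0)
      refine (nearestIntDist_le _ (N * m)).trans (le_of_eq ?_)
      push_cast [hqabs, hq']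
      rw [← abs_of_pos hN0, ← abs_mul, abs_of_pos hN0]
      congr 1
      ring
    · have hq' : |(q : ℝ)| = -q := abs_of_nonpos (by exact_mod_cast h0)
      refine (nearestIntDist_le _ (-(N * m))).trans (le_of_eq ?_)
      push_cast [hqabs, hq']
      rw [← abs_of_pos hN0, ← abs_mul, abs_of_pos hN0, ← abs_neg]
      congr 1
      ring
  rw [div_le_iff₀ (by positivity)]
  refine h1.trans ?_
  calc ((N * p ^ (2 * n) * q.natAbs : ℕ) : ℝ) *
        (padicNorm p ((N * p ^ (2 * n) * q.natAbs : ℕ) : ℚ) : ℝ) *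
        nearestIntDist (((N * p ^ (2 * n) * q.natAbs : ℕ) : ℝ) * u)
      ≤ ((N * p ^ (2 * n) * q.natAbs : ℕ) : ℝ) * ((p : ℝ) ^ (2 * n))⁻¹ *
        (N * |(p : ℝ) ^ (2 * n) * q * u - m|) := by
        gcongr
        exact nearestIntDist_nonneg _
    _ = |(q : ℝ)| * |(p : ℝ) ^ (2 * n) * q * u - m| * N ^ 2 := by
        push_cast [hqabs]
        field_simp

theorem uniformlyBadlyApproximable_mono {p : ℕ} {c c' : ℝ} (h : c ≤ c') :
    uniformlyBadlyApproximable p c' ⊆ uniformlyBadlyApproximable p c :=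
  fun _ hu n q m hq => h.trans (hu n q m hq)

/-- The set of real numbers `u` with `liminf_{q → ∞} q·|q|_p·⟨qu⟩ > 0` has Hausdorff
dimension zero. -/
theorem dimH_set_liminf_padic_pos_eq_zero (p : ℕ) (hp : p.Prime) :
    dimH {u : ℝ |
      0 < Filter.liminf
        (fun q : ℕ => (q : ℝ) * (padicNorm p (q : ℚ) : ℝ) * nearestIntDist ((q : ℝ) * u))
        Filter.atTop} = 0 := by
  have hsub : {u : ℝ | 0 < Filter.liminf
      (fun q : ℕ => (q : ℝ) * (padicNorm p (q : ℚ) : ℝ) * nearestIntDist ((q : ℝ) * u))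
      Filter.atTop} ⊆ ⋃ M : ℕ, uniformlyBadlyApproximable p ((1 / ((M : ℝ) + 1)) ^ 2) := by
    intro u hu
    obtain ⟨a, ha, N, hN, h⟩ := exists_pos_eventually_le_of_liminf_pos hu
    have hc : 0 < a / (N : ℝ) ^ 2 := by
      have : (0 : ℝ) < N := by exact_mod_cast hN
      positivity
    obtain ⟨M, hM⟩ := exists_nat_one_div_lt hc
    refine Set.mem_iUnion.2 ⟨M, uniformlyBadlyApproximable_mono ?_
      (mem_uniformlyBadlyApproximable_of_le hp hN h)⟩
    have h1 : 1 / ((M : ℝ) + 1) ≤ 1 := by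
      rw [div_le_one (by positivity)]
      linarith [(Nat.cast_nonneg M : (0 : ℝ) ≤ M)]
    have h2 : 0 ≤ 1 / ((M : ℝ) + 1) := by positivity
    nlinarith
  refine le_antisymm ((dimH_mono hsub).trans ?_) zero_le
  rw [dimH_iUnion]
  refine iSup_le fun M => le_of_eq (dimH_uniformlyBadlyApproximable hp.two_le (by positivity) ?_)
  rw [div_le_one (by positivity)]
  linarith [(Nat.cast_nonneg M : (0 : ℝ) ≤ M)]
end

section
/- Mahler's criterion for X: a subset L ⊆ X has compact closure in X if and only if there exists δ > 0 such that L ⊆ K_δ. -/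
open Matrix MatrixGroups

/-- Topology on the special linear group, induced from the space of matrices. -/
instance Matrix.SpecialLinearGroup.topologicalSpace {n : Type*} [DecidableEq n] [Fintype n]
    {R : Type*} [CommRing R] [TopologicalSpace R] :
    TopologicalSpace (Matrix.SpecialLinearGroup n R) :=
  TopologicalSpace.induced (fun A => (A : Matrix n n R)) inferInstance

/-- The ring `ℤ[1/p]`, realized as the localization of `ℤ` away from `p`. -/
abbrev ZInvP (p : ℕ) : Type := Localization.Away (p : ℤ)

/-- The canonical ring homomorphism `ℤ[1/p] → ℝ`. -/
noncomputable def zInvPToR (p : ℕ) [Fact p.Prime] : ZInvP p →+* ℝ :=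
  Localization.awayLift (Int.castRingHom ℝ) (p : ℤ) (by
    have hp : ((p : ℤ) : ℝ) ≠ 0 := by
      exact_mod_cast Int.natCast_ne_zero.mpr (Fact.out : p.Prime).ne_zero
    simpa [isUnit_iff_ne_zero] using hp)

/-- The canonical ring homomorphism `ℤ[1/p] → ℚ_p`. -/
noncomputable def zInvPToQp (p : ℕ) [Fact p.Prime] : ZInvP p →+* ℚ_[p] :=
  Localization.awayLift (Int.castRingHom ℚ_[p]) (p : ℤ) (by
    have hp : ((p : ℤ) : ℚ_[p]) ≠ 0 := by
      exact_mod_cast Int.natCast_ne_zero.mpr (Fact.out : p.Prime).ne_zero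
    simpa [isUnit_iff_ne_zero] using hp)

/-- The group `G = SL(2,ℝ) × SL(2,ℚ_p)`. -/
abbrev GP (p : ℕ) [Fact p.Prime] : Type := SL(2, ℝ) × SL(2, ℚ_[p])

/-- The diagonal embedding `ι : SL(2,ℤ[1/p]) → G`, `ι(A) = (A, A)`. -/
noncomputable def iotaP (p : ℕ) [Fact p.Prime] : SL(2, ZInvP p) →* GP p :=
  (Matrix.SpecialLinearGroup.map (zInvPToR p)).prod
    (Matrix.SpecialLinearGroup.map (zInvPToQp p))

/-- The lattice `Γ = ι(SL(2,ℤ[1/p]))` as a subgroup of `G`. -/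
noncomputable def GammaP (p : ℕ) [Fact p.Prime] : Subgroup (GP p) := (iotaP p).range

/-- The homogeneous space `X = G/Γ` (with the quotient topology). -/
abbrev XP (p : ℕ) [Fact p.Prime] : Type := GP p ⧸ GammaP p

/-- The lattice `Λ_x ⊆ ℝ² × ℚ_p²` attached to a point `x ∈ X`: for any representative
`(A,B)` of `x`, it is the set of pairs `(A·w, B·w)` with `w ∈ ℤ[1/p]²`. -/
def LambdaP (p : ℕ) [Fact p.Prime] (x : XP p) : Set ((Fin 2 → ℝ) × (Fin 2 → ℚ_[p])) :=
  {v | ∃ (g : GP p) (w : Fin 2 → ZInvP p), QuotientGroup.mk g = x ∧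
        v = ((g.1 : Matrix (Fin 2) (Fin 2) ℝ).mulVec (fun i => zInvPToR p (w i)),
             (g.2 : Matrix (Fin 2) (Fin 2) ℚ_[p]).mulVec (fun i => zInvPToQp p (w i)))}

/-- `K_δ = {x ∈ X : Λ_x ∩ B_δ(0) = {0}}` (the ball taken in the sup metric on `ℝ²×ℚ_p²`). -/
def KdeltaP (p : ℕ) [Fact p.Prime] (δ : ℝ) : Set (XP p) :=
  {x | LambdaP p x ∩ Metric.ball 0 δ = {0}}

instance Matrix.SpecialLinearGroup.isTopologicalGroup_induced {n : Type*} [DecidableEq n]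
    [Fintype n] {R : Type*} [CommRing R] [TopologicalSpace R] [IsTopologicalRing R] :
    IsTopologicalGroup (Matrix.SpecialLinearGroup n R) :=
  Matrix.SpecialLinearGroup.topologicalGroup

theorem Matrix.SpecialLinearGroup.isClosedEmbedding_coe {n : Type*} [DecidableEq n] [Fintype n]
    {R : Type*} [CommRing R] [TopologicalSpace R] [IsTopologicalRing R] [T1Space R] :
    Topology.IsClosedEmbedding
      (fun A : Matrix.SpecialLinearGroup n R => (A : Matrix n n R)) where
  eq_induced := rfl
  injective := Subtype.val_injective
  isClosed_range := by
    have : Set.range (fun A : Matrix.SpecialLinearGroup n R => (A : Matrix n n R)) =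
        Matrix.det ⁻¹' {1} := by
      ext A
      exact ⟨fun ⟨B, hB⟩ => hB ▸ B.2, fun h => ⟨⟨A, h⟩, rfl⟩⟩
    rw [this]
    exact isClosed_singleton.preimage (continuous_id.matrix_det)

theorem Matrix.SpecialLinearGroup.continuous_entry {n : Type*} [DecidableEq n] [Fintype n]
    {R : Type*} [CommRing R] [TopologicalSpace R] (i j : n) :
    Continuous (fun A : Matrix.SpecialLinearGroup n R => (A : Matrix n n R) i j) :=
  (continuous_id.matrix_elem i j).comp continuous_induced_dom

/-- In a proper normed field, the elements of `SL(n)` with bounded entries form a compact set. -/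
theorem Matrix.SpecialLinearGroup.isCompact_norm_entry_le {n : Type*} [DecidableEq n] [Fintype n]
    {K : Type*} [NormedField K] [ProperSpace K] (R : ℝ) :
    IsCompact {A : Matrix.SpecialLinearGroup n K | ∀ i j, ‖(A : Matrix n n K) i j‖ ≤ R} := by
  have hc : IsCompact (Set.univ.pi fun _ : n => Set.univ.pi fun _ : n =>
      Metric.closedBall (0 : K) R) :=
    isCompact_univ_pi fun _ => isCompact_univ_pi fun _ => isCompact_closedBall _ _
  have hset : {A : Matrix.SpecialLinearGroup n K | ∀ i j, ‖(A : Matrix n n K) i j‖ ≤ R} =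
      (fun A : Matrix.SpecialLinearGroup n K => (A : Matrix n n K)) ⁻¹'
        (Set.univ.pi fun _ : n => Set.univ.pi fun _ : n => Metric.closedBall (0 : K) R) := by
    ext A
    exact ⟨fun h i _ j _ => mem_closedBall_zero_iff.2 (h i j),
      fun h i j => mem_closedBall_zero_iff.1 (h i trivial j trivial)⟩
  rw [hset]
  exact isClosedEmbedding_coe.isCompact_preimage hc

/-- The upper unipotent matrix `!![1, x; 0, 1]`. -/
def upperUnipotent {R : Type*} [CommRing R] (x : R) : SL(2, R) :=
  ⟨!![1, x; 0, 1], by simp⟩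

theorem coe_upperUnipotent {R : Type*} [CommRing R] (x : R) :
    (upperUnipotent x : Matrix (Fin 2) (Fin 2) R) = !![1, x; 0, 1] := rfl

/-- The lower unipotent matrix `!![1, 0; x, 1]`. -/
def lowerUnipotent {R : Type*} [CommRing R] (x : R) : SL(2, R) :=
  ⟨!![1, 0; x, 1], by simp⟩

theorem coe_lowerUnipotent {R : Type*} [CommRing R] (x : R) :
    (lowerUnipotent x : Matrix (Fin 2) (Fin 2) R) = !![1, 0; x, 1] := rfl

/-- The Weyl element `!![0, -1; 1, 0]`. -/
def weylElement (R : Type*) [CommRing R] : SL(2, R) :=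
  ⟨!![0, -1; 1, 0], by simp⟩

theorem coe_weylElement (R : Type*) [CommRing R] :
    (weylElement R : Matrix (Fin 2) (Fin 2) R) = !![0, -1; 1, 0] := rfl

/-- A subgroup of `SL(2, K)` that contains all unipotent elementary matrices is everything. -/
theorem mem_of_unipotent_mem {K : Type*} [Field K] (H : Subgroup SL(2, K))
    (hU : ∀ x, upperUnipotent x ∈ H) (hL : ∀ x, lowerUnipotent x ∈ H) (B : SL(2, K)) :
    B ∈ H := by
  have key : ∀ B : SL(2, K), B 1 0 ≠ 0 → B ∈ H := by
    intro B hc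
    have hdet := B.det_coe
    rw [Matrix.det_fin_two] at hdet
    have : B = upperUnipotent ((B 0 0 - 1) / B 1 0) * lowerUnipotent (B 1 0) *
        upperUnipotent ((B 1 1 - 1) / B 1 0) := by
      ext i j
      fin_cases i <;> fin_cases j <;>
        simp [coe_upperUnipotent, coe_lowerUnipotent, Matrix.mul_apply, Fin.sum_univ_two, hc]
      · field_simp
        linear_combination -hdet
      · field_simp
        ring
    rw [this]
    exact H.mul_mem (H.mul_mem (hU _) (hL _)) (hU _)
  by_cases hc : B 1 0 = 0
  · have hdet := B.det_coe
    rw [Matrix.det_fin_two, hc] at hdet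
    have ha : B 0 0 ≠ 0 := by
      rintro h
      simp [h] at hdet
    have h := key (lowerUnipotent 1 * B) (by
      simpa [coe_lowerUnipotent, Matrix.mul_apply, Fin.sum_univ_two, hc] using ha)
    exact (H.mul_mem_cancel_left (hL 1)).1 h
  · exact key B hc

section

variable (p : ℕ) [Fact p.Prime]

theorem zInvPToR_injective : Function.Injective (zInvPToR p) := by
  rw [injective_iff_map_eq_zero]
  intro z hz
  obtain ⟨n, a, h⟩ := IsLocalization.Away.surj (p : ℤ) z
  have h' := congrArg (zInvPToR p) h
  have ha : a = 0 := by simpa [hz] using h'.symm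
  have hu : IsUnit (algebraMap ℤ (ZInvP p) (p : ℤ) ^ n) :=
    (IsLocalization.Away.algebraMap_isUnit (p : ℤ)).pow n
  rw [ha, map_zero] at h
  exact hu.mul_left_eq_zero.1 h

/-- An element of `ℤ[1/p]` that is a `p`-adic integer is an integer. -/
theorem exists_intCast_of_norm_le_one (z : ZInvP p) (hz : ‖zInvPToQp p z‖ ≤ 1) :
    ∃ m : ℤ, z = m := by
  obtain ⟨n, a, h⟩ := IsLocalization.Away.surj (p : ℤ) z
  have h' := congrArg (zInvPToQp p) h
  simp only [eq_intCast, map_mul, map_pow, map_intCast, map_natCast] at h'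
  have ha : ‖(a : ℚ_[p])‖ ≤ (p : ℝ) ^ (-n : ℤ) := by
    rw [← h', norm_mul, norm_pow, Padic.norm_p, _root_.zpow_neg, zpow_natCast, inv_pow]
    exact mul_le_of_le_one_left (by positivity) hz
  rw [Padic.norm_int_le_pow_iff_dvd] at ha
  obtain ⟨m, rfl⟩ := ha
  refine ⟨m, ?_⟩
  have hu : IsUnit (algebraMap ℤ (ZInvP p) (p : ℤ) ^ n) :=
    (IsLocalization.Away.algebraMap_isUnit (p : ℤ)).pow n
  apply hu.mul_right_cancel
  rw [h]
  simp [mul_comm]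

/-- `ℤ[1/p]` meets the open unit ball of `ℝ × ℚ_p` (closed in the second factor) only in `0`. -/
theorem eq_zero_of_norm_lt_one (z : ZInvP p) (hR : |zInvPToR p z| < 1)
    (hQ : ‖zInvPToQp p z‖ ≤ 1) : z = 0 := by
  obtain ⟨m, rfl⟩ := exists_intCast_of_norm_le_one p z hQ
  rw [map_intCast, ← Int.cast_abs] at hR
  have : |m| < 1 := by exact_mod_cast hR
  rw [Int.abs_lt_one_iff.1 this, Int.cast_zero]

theorem denseRange_zInvPToQp : DenseRange (zInvPToQp p) := by
  intro x
  rw [Metric.mem_closure_range_iff]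
  intro ε hε
  have hp1 : 1 < (p : ℝ) := by exact_mod_cast (Fact.out : p.Prime).one_lt
  obtain ⟨k, hk⟩ := pow_unbounded_of_one_lt ‖x‖ hp1
  have hpk : (0 : ℝ) < (p : ℝ) ^ k := by positivity
  have hxk : ‖(p : ℚ_[p]) ^ k * x‖ ≤ 1 := by
    rw [norm_mul, norm_pow, Padic.norm_p, inv_pow, inv_mul_le_iff₀ hpk, mul_one]
    exact hk.le
  obtain ⟨y, hy⟩ : ∃ y : ℤ_[p], (y : ℚ_[p]) = (p : ℚ_[p]) ^ k * x := ⟨⟨_, hxk⟩, rfl⟩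
  obtain ⟨m, hm⟩ := (PadicInt.denseRange_intCast (p := p)).exists_dist_lt
    y (show 0 < ε / (p : ℝ) ^ k by positivity)
  obtain ⟨u, hu⟩ := ((IsLocalization.Away.algebraMap_isUnit (S := ZInvP p) (p : ℤ)).pow k)
  have huQ : zInvPToQp p u = (p : ℚ_[p]) ^ k := by rw [hu]; simp
  have hinv : zInvPToQp p ↑u⁻¹ * (p : ℚ_[p]) ^ k = 1 := by
    rw [← huQ, ← map_mul, Units.inv_mul, map_one]
  refine ⟨m * ↑u⁻¹, ?_⟩
  have hm' : ‖(p : ℚ_[p]) ^ k * x - m‖ < ε / (p : ℝ) ^ k := by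
    rw [dist_eq_norm, PadicInt.norm_def] at hm
    simpa [hy] using hm
  have hx : x - zInvPToQp p (m * ↑u⁻¹) =
      zInvPToQp p ↑u⁻¹ * ((p : ℚ_[p]) ^ k * x - m) := by
    rw [map_mul, map_intCast]
    linear_combination (-x) * hinv
  have hn : ‖zInvPToQp p ↑u⁻¹‖ = (p : ℝ) ^ k := by
    have := congrArg norm hinv
    rw [norm_mul, norm_pow, Padic.norm_p, norm_one, inv_pow] at this
    field_simp at this
    exact this
  rw [dist_eq_norm, hx, norm_mul, hn]
  rwa [lt_div_iff₀' hpk] at hm'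

/-- `SL(2, ℤ[1/p])` is dense in `SL(2, ℚ_p)`. -/
theorem denseRange_specialLinearGroup_map :
    DenseRange (Matrix.SpecialLinearGroup.map (n := Fin 2) (zInvPToQp p)) := by
  have hval : ∀ f : ℚ_[p] → SL(2, ℚ_[p]),
      (Continuous fun x => (f x : Matrix (Fin 2) (Fin 2) ℚ_[p])) →
      (∀ z, f (zInvPToQp p z) ∈ (Matrix.SpecialLinearGroup.map (n := Fin 2) (zInvPToQp p)).range) →
      ∀ x, f x ∈
        (Matrix.SpecialLinearGroup.map (n := Fin 2) (zInvPToQp p)).range.topologicalClosure := by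
    intro f hf hmem x
    refine (denseRange_zInvPToQp p).induction_on (p := fun x => f x ∈
      (Matrix.SpecialLinearGroup.map (n := Fin 2) (zInvPToQp p)).range.topologicalClosure) x ?_ ?_
    · exact (Subgroup.isClosed_topologicalClosure _).preimage (continuous_induced_rng.2 hf)
    · exact fun z => Subgroup.le_topologicalClosure _ (hmem z)
  intro B
  refine mem_of_unipotent_mem
    (Matrix.SpecialLinearGroup.map (n := Fin 2) (zInvPToQp p)).range.topologicalClosure
    (hval _ ?_ ?_) (hval _ ?_ ?_) B
  · refine continuous_matrix fun i j => ?_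
    fin_cases i <;> fin_cases j <;> simp [coe_upperUnipotent] <;> fun_prop
  · refine fun z => ⟨upperUnipotent z, ?_⟩
    ext i j
    fin_cases i <;> fin_cases j <;> simp [coe_upperUnipotent]
  · refine continuous_matrix fun i j => ?_
    fin_cases i <;> fin_cases j <;> simp [coe_lowerUnipotent] <;> fun_prop
  · refine fun z => ⟨lowerUnipotent z, ?_⟩
    ext i j
    fin_cases i <;> fin_cases j <;> simp [coe_lowerUnipotent]

/-- `SL(2, ℚ_p) = SL(2, ℤ_p) · SL(2, ℤ[1/p])`. -/
theorem exists_mul_map_norm_le_one (B : SL(2, ℚ_[p])) :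
    ∃ γ : SL(2, ZInvP p), ∀ i j,
      ‖(B * Matrix.SpecialLinearGroup.map (zInvPToQp p) γ) i j‖ ≤ 1 := by
  have hopen : IsOpen {h : SL(2, ℚ_[p]) | ∀ i j, ‖(B * h) i j‖ ≤ 1} := by
    simp only [Set.ofPred_forall]
    refine isOpen_iInter_of_finite fun i => isOpen_iInter_of_finite fun j => ?_
    have hball : IsOpen (Metric.closedBall (0 : ℚ_[p]) 1) :=
      IsUltrametricDist.isOpen_closedBall _ one_ne_zero
    convert hball.preimage ((Matrix.SpecialLinearGroup.continuous_entry i j).comp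
      (continuous_const_mul B)) using 1
    ext h
    simp
  obtain ⟨γ, hγ⟩ := (denseRange_specialLinearGroup_map p).exists_mem_open hopen
    ⟨B⁻¹, by
      intro i j
      rw [mul_inv_cancel, Matrix.SpecialLinearGroup.coe_one, Matrix.one_apply]
      split_ifs <;> simp⟩
  exact ⟨γ, hγ⟩

/-- Membership in `K_δ`, read off from any representative. -/
theorem mk_mem_KdeltaP_iff {δ : ℝ} (hδ : 0 < δ) (g : GP p) :
    (QuotientGroup.mk g : XP p) ∈ KdeltaP p δ ↔
      ∀ w : Fin 2 → ZInvP p,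
        (∀ i, |(g.1 : Matrix (Fin 2) (Fin 2) ℝ).mulVec (fun i => zInvPToR p (w i)) i| < δ) →
        (∀ i, ‖(g.2 : Matrix (Fin 2) (Fin 2) ℚ_[p]).mulVec
          (fun i => zInvPToQp p (w i)) i‖ < δ) →
        w = 0 := by
  have hball : ∀ v : (Fin 2 → ℝ) × (Fin 2 → ℚ_[p]),
      v ∈ Metric.ball 0 δ ↔ (∀ i, |v.1 i| < δ) ∧ ∀ i, ‖v.2 i‖ < δ := by
    intro v
    simp [Prod.norm_def, pi_norm_lt_iff hδ]
  constructor
  · intro h w hR hQ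
    have hmem : (((g.1 : Matrix (Fin 2) (Fin 2) ℝ).mulVec (fun i => zInvPToR p (w i)),
        (g.2 : Matrix (Fin 2) (Fin 2) ℚ_[p]).mulVec (fun i => zInvPToQp p (w i))) :
        (Fin 2 → ℝ) × (Fin 2 → ℚ_[p])) ∈ LambdaP p (QuotientGroup.mk g) ∩ Metric.ball 0 δ :=
      ⟨⟨g, w, rfl, rfl⟩, (hball _).2 ⟨hR, hQ⟩⟩
    rw [show LambdaP p (QuotientGroup.mk g) ∩ Metric.ball 0 δ = {0} from h] at hmem
    have h1 : (g.1 : Matrix (Fin 2) (Fin 2) ℝ).mulVec (fun i => zInvPToR p (w i)) = 0 :=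
      congrArg Prod.fst (Set.mem_singleton_iff.1 hmem)
    have h2 := Matrix.eq_zero_of_mulVec_eq_zero
      (by rw [g.1.det_coe]; exact one_ne_zero) h1
    funext i
    exact (map_eq_zero_iff _ (zInvPToR_injective p)).1 (congrFun h2 i)
  · intro h
    refine Set.eq_singleton_iff_unique_mem.2
      ⟨⟨⟨g, 0, rfl, by ext <;> simp [Matrix.mulVec, dotProduct]⟩, by simpa using hδ⟩, ?_⟩
    rintro v ⟨⟨g', w, hg', rfl⟩, hv⟩
    obtain ⟨γ, hγ⟩ := QuotientGroup.eq.1 hg'.symm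
    obtain rfl : g * iotaP p γ = g' := by rw [hγ, mul_inv_cancel_left]
    have e1 : (fun i => zInvPToR p ((γ : Matrix (Fin 2) (Fin 2) (ZInvP p)).mulVec w i)) =
        ((iotaP p γ).1 : Matrix (Fin 2) (Fin 2) ℝ).mulVec (fun i => zInvPToR p (w i)) := by
      funext i
      exact RingHom.map_mulVec (zInvPToR p) _ w i
    have e2 : (fun i => zInvPToQp p ((γ : Matrix (Fin 2) (Fin 2) (ZInvP p)).mulVec w i)) =
        ((iotaP p γ).2 : Matrix (Fin 2) (Fin 2) ℚ_[p]).mulVec (fun i => zInvPToQp p (w i)) := by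
      funext i
      exact RingHom.map_mulVec (zInvPToQp p) _ w i
    simp only [Prod.fst_mul, Prod.snd_mul, Matrix.SpecialLinearGroup.coe_mul,
      ← Matrix.mulVec_mulVec, ← e1, ← e2] at hv ⊢
    obtain ⟨hR, hQ⟩ := (hball _).1 hv
    rw [h _ hR hQ]
    ext <;> simp [Matrix.mulVec, dotProduct]

theorem isClosed_KdeltaP {δ : ℝ} (hδ : 0 < δ) : IsClosed (KdeltaP p δ) := by
  rw [← (QuotientGroup.isQuotientMap_mk (GammaP p)).isClosed_preimage]
  have : (QuotientGroup.mk : GP p → XP p) ⁻¹' KdeltaP p δ = ⋂ (w : Fin 2 → ZInvP p) (_ : w ≠ 0),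
      ((⋂ i, {g : GP p | |(g.1 : Matrix (Fin 2) (Fin 2) ℝ).mulVec
          (fun i => zInvPToR p (w i)) i| < δ}) ∩
        ⋂ i, {g : GP p | ‖(g.2 : Matrix (Fin 2) (Fin 2) ℚ_[p]).mulVec
          (fun i => zInvPToQp p (w i)) i‖ < δ})ᶜ := by
    ext g
    rw [Set.mem_preimage, mk_mem_KdeltaP_iff p hδ]
    simp only [Set.mem_iInter, Set.mem_compl_iff, Set.mem_inter_iff, Set.mem_ofPred_eq]
    exact forall_congr' fun w => by tauto
  rw [this]
  refine isClosed_biInter fun w _ => (IsOpen.inter ?_ ?_).isClosed_compl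
  · refine isOpen_iInter_of_finite fun i => isOpen_lt (Continuous.abs ?_) continuous_const
    exact (continuous_induced_dom.comp continuous_fst).matrix_mulVec continuous_const |> (continuous_apply i).comp
  · refine isOpen_iInter_of_finite fun i => isOpen_lt (Continuous.norm ?_) continuous_const
    exact (continuous_induced_dom.comp continuous_snd).matrix_mulVec continuous_const |> (continuous_apply i).comp

/-- A vector is bounded by its image under a matrix of determinant one with bounded entries. -/
theorem norm_le_of_norm_mulVec_lt {K : Type*} [NormedField K] (A : SL(2, K)) {C δ : ℝ}
    (hA : ∀ i j, ‖A i j‖ < C) (v : Fin 2 → K)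
    (hv : ∀ i, ‖(A : Matrix (Fin 2) (Fin 2) K).mulVec v i‖ < δ) (i : Fin 2) :
    ‖v i‖ < 2 * C * δ := by
  have hdet := A.det_coe
  rw [Matrix.det_fin_two] at hdet
  set u := (A : Matrix (Fin 2) (Fin 2) K).mulVec v with hu
  have hC : 0 ≤ C := (norm_nonneg _).trans (hA 0 0).le
  have hprod : ∀ i j k, ‖A i j * u k‖ < C * δ := fun i j k => by
    rw [norm_mul]
    exact mul_lt_mul'' (hA i j) (hv k) (norm_nonneg _) (norm_nonneg _)
  have h0 : u 0 = A 0 0 * v 0 + A 0 1 * v 1 := by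
    rw [hu, Matrix.mulVec, dotProduct, Fin.sum_univ_two]
  have h1 : u 1 = A 1 0 * v 0 + A 1 1 * v 1 := by
    rw [hu, Matrix.mulVec, dotProduct, Fin.sum_univ_two]
  fin_cases i
  · have : v 0 = A 1 1 * u 0 - A 0 1 * u 1 := by
      rw [h0, h1]; linear_combination (-v 0) * hdet
    show ‖v 0‖ < _
    rw [this]
    linarith [norm_sub_le (A 1 1 * u 0) (A 0 1 * u 1), hprod 1 1 0, hprod 0 1 1]
  · have : v 1 = A 0 0 * u 1 - A 1 0 * u 0 := by
      rw [h0, h1]; linear_combination (-v 1) * hdet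
    show ‖v 1‖ < _
    rw [this]
    linarith [norm_sub_le (A 0 0 * u 1) (A 1 0 * u 0), hprod 0 0 1, hprod 1 0 0]

/-- The image of an element of `G` with entries bounded by `C` lies in `K_{1/(2C)}`. -/
theorem mk_mem_KdeltaP_of_norm_lt {C : ℝ} (hC : 0 < C) (g : GP p)
    (hR : ∀ i j, ‖g.1 i j‖ < C) (hQ : ∀ i j, ‖g.2 i j‖ < C) :
    (QuotientGroup.mk g : XP p) ∈ KdeltaP p (1 / (2 * C)) := by
  rw [mk_mem_KdeltaP_iff p (by positivity)]
  intro w hwR hwQ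
  have h : 2 * C * (1 / (2 * C)) = 1 := by field_simp
  funext i
  refine eq_zero_of_norm_lt_one p _ ?_ ?_
  · simpa only [h, Real.norm_eq_abs] using
      norm_le_of_norm_mulVec_lt g.1 hR (fun i => zInvPToR p (w i)) hwR i
  · simpa only [h] using
      (norm_le_of_norm_mulVec_lt g.2 hQ (fun i => zInvPToQp p (w i)) hwQ i).le

theorem exists_subset_KdeltaP_of_isCompact {M : Set (XP p)} (hM : IsCompact M) :
    ∃ δ : ℝ, 0 < δ ∧ M ⊆ KdeltaP p δ := by
  let V : ℕ → Set (GP p) := fun n =>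
    {g | (∀ i j, ‖g.1 i j‖ < n + 1) ∧ ∀ i j, ‖g.2 i j‖ < n + 1}
  have hV : ∀ n, IsOpen (V n) := by
    intro n
    simp only [V, Set.ofPred_and, Set.ofPred_forall]
    refine IsOpen.inter ?_ ?_
    · exact isOpen_iInter_of_finite fun i => isOpen_iInter_of_finite fun j => isOpen_lt
        ((Matrix.SpecialLinearGroup.continuous_entry i j).comp continuous_fst).norm
        continuous_const
    · exact isOpen_iInter_of_finite fun i => isOpen_iInter_of_finite fun j => isOpen_lt
        ((Matrix.SpecialLinearGroup.continuous_entry i j).comp continuous_snd).norm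
        continuous_const
  have hmono : Monotone V := by
    intro m n hmn g hg
    have : (m : ℝ) + 1 ≤ n + 1 := by exact_mod_cast Nat.succ_le_succ hmn
    exact ⟨fun i j => (hg.1 i j).trans_le this, fun i j => (hg.2 i j).trans_le this⟩
  obtain ⟨n, hn⟩ := hM.elim_directed_cover
    (fun n => (QuotientGroup.mk : GP p → XP p) '' V n)
    (fun n => QuotientGroup.isOpenMap_coe _ (hV n))
    (by
      intro x _
      induction x using QuotientGroup.induction_on with
      | H g =>
        obtain ⟨n, hn⟩ := exists_nat_gt
          (∑ i, ∑ j, ‖g.1 i j‖ + ∑ i, ∑ j, ‖g.2 i j‖)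
        simp only [Fin.sum_univ_two] at hn
        refine Set.mem_iUnion.2 ⟨n, g, ?_, rfl⟩
        simp only [V, Set.mem_ofPred_eq, Fin.forall_fin_two]
        refine ⟨⟨⟨?_, ?_⟩, ?_, ?_⟩, ⟨?_, ?_⟩, ?_, ?_⟩ <;>
          linarith [norm_nonneg (g.1 0 0), norm_nonneg (g.1 0 1), norm_nonneg (g.1 1 0),
            norm_nonneg (g.1 1 1), norm_nonneg (g.2 0 0), norm_nonneg (g.2 0 1),
            norm_nonneg (g.2 1 0), norm_nonneg (g.2 1 1)])
    (Monotone.directed_le fun m n hmn => Set.image_mono (hmono hmn))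
  refine ⟨1 / (2 * (n + 1)), by positivity, fun x hx => ?_⟩
  obtain ⟨g, hg, rfl⟩ := hn hx
  exact mk_mem_KdeltaP_of_norm_lt p (by positivity) g hg.1 hg.2

/-- The square of the Euclidean norm of the `j`-th column of a real matrix. -/
def colNormSq (A : SL(2, ℝ)) (j : Fin 2) : ℝ := A 0 j ^ 2 + A 1 j ^ 2

/-- If `A` is nearly reduced, then its columns have bounded product of lengths. -/
theorem colNormSq_mul_le (A : SL(2, ℝ)) (h : colNormSq A 0 ≤ 2 * colNormSq A 1)
    (hdot : |A 0 0 * A 0 1 + A 1 0 * A 1 1| ≤ colNormSq A 0 / 2) :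
    colNormSq A 0 * colNormSq A 1 ≤ 2 := by
  have hdet := A.det_coe
  rw [Matrix.det_fin_two] at hdet
  have h0 : 0 ≤ colNormSq A 0 := by unfold colNormSq; positivity
  have hlag : colNormSq A 0 * colNormSq A 1 =
      1 + (A 0 0 * A 0 1 + A 1 0 * A 1 1) ^ 2 := by
    unfold colNormSq
    linear_combination (A 0 0 * A 1 1 - A 0 1 * A 1 0 + 1) * hdet
  have hsq : (A 0 0 * A 0 1 + A 1 0 * A 1 1) ^ 2 ≤ (colNormSq A 0 / 2) ^ 2 :=
    sq_le_sq' (abs_le.1 hdot).1 (abs_le.1 hdot).2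
  nlinarith [mul_le_mul_of_nonneg_left h h0]

theorem iotaP_fst_apply (γ : SL(2, ZInvP p)) (i j : Fin 2) :
    (iotaP p γ).1 i j = zInvPToR p (γ i j) := rfl

theorem iotaP_snd_apply (γ : SL(2, ZInvP p)) (i j : Fin 2) :
    (iotaP p γ).2 i j = zInvPToQp p (γ i j) := rfl

theorem mk_mul_iotaP (g : GP p) (γ : SL(2, ZInvP p)) :
    (QuotientGroup.mk (g * iotaP p γ) : XP p) = QuotientGroup.mk g :=
  QuotientGroup.mk_mul_of_mem g ⟨γ, rfl⟩

/-- For a representative with `p`-adically integral second component of a point of `K_δ`,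
the columns of the real component are not too short. -/
theorem le_colNormSq {δ : ℝ} (hδ : 0 < δ) {k : ℕ} (hk : ((p : ℝ) ^ k)⁻¹ < δ) (g : GP p)
    (hg : (QuotientGroup.mk g : XP p) ∈ KdeltaP p δ) (hQ : ∀ i j, ‖g.2 i j‖ ≤ 1) (j : Fin 2) :
    (δ / (p : ℝ) ^ k) ^ 2 ≤ colNormSq g.1 j := by
  have hp0 : (0 : ℝ) < (p : ℝ) ^ k := by
    have : 0 < p := (Fact.out : p.Prime).pos
    positivity
  by_contra! hlt
  rw [mk_mem_KdeltaP_iff p hδ] at hg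
  have hent : ∀ i, |g.1 i j| < δ / (p : ℝ) ^ k := by
    intro i
    refine abs_lt_of_sq_lt_sq (lt_of_le_of_lt ?_ hlt) (by positivity)
    unfold colNormSq
    fin_cases i
    · exact le_add_of_nonneg_right (sq_nonneg _)
    · exact le_add_of_nonneg_left (sq_nonneg _)
  have hR : (fun i => zInvPToR p ((Pi.single j ((p : ZInvP p) ^ k) : Fin 2 → ZInvP p) i)) =
      Pi.single j ((p : ℝ) ^ k) := by
    funext i
    exact (Pi.apply_single (fun _ => zInvPToR p) (fun _ => map_zero _) j _ i).trans (by simp)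
  have hQ' : (fun i => zInvPToQp p ((Pi.single j ((p : ZInvP p) ^ k) : Fin 2 → ZInvP p) i)) =
      Pi.single j ((p : ℚ_[p]) ^ k) := by
    funext i
    exact (Pi.apply_single (fun _ => zInvPToQp p) (fun _ => map_zero _) j _ i).trans (by simp)
  have hw := hg (Pi.single j ((p : ZInvP p) ^ k)) (fun i => by
      rw [hR, Matrix.mulVec_single]
      simpa [abs_mul, lt_div_iff₀ hp0] using hent i)
    (fun i => by
      rw [hQ', Matrix.mulVec_single]
      have : ‖g.2 i j‖ * ((p : ℝ) ^ k)⁻¹ < δ :=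
        (mul_le_of_le_one_left (by positivity) (hQ i j)).trans_lt hk
      simpa using this)
  have hj := congrArg (zInvPToR p) (congrFun hw j)
  simp at hj
  exact absurd hj.1 (Fact.out : p.Prime).ne_zero

/-- Every point of `K_δ` has a representative with bounded entries. -/
theorem exists_rep_norm_le {δ : ℝ} (hδ : 0 < δ) :
    ∃ R : ℝ, ∀ x ∈ KdeltaP p δ, ∃ g : GP p, QuotientGroup.mk g = x ∧
      (∀ i j, ‖g.1 i j‖ ≤ R) ∧ ∀ i j, ‖g.2 i j‖ ≤ 1 := by
  have hp1 : 1 < (p : ℝ) := by exact_mod_cast (Fact.out : p.Prime).one_lt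
  obtain ⟨k, hk⟩ := pow_unbounded_of_one_lt δ⁻¹ hp1
  have hk : ((p : ℝ) ^ k)⁻¹ < δ := inv_lt_of_inv_lt₀ hδ hk
  set ε := (δ / (p : ℝ) ^ k) ^ 2
  have hε0 : 0 < ε := by positivity
  refine ⟨√(2 / ε), fun x hx => ?_⟩
  let T : Set (GP p) := {g | QuotientGroup.mk g = x ∧ ∀ i j, ‖g.2 i j‖ ≤ 1}
  have hcol : ∀ g ∈ T, ∀ j, ε ≤ colNormSq g.1 j := fun g hg j =>
    le_colNormSq p hδ hk g (hg.1 ▸ hx) hg.2 j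
  have hT : T.Nonempty := by
    obtain ⟨g, rfl⟩ := QuotientGroup.mk_surjective x
    obtain ⟨γ, hγ⟩ := exists_mul_map_norm_le_one p g.2
    exact ⟨g * iotaP p γ, mk_mul_iotaP p g γ, hγ⟩
  have hTmul : ∀ g ∈ T, ∀ γ : SL(2, ZInvP p), (∀ i j, ‖(iotaP p γ).2 i j‖ ≤ 1) →
      g * iotaP p γ ∈ T := by
    intro g hg γ hγ
    refine ⟨(mk_mul_iotaP p g γ).trans hg.1, fun i j => ?_⟩
    rw [Prod.snd_mul, Matrix.SpecialLinearGroup.coe_mul, Matrix.mul_apply]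
    refine IsUltrametricDist.norm_sum_le_of_forall_le_of_nonneg zero_le_one fun l _ => ?_
    rw [norm_mul]
    exact mul_le_one₀ (hg.2 i l) (norm_nonneg _) (hγ l j)
  -- choose a representative whose first column is within a factor `2` of the shortest possible
  have hne : ((fun g : GP p => colNormSq g.1 0) '' T).Nonempty := hT.image _
  have hbdd : BddBelow ((fun g : GP p => colNormSq g.1 0) '' T) :=
    ⟨ε, by rintro _ ⟨g, hg, rfl⟩; exact hcol g hg 0⟩
  have hinf : ε ≤ sInf ((fun g : GP p => colNormSq g.1 0) '' T) :=
    le_csInf hne (by rintro _ ⟨g, hg, rfl⟩; exact hcol g hg 0)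
  obtain ⟨_, ⟨g, hg, rfl⟩, hgmin⟩ := exists_lt_of_csInf_lt hne
    (show sInf _ < 2 * sInf ((fun g : GP p => colNormSq g.1 0) '' T) by linarith)
  have hmin : ∀ h ∈ T, colNormSq g.1 0 ≤ 2 * colNormSq h.1 0 := fun h hh => by
    linarith [csInf_le hbdd ⟨h, hh, rfl⟩]
  -- shear to make the second column nearly orthogonal to the first
  let t : ℝ := (g.1 0 0 * g.1 0 1 + g.1 1 0 * g.1 1 1) / colNormSq g.1 0
  let γ : SL(2, ZInvP p) := upperUnipotent ((-round t : ℤ) : ZInvP p)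
  have hγ : ∀ i j, ‖(iotaP p γ).2 i j‖ ≤ 1 := by
    intro i j
    have := Padic.norm_int_le_one (p := p) (round t)
    fin_cases i <;> fin_cases j <;> simp [iotaP_snd_apply, γ, coe_upperUnipotent, this]
  have hhT := hTmul g hg γ hγ
  set h := g * iotaP p γ with hh
  have h00 : h.1 0 0 = g.1 0 0 := by
    simp [hh, iotaP_fst_apply, γ, coe_upperUnipotent, Matrix.mul_apply, Fin.sum_univ_two]
  have h10 : h.1 1 0 = g.1 1 0 := by
    simp [hh, iotaP_fst_apply, γ, coe_upperUnipotent, Matrix.mul_apply, Fin.sum_univ_two]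
  have h01 : h.1 0 1 = g.1 0 1 - round t * g.1 0 0 := by
    simp [hh, iotaP_fst_apply, γ, coe_upperUnipotent, Matrix.mul_apply, Fin.sum_univ_two]; ring
  have h11 : h.1 1 1 = g.1 1 1 - round t * g.1 1 0 := by
    simp [hh, iotaP_fst_apply, γ, coe_upperUnipotent, Matrix.mul_apply, Fin.sum_univ_two]; ring
  have hcol0 : colNormSq h.1 0 = colNormSq g.1 0 := by simp only [colNormSq, h00, h10]
  have hg0 : 0 < colNormSq g.1 0 := hε0.trans_le (hcol g hg 0)
  have hdot : |h.1 0 0 * h.1 0 1 + h.1 1 0 * h.1 1 1| ≤ colNormSq h.1 0 / 2 := by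
    have ht : t * colNormSq g.1 0 = g.1 0 0 * g.1 0 1 + g.1 1 0 * g.1 1 1 :=
      div_mul_cancel₀ _ hg0.ne'
    have : h.1 0 0 * h.1 0 1 + h.1 1 0 * h.1 1 1 = (t - round t) * colNormSq g.1 0 := by
      rw [h00, h10, h01, h11, sub_mul, ht]
      unfold colNormSq
      ring
    rw [this, hcol0, abs_mul, abs_of_pos hg0]
    nlinarith [abs_sub_round t]
  have hswap : colNormSq h.1 0 ≤ 2 * colNormSq h.1 1 := by
    have hmem := hTmul h hhT (weylElement _) (by
      intro i j
      fin_cases i <;> fin_cases j <;> simp [iotaP_snd_apply, coe_weylElement])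
    have := hmin _ hmem
    rw [hcol0]
    convert this using 2
    simp [colNormSq, iotaP_fst_apply, coe_weylElement, Matrix.mul_apply, Fin.sum_univ_two]
  have hprod := colNormSq_mul_le h.1 hswap hdot
  have hc0 := hcol h hhT 0
  have hc1 := hcol h hhT 1
  have hle : ∀ j, colNormSq h.1 j ≤ 2 / ε := by
    intro j
    rw [le_div_iff₀ hε0]
    fin_cases j
    · show colNormSq h.1 0 * ε ≤ 2
      nlinarith
    · show colNormSq h.1 1 * ε ≤ 2
      nlinarith
  refine ⟨h, hhT.1, fun i j => Real.abs_le_sqrt (le_trans ?_ (hle j)), hhT.2⟩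
  unfold colNormSq
  fin_cases i
  · exact le_add_of_nonneg_right (sq_nonneg _)
  · exact le_add_of_nonneg_left (sq_nonneg _)

theorem isCompact_KdeltaP {δ : ℝ} (hδ : 0 < δ) : IsCompact (KdeltaP p δ) := by
  obtain ⟨R, hR⟩ := exists_rep_norm_le p hδ
  have hc := ((Matrix.SpecialLinearGroup.isCompact_norm_entry_le (n := Fin 2) (K := ℝ) R).prod
    (Matrix.SpecialLinearGroup.isCompact_norm_entry_le (n := Fin 2) (K := ℚ_[p]) 1)).image
    (QuotientGroup.continuous_mk (N := GammaP p))
  refine hc.of_isClosed_subset (isClosed_KdeltaP p hδ) fun x hx => ?_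
  obtain ⟨g, hg, hg1, hg2⟩ := hR x hx
  exact ⟨g, ⟨hg1, hg2⟩, hg⟩

end

/-- Mahler's criterion for `X`: a subset `L ⊆ X` has compact closure if and only if
`L ⊆ K_δ` for some `δ > 0`. -/
theorem mahler_criterion (p : ℕ) [Fact p.Prime] (L : Set (XP p)) :
    IsCompact (closure L) ↔ ∃ δ : ℝ, 0 < δ ∧ L ⊆ KdeltaP p δ := by
  constructor
  · intro h
    obtain ⟨δ, hδ, hL⟩ := exists_subset_KdeltaP_of_isCompact p h
    exact ⟨δ, hδ, subset_closure.trans hL⟩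
  · rintro ⟨δ, hδ, hL⟩
    exact (isCompact_KdeltaP p hδ).of_isClosed_subset isClosed_closure
      (closure_minimal hL (isClosed_KdeltaP p hδ))
end
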